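/- arXiv:2409.05952 — 3 statements merged into one kernel-verified Lean document; each statement's English description precedes it below -/
import Mathlib

section
/- Let P ∈ ℤ[x] be an admissible irreducible quadratic polynomial with P(n) ≥ 1 for all positive integers n, and let κ_P > 0 be the density of squarefree values of P (so that #{n ≤ N : P(n) squarefree} = κ_P·N + O_P(N^{3/4})). Then for every ε > 0, #{(n₁,n₂,n₃,n₄) ∈ [1,N]⁴ : each P(n_i) is squarefree and P(n₁)P(n₂)P(n₃)P(n₄) is a perfect square} = 3κ_P²·N² + O_{P,ε}(N^{7/4+ε}), as N → ∞. -/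
/- divisor bound -/
theorem tau_bound (η : ℝ) (hη : 0 < η) : ∃ C : ℝ, 1 ≤ C ∧ ∀ n : ℕ, Squarefree n →
    (n.divisors.card : ℝ) ≤ C * (n : ℝ) ^ η := by
  obtain ⟨M, hM⟩ := exists_nat_ge ((2:ℝ) ^ (1/η))
  refine ⟨2 ^ M, one_le_pow₀ (by norm_num), fun n hn => ?_⟩
  have hcard : n.divisors.card = 2 ^ n.primeFactors.card := by
    rw [← ArithmeticFunction.sigma_zero_apply]
    have h1 := (ArithmeticFunction.isMultiplicative_sigma (k := 0)).map_prod_of_subset_primeFactors n n.primeFactors subset_rfl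
    rw [Nat.prod_primeFactors_of_squarefree hn] at h1
    rw [h1]
    rw [Finset.prod_congr rfl (g := fun _ => 2)]
    · simp
    · intro p hp
      have := Nat.prime_of_mem_primeFactors hp
      simp [ArithmeticFunction.sigma_zero_apply, this.divisors, this.one_lt.ne]
  have hn2 : (n:ℝ) ^ η = ∏ p ∈ n.primeFactors, (p:ℝ) ^ η := by
    conv_lhs => rw [← Nat.prod_primeFactors_of_squarefree hn]
    push_cast
    rw [Real.finsetProd_rpow]
    intro i _; positivity
  rw [hcard, hn2]
  push_cast
  have key : (2:ℝ) ^ n.primeFactors.card = ∏ p ∈ n.primeFactors, (2:ℝ) := by simp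
  rw [key]
  rw [← Finset.prod_filter_mul_prod_filter_not n.primeFactors (fun p => p < M)]
  rw [← Finset.prod_filter_mul_prod_filter_not n.primeFactors (fun p => p < M) (f := fun p => (p:ℝ)^η)]
  have e1 : ∏ p ∈ n.primeFactors with p < M, (2:ℝ) ≤ 2 ^ M := by
    rw [Finset.prod_const]
    apply pow_le_pow_right₀ (by norm_num)
    calc _ ≤ (Finset.range M).card := Finset.card_le_card (by intro p; simp)
      _ = M := by simp
  have e2 : (1:ℝ) ≤ ∏ p ∈ n.primeFactors with p < M, (p:ℝ)^η := by
    calc (1:ℝ) = ∏ p ∈ n.primeFactors with p < M, (1:ℝ) := by simp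
      _ ≤ _ := by
        apply Finset.prod_le_prod
        · intros; norm_num
        · intro p hp
          simp only [Finset.mem_filter] at hp
          have := (Nat.prime_of_mem_primeFactors hp.1).one_lt.le
          exact Real.one_le_rpow (by exact_mod_cast this) hη.le
  have e3 : ∏ p ∈ n.primeFactors with ¬ p < M, (2:ℝ) ≤ ∏ p ∈ n.primeFactors with ¬ p < M, (p:ℝ)^η := by
    apply Finset.prod_le_prod
    · intros; norm_num
    · intro p hp
      simp only [Finset.mem_filter, not_lt] at hp
      have : (2:ℝ) ^ (1/η) ≤ p := hM.trans (by exact_mod_cast hp.2)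
      calc (2:ℝ) = ((2:ℝ) ^ (1/η)) ^ η := by
            rw [← Real.rpow_mul (by norm_num)]; field_simp; simp
        _ ≤ _ := Real.rpow_le_rpow (by positivity) this hη.le
  have e4 : (0:ℝ) ≤ ∏ p ∈ n.primeFactors with ¬ p < M, (p:ℝ)^η := by positivity
  have e5 : (0:ℝ) ≤ ∏ p ∈ n.primeFactors with p < M, (p:ℝ)^η := by positivity
  calc _ ≤ (2:ℝ) ^ M * ∏ p ∈ n.primeFactors with ¬ p < M, (p:ℝ)^η := by gcongr
    _ ≤ (2:ℝ) ^ M * ((∏ p ∈ n.primeFactors with p < M, (p:ℝ)^η) * ∏ p ∈ n.primeFactors with ¬ p < M, (p:ℝ)^η) := by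
      gcongr
      nlinarith
    
/- roots mod d -/
theorem root_count (a : ℕ) (ha : 0 < a) (b c : ℤ) (f : ℕ → ℕ)
    (hf : ∀ n, 1 ≤ n → (f n : ℤ) = a * n^2 + b * n + c) (d : ℕ) (hd : Squarefree d) (N : ℕ) :
    ((Finset.Icc 1 N).filter (fun n => d ∣ f n)).card ≤ d.divisors.card * (a * N / d + 1) := by
  classical
  have hd0 : d ≠ 0 := hd.ne_zero
  set S := (Finset.Icc 1 N).filter (fun n => d ∣ f n) with hS
  rcases S.eq_empty_or_nonempty with h | ⟨m, hm⟩
  · rw [h]; simp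
  rw [mul_comm]
  simp only [hS, Finset.mem_filter, Finset.mem_Icc] at hm
  have hm2 : (d:ℤ) ∣ a * m^2 + b * m + c := by rw [← hf m hm.1.1]; exact_mod_cast hm.2
  apply Finset.card_le_mul_card_image_of_maps_to (f := fun n : ℕ => Int.gcd d ((n:ℤ) - m))
  · intro n _
    simp only [Nat.mem_divisors]
    exact ⟨by exact_mod_cast Int.gcd_dvd_left (d:ℤ) ((n:ℤ)-m), hd0⟩
  · intro d1 hd1
    obtain ⟨⟨d2, rfl⟩, -⟩ := Nat.mem_divisors.1 hd1
    have hcop : Nat.Coprime d1 d2 := Nat.coprime_of_squarefree_mul hd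
    calc _ ≤ (Finset.range (a * N / (d1*d2) + 1)).card := by
          apply Finset.card_le_card_of_injOn (fun n => a * n / (d1 * d2))
          · intro n hn
            simp only [hS, Finset.coe_filter, Finset.mem_filter, Finset.mem_Icc, Set.mem_ofPred_eq] at hn
            simp only [Finset.coe_range, Set.mem_Iio]
            refine Nat.lt_succ_of_le (Nat.div_le_div_right ?_)
            exact Nat.mul_le_mul_left _ hn.1.1.2
          · have hh : ∀ n, 1 ≤ n → d1 * d2 ∣ f n → Int.gcd ((d1*d2:ℕ):ℤ) ((n:ℤ)-m) = d1 →
              (d1:ℤ) ∣ (n:ℤ) - m ∧ (d2:ℤ) ∣ a * (n + m) + b := by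
              intro n h1 h2 h3
              have h4 : (d1:ℤ) ∣ (n:ℤ) - m := by
                rw [← h3]; exact Int.gcd_dvd_right _ _
              refine ⟨h4, ?_⟩
              have h5 : ((d1*d2:ℕ):ℤ) ∣ a * n^2 + b * n + c := by
                rw [← hf n h1]; exact_mod_cast h2
              have h6 : ((d1*d2:ℕ):ℤ) ∣ ((n:ℤ) - m) * (a * (n + m) + b) := by
                have := dvd_sub h5 hm2
                have e : ((n:ℤ) - m) * (a * (n + m) + b) = (a * n^2 + b * n + c) - (a * m^2 + b * m + c) := by ring
                rw [e]; exact this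
              obtain ⟨e, he⟩ := h4
              have hd1' : (d1:ℤ) ≠ 0 := by
                intro h; apply hd0; have : d1 = 0 := by exact_mod_cast h
                simp [this]
              rw [he] at h6
              push_cast at h6
              rw [mul_assoc] at h6
              have h7 := Int.dvd_of_mul_dvd_mul_left hd1' h6
              have h8 : Int.gcd (d2:ℤ) e = 1 := by
                rw [he] at h3; push_cast at h3
                rw [Int.gcd_mul_left] at h3
                simp only [Int.natAbs_natCast] at h3
                have hd1'' : 0 < d1 := by
                  rcases Nat.eq_zero_or_pos d1 with h | h
                  · exact absurd (by exact_mod_cast h) hd1'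
                  · exact h
                exact Nat.eq_of_mul_eq_mul_left hd1'' (by rw [h3, mul_one])
              exact (Int.isCoprime_iff_gcd_eq_one.2 h8).dvd_of_dvd_mul_left h7
            intro n hn n' hn' hnn
            simp only [hS, Finset.coe_filter, Finset.mem_filter, Finset.mem_Icc, Set.mem_ofPred_eq] at hn hn'
            obtain ⟨p1, p2⟩ := hh n hn.1.1.1 hn.1.2 hn.2
            obtain ⟨q1, q2⟩ := hh n' hn'.1.1.1 hn'.1.2 hn'.2
            have r1 : (d1:ℤ) ∣ a * (n - n') := by
              have := dvd_sub p1 q1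
              have e : (n:ℤ) - n' = (n - m) - (n' - m) := by ring
              exact Dvd.dvd.mul_left (by rw [e]; exact this) _
            have r2 : (d2:ℤ) ∣ a * (n - n') := by
              have := dvd_sub p2 q2
              have e : (a:ℤ) * (n - n') = (a * (n + m) + b) - (a * (n' + m) + b) := by ring
              rw [e]; exact this
            have r3 : ((d1:ℤ)*d2) ∣ a * (n - n') :=
              IsCoprime.mul_dvd (Nat.isCoprime_iff_coprime.2 hcop) r1 r2
            have r4 : a * n' ≡ a * n [MOD d1 * d2] := by
              rw [Nat.modEq_iff_dvd]
              push_cast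
              rw [← mul_sub]; exact r3
            have r5 : a * n = a * n' := by
              rw [← Nat.div_add_mod (a * n) (d1*d2), ← Nat.div_add_mod (a * n') (d1*d2)]
              simp only at hnn
              rw [hnn, r4]
            exact Nat.eq_of_mul_eq_mul_left ha r5
      _ = _ := by simp

theorem sqf_dvd {A m : ℕ} (hA : Squarefree A) (h : IsSquare (A * m)) : A ∣ m := by
  obtain ⟨w, hw⟩ := h
  have h1 : A ∣ w ^ 2 := ⟨m, by rw [hw]; ring⟩
  rw [hA.dvd_pow_iff_dvd (by norm_num)] at h1
  obtain ⟨t, rfl⟩ := h1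
  have hA0 : 0 < A := Nat.pos_of_ne_zero hA.ne_zero
  refine ⟨t * t, Nat.eq_of_mul_eq_mul_left hA0 ?_⟩
  rw [hw]; ring

theorem sqf_eq {A B : ℕ} (hA : Squarefree A) (hB : Squarefree B) (h : IsSquare (A * B)) : A = B :=
  Nat.dvd_antisymm (sqf_dvd hA h) (sqf_dvd hB (by rwa [mul_comm]))

theorem f_inj (a : ℕ) (ha : 0 < a) (b c : ℤ) (f : ℕ → ℕ)
    (hf : ∀ n, 1 ≤ n → (f n : ℤ) = a * n^2 + b * n + c) (n m : ℕ) (hn : 1 ≤ n) (hm : 1 ≤ m)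
    (h : f n = f m) (hn2 : b.natAbs < n ∨ b.natAbs < m) : n = m := by
  have h1 : (f n : ℤ) = f m := by rw [h]
  rw [hf n hn, hf m hm] at h1
  have h2 : ((n:ℤ) - m) * (a * (n + m) + b) = 0 := by linear_combination h1
  have ha' : (1:ℤ) ≤ a := by exact_mod_cast ha
  rcases mul_eq_zero.1 h2 with h3 | h3
  · have : (n:ℤ) = m := by linarith
    exact_mod_cast this
  · exfalso
    have : ((n:ℤ) + m) ≤ a * (n + m) := by nlinarith
    omega

theorem fiber_count (a : ℕ) (ha : 0 < a) (b c : ℤ) (f : ℕ → ℕ)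
    (hf : ∀ n, 1 ≤ n → (f n : ℤ) = a * n^2 + b * n + c) (N t : ℕ) :
    ((Finset.Icc 1 N).filter (fun n => f n = t)).card ≤ b.natAbs + 1 := by
  have : ((Finset.Icc 1 N).filter (fun n => f n = t)) ⊆
     Finset.Icc 1 b.natAbs ∪ ((Finset.Icc 1 N).filter (fun n => f n = t ∧ b.natAbs < n)) := by
    intro n hn
    simp only [Finset.mem_filter, Finset.mem_Icc, Finset.mem_union] at *
    omega
  refine (Finset.card_le_card this).trans ((Finset.card_union_le _ _).trans ?_)
  refine add_le_add (by simp) ?_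
  rw [Finset.card_le_one]
  intro x hx y hy
  simp only [Finset.mem_filter, Finset.mem_Icc] at *
  exact f_inj a ha b c f hf x y hx.1.1 hy.1.1 (by rw [hx.2.1, hy.2.1]) (Or.inl hx.2.2)

set_option maxHeartbeats 2000000 in
theorem dioph_count (a : ℕ) (ha : 0 < a) (b c : ℤ) (f : ℕ → ℕ)
    (hf : ∀ n, 1 ≤ n → (f n : ℤ) = a * n^2 + b * n + c) (hD : b^2 - 4 * a * c ≠ 0)
    (N u v : ℕ) (hu : 0 < u) (huv : u < v) :
    ((((Finset.Icc 1 N) ×ˢ (Finset.Icc 1 N)).filter (fun q : ℕ × ℕ => v * f q.1 = u * f q.2 ∧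
      b.natAbs < q.1 ∧ b.natAbs < q.2)).card : ℝ) ≤
      4 * Real.log ((2 * a + b.natAbs) * N) * (|((b^2 - 4 * a * c : ℤ) : ℝ)| * √(v * (1 + |((b^2 - 4 * a * c : ℤ) : ℝ)|))) + 1 := by
  set D : ℤ := b^2 - 4 * a * c with hDdef
  set s : ℝ := √(v * (1 + |(D : ℝ)|)) with hs
  have ha' : (1:ℤ) ≤ a := by exact_mod_cast ha
  have hu' : (1:ℤ) ≤ u := by exact_mod_cast hu
  have huv' : (u:ℤ) < v := by exact_mod_cast huv
  have hv1 : (1:ℝ) ≤ v := by exact_mod_cast (by omega : 1 ≤ v)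
  have hD1 : (1:ℝ) ≤ |(D:ℝ)| := by
    have : (1:ℤ) ≤ |D| := Int.one_le_abs hD
    exact_mod_cast this
  have hs1 : 1 ≤ s := by
    rw [hs, Real.one_le_sqrt]; nlinarith
  have hs2 : s ^ 2 = v * (1 + |(D : ℝ)|) := Real.sq_sqrt (by positivity)
  set δ : ℝ := 1 / (|(D:ℝ)| * s) with hδ
  have hDs : 1 ≤ |(D:ℝ)| * s := by nlinarith
  have hδ0 : 0 < δ := by positivity
  have hδ1 : δ ≤ 1 := by
    rw [hδ, div_le_one (by positivity)]; exact hDs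
  set S := ((Finset.Icc 1 N) ×ˢ (Finset.Icc 1 N)).filter (fun q : ℕ × ℕ => v * f q.1 = u * f q.2 ∧
      b.natAbs < q.1 ∧ b.natAbs < q.2) with hS
  have hXY : ∀ q ∈ S, (1:ℤ) ≤ 2 * a * q.1 + b ∧ (1:ℤ) ≤ 2 * a * q.2 + b ∧
     (v:ℤ) * ((2 * a * q.1 + b)^2 - D) = u * ((2 * a * q.2 + b)^2 - D) := by
    intro q hq
    simp only [hS, Finset.mem_filter, Finset.mem_product, Finset.mem_Icc] at hq
    obtain ⟨⟨⟨h1, h2⟩, h3, h4⟩, h5, h6, h7⟩ := hq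
    have key : ∀ n : ℕ, b.natAbs < n → (1:ℤ) ≤ 2 * a * n + b := by
      intro n hn
      have : ((n:ℤ)) ≤ a * n := by nlinarith
      have e : (2:ℤ) * a * n = a * n + a * n := by ring
      rw [e]
      omega
    refine ⟨key _ h6, key _ h7, ?_⟩
    have h8 : (v:ℤ) * f q.1 = u * f q.2 := by exact_mod_cast h5
    rw [hf _ h1, hf _ h3] at h8
    rw [hDdef]
    linear_combination 4 * a * h8
  have hgap : ∀ q ∈ S, ∀ r ∈ S, q.2 < r.2 →
     Real.log (((2 * a * q.2 + b : ℤ) : ℝ)^2) + δ/2 ≤ Real.log (((2 * a * r.2 + b : ℤ) : ℝ)^2) := by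
    intro q hq r hr hqr
    obtain ⟨x1, y1, e1⟩ := hXY q hq
    obtain ⟨x2, y2, e2⟩ := hXY r hr
    have hlt : (2 * a * q.2 + b : ℤ) < 2 * a * r.2 + b := by
      have : (q.2:ℤ) < r.2 := by exact_mod_cast hqr
      nlinarith
    generalize (2 * a * q.1 + b : ℤ) = X1 at *
    generalize (2 * a * q.2 + b : ℤ) = Y1 at *
    generalize (2 * a * r.1 + b : ℤ) = X2 at *
    generalize (2 * a * r.2 + b : ℤ) = Y2 at *
    have hdet : (v:ℤ) * ((X1 * Y2 - X2 * Y1) * (X1 * Y2 + X2 * Y1)) = D * (v - u) * (Y2^2 - Y1^2) := by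
      linear_combination Y2^2 * e1 - Y1^2 * e2
    have hYY : 0 < Y2^2 - Y1^2 := by nlinarith
    have hne : X1 * Y2 - X2 * Y1 ≠ 0 := by
      intro h
      rw [h] at hdet
      have : D * (v - u) * (Y2^2 - Y1^2) ≠ 0 :=
        mul_ne_zero (mul_ne_zero hD (by omega)) hYY.ne'
      apply this; rw [← hdet]; ring
    have hpos : 0 < X1 * Y2 + X2 * Y1 := by positivity
    have hvpos : (0:ℤ) < v := by omega
    have habs : (v:ℤ) * (|X1 * Y2 - X2 * Y1| * (X1 * Y2 + X2 * Y1)) = |D| * (v - u) * (Y2^2 - Y1^2) := by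
      have := congrArg abs hdet
      rwa [abs_mul, abs_mul, abs_mul, abs_mul, abs_of_pos hYY, abs_of_pos hpos, abs_of_pos hvpos,
        abs_of_pos (by omega : (0:ℤ) < v - u)] at this
    have h1 : X1 * Y2 + X2 * Y1 ≤ |D| * (Y2^2 - Y1^2) := by
      have g1 : 1 ≤ |X1 * Y2 - X2 * Y1| := Int.one_le_abs hne
      have g2 : (v:ℤ) * (X1 * Y2 + X2 * Y1) ≤ v * (|D| * (Y2^2 - Y1^2)) := by
        calc (v:ℤ) * (X1 * Y2 + X2 * Y1) ≤ v * (|X1 * Y2 - X2 * Y1| * (X1 * Y2 + X2 * Y1)) := by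
              gcongr; nlinarith
          _ = |D| * (v - u) * (Y2^2 - Y1^2) := habs
          _ ≤ |D| * v * (Y2^2 - Y1^2) := by gcongr; omega
          _ = _ := by ring
      exact le_of_mul_le_mul_left g2 hvpos
    have h2 : X1 * Y1 ≤ |D| * (Y2^2 - Y1^2) := by
      have g1 : X1 * Y1 ≤ X1 * Y2 := by gcongr
      have g2 : 0 ≤ X2 * Y1 := by positivity
      linarith
    have h3 : Y1^2 ≤ v * (1 + |D|) * X1^2 := by
      have g1 : Y1^2 ≤ u * Y1^2 := by nlinarith [sq_nonneg Y1]
      have g2 : (u:ℤ) * Y1^2 = v * X1^2 - D * (v - u) := by linear_combination -e1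
      have g3 : - (D * (v - u)) ≤ |D| * v := by
        have k1 : -D ≤ |D| := neg_le_abs D
        have k2 : 0 ≤ |D| := abs_nonneg D
        nlinarith
      have g4 : |D| * v ≤ |D| * v * X1^2 := by
        have k2 : 0 ≤ |D| * v := by positivity
        exact le_mul_of_one_le_right k2 (by nlinarith)
      have g5 : (v:ℤ) * (1 + |D|) * X1^2 = v * X1^2 + |D| * v * X1^2 := by ring
      linarith
    have Y1p : (1:ℝ) ≤ Y1 := by exact_mod_cast y1
    have X1p : (1:ℝ) ≤ X1 := by exact_mod_cast x1
    have h3' : (Y1:ℝ) ≤ s * X1 := by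
      have : (Y1:ℝ)^2 ≤ (s * X1)^2 := by
        rw [mul_pow, hs2]; exact_mod_cast h3
      exact le_of_sq_le_sq this (by positivity)
    have h2' : (X1:ℝ) * Y1 ≤ |(D:ℝ)| * (Y2^2 - Y1^2) := by exact_mod_cast h2
    have h4 : (Y1:ℝ)^2 * (1 + δ) ≤ Y2^2 := by
      have g1 : (Y1:ℝ)^2 ≤ (|(D:ℝ)| * s) * (Y2^2 - Y1^2) := by nlinarith
      have g2 : (Y1:ℝ)^2 * δ ≤ Y2^2 - Y1^2 := by
        rw [hδ, mul_one_div, div_le_iff₀ (by positivity)]; linarith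
      linarith
    have h5 : δ / 2 ≤ Real.log (1 + δ) := by
      have := Real.one_sub_inv_le_log_of_pos (by positivity : 0 < 1 + δ)
      refine le_trans ?_ this
      have : 1 - (1+δ)⁻¹ = δ / (1 + δ) := by field_simp; ring
      rw [this]
      gcongr
      linarith
    calc _ ≤ Real.log ((Y1:ℝ)^2) + Real.log (1+δ) := by gcongr
      _ = Real.log ((Y1:ℝ)^2 * (1+δ)) := by
        rw [Real.log_mul (by positivity) (by positivity)]
      _ ≤ _ := Real.log_le_log (by positivity) h4
  set g : ℕ × ℕ → ℕ := fun q => ⌊Real.log (((2 * a * q.2 + b : ℤ) : ℝ)^2) / (δ/2)⌋₊ with hg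
  set L := Real.log ((2 * a + b.natAbs) * N) with hL
  have hbd : ∀ q ∈ S, 0 ≤ Real.log (((2 * a * q.2 + b : ℤ) : ℝ)^2) ∧ Real.log (((2 * a * q.2 + b : ℤ) : ℝ)^2) ≤ 2 * L := by
    intro q hq
    obtain ⟨x1, y1, e1⟩ := hXY q hq
    have y1' : (1:ℝ) ≤ (2 * a * q.2 + b : ℤ) := by exact_mod_cast y1
    refine ⟨Real.log_nonneg (by nlinarith), ?_⟩
    rw [Real.log_pow]
    push_cast only [Nat.cast_ofNat]
    gcongr
    rw [hL]
    apply Real.log_le_log (by linarith)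
    simp only [hS, Finset.mem_filter, Finset.mem_product, Finset.mem_Icc] at hq
    obtain ⟨⟨⟨h1, h2⟩, h3, h4⟩, h5, h6, h7⟩ := hq
    have : (2 * a * q.2 + b : ℤ) ≤ (2 * a + b.natAbs) * N := by
      have k1 : (q.2:ℤ) ≤ N := by exact_mod_cast h4
      have k2 : (1:ℤ) ≤ N := by exact_mod_cast (h3.trans h4)
      have k3 : b ≤ b.natAbs := by omega
      have k4 : (b.natAbs : ℤ) ≤ b.natAbs * N := by nlinarith
      nlinarith
    have h := (Int.cast_le (R := ℝ)).2 this
    rw [Nat.cast_natAbs]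
    push_cast at h ⊢
    exact h
  have hinj : Set.InjOn g S := by
    intro q hq r hr hqr
    have key : ∀ q ∈ S, ∀ r ∈ S, g q = g r → ¬ q.2 < r.2 := by
      intro q hq r hr hqr hlt
      have h1 := hgap q hq r hr hlt
      have h2 := hbd q hq
      have h3 : g q + 1 ≤ g r := by
        simp only [hg]
        rw [← Nat.floor_add_one (div_nonneg h2.1 (by positivity))]
        apply Nat.floor_le_floor
        rw [div_add_one (by positivity)]
        gcongr
      omega
    have h2 : q.2 = r.2 := by
      have := key q hq r hr hqr
      have := key r hr q hq hqr.symm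
      omega
    simp only [hS, Finset.coe_filter, Finset.mem_product, Finset.mem_Icc, Set.mem_ofPred_eq] at hq hr
    have h3 : f q.1 = f r.1 := by
      apply Nat.eq_of_mul_eq_mul_left (by omega : 0 < v)
      rw [hq.2.1, hr.2.1, h2]
    have h4 := f_inj a ha b c f hf q.1 r.1 hq.1.1.1 hr.1.1.1 h3 (Or.inl hq.2.2.1)
    exact Prod.ext h4 h2
  rcases S.eq_empty_or_nonempty with h | ⟨q0, hq0⟩
  · rw [h]
    rcases Nat.eq_zero_or_pos N with rfl | hN
    · simp [hL]
    have hN' : (1:ℝ) ≤ N := by exact_mod_cast hN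
    have hapos : (1:ℝ) ≤ a := by exact_mod_cast ha
    have hLpos : 0 ≤ L := by
      apply Real.log_nonneg
      have : (0:ℝ) ≤ b.natAbs := by positivity
      nlinarith
    simp only [Finset.card_empty, Nat.cast_zero]
    positivity
  have hLpos : 0 ≤ L := by linarith [hbd q0 hq0]
  have hcard : S.card ≤ (Finset.range (⌊4 * L * (|(D:ℝ)| * s)⌋₊ + 1)).card := by
    apply Finset.card_le_card_of_injOn g _ hinj
    intro q hq
    simp only [Finset.coe_range, Set.mem_Iio]
    refine Nat.lt_succ_of_le ?_
    apply Nat.floor_le_floor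
    rw [div_le_iff₀ (by positivity)]
    have e : 4 * L * (|(D:ℝ)| * s) * (δ/2) = 2 * L := by
      rw [hδ]; field_simp; ring
    rw [e]; exact (hbd q hq).2
  rw [Finset.card_range] at hcard
  calc (S.card : ℝ) ≤ ((⌊4 * L * (|(D:ℝ)| * s)⌋₊ + 1 : ℕ) : ℝ) := by exact_mod_cast hcard
    _ ≤ _ := by
      push_cast
      gcongr
      exact Nat.floor_le (by positivity)

theorem card_le_real {α β : Type*} [DecidableEq β] (S : Finset α) (T : Finset β) (g : α → β) (r : ℝ)
    (hg : ∀ x ∈ S, g x ∈ T) (h : ∀ t ∈ T, ((S.filter (fun x => g x = t)).card : ℝ) ≤ r) :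
    (S.card : ℝ) ≤ T.card * r := by
  rw [Finset.card_eq_sum_card_fiberwise (f := g) (t := T) hg]
  push_cast
  calc _ ≤ ∑ _t ∈ T, r := Finset.sum_le_sum h
    _ = _ := by simp

theorem pair_count (a : ℕ) (ha : 0 < a) (b c : ℤ) (f : ℕ → ℕ)
    (hf : ∀ n, 1 ≤ n → (f n : ℤ) = a * n^2 + b * n + c) (hD : b^2 - 4 * a * c ≠ 0)
    (B : ℕ) (T : ℝ) (hT1 : 1 ≤ T)
    (hT : ∀ N m : ℕ, 1 ≤ N → Squarefree m → m ≤ (B * N^2)^2 → (m.divisors.card : ℝ) ≤ T * (N:ℝ)^((1:ℝ)/100)) :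
    ∃ C : ℝ, 0 ≤ C ∧ ∀ N : ℕ, 1 ≤ N → ∀ u v : ℕ, 0 < u → u < v → Squarefree v → v ≤ (B * N^2)^2 →
    ((((Finset.Icc 1 N) ×ˢ (Finset.Icc 1 N)).filter (fun q : ℕ × ℕ => v * f q.1 = u * f q.2 ∧
      v ∣ f q.2)).card : ℝ) ≤ C * (N:ℝ)^((1:ℝ)/3 + 1/100) := by
  set D : ℤ := b^2 - 4 * a * c with hDdef
  set β := b.natAbs with hβ
  set B' : ℝ := 2 * a + β with hB'
  set C1 : ℝ := 2 * (β * (β + 1)) + (4 * (B' ^ ((1:ℝ)/100) / (1/100)) * (|(D:ℝ)| * √(1 + |(D:ℝ)|)) + 1) with hC1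
  set C2 : ℝ := (β + 1) * (T * (a + 1)) with hC2
  have hC1p : 0 ≤ C1 := by positivity
  have hC2p : 0 ≤ C2 := by positivity
  refine ⟨C1 + C2, by positivity, ?_⟩
  intro N hN u v hu huv hsq hvB
  have hN1 : (1:ℝ) ≤ N := by exact_mod_cast hN
  have hN0 : (0:ℝ) < N := by linarith
  have hv0 : (0:ℝ) < v := by exact_mod_cast (by omega : 0 < v)
  have hpow : (0:ℝ) ≤ (N:ℝ)^((1:ℝ)/3 + 1/100) := by positivity
  have hsplit : (N:ℝ)^((1:ℝ)/3 + 1/100) = (N:ℝ)^((1:ℝ)/3) * (N:ℝ)^((1:ℝ)/100) := Real.rpow_add hN0 _ _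
  have hone : (1:ℝ) ≤ (N:ℝ)^((1:ℝ)/3 + 1/100) := Real.one_le_rpow hN1 (by norm_num)
  have hone3 : (1:ℝ) ≤ (N:ℝ)^((1:ℝ)/3) := Real.one_le_rpow hN1 (by norm_num)
  set S := ((Finset.Icc 1 N) ×ˢ (Finset.Icc 1 N)).filter (fun q : ℕ × ℕ => v * f q.1 = u * f q.2 ∧
      v ∣ f q.2) with hS
  rcases le_or_gt (v:ℝ) ((N:ℝ)^((2:ℝ)/3)) with hv | hv
  · have h1 : (S.card : ℝ) ≤ C1 * (N:ℝ)^((1:ℝ)/3 + 1/100) := by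
      have hsub : S ⊆ (S.filter (fun q => q.1 ≤ β) ∪ S.filter (fun q => q.2 ≤ β)) ∪
         ((Finset.Icc 1 N) ×ˢ (Finset.Icc 1 N)).filter (fun q : ℕ × ℕ => v * f q.1 = u * f q.2 ∧
          b.natAbs < q.1 ∧ b.natAbs < q.2) := by
        intro q hq
        have hq' := hq
        simp only [hS, Finset.mem_filter, Finset.mem_product] at hq'
        simp only [Finset.mem_union, Finset.mem_filter, Finset.mem_product]
        rcases le_or_gt q.1 β with h | h
        · exact Or.inl (Or.inl ⟨hq, h⟩)
        rcases le_or_gt q.2 β with h' | h'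
        · exact Or.inl (Or.inr ⟨hq, h'⟩)
        exact Or.inr ⟨hq'.1, hq'.2.1, h, h'⟩
      have f1 : (S.filter (fun q => q.1 ≤ β)).card ≤ (β + 1) * (Finset.Icc 1 β).card := by
        apply Finset.card_le_mul_card_image_of_maps_to (f := fun q => q.1)
        · intro q hq
          simp only [hS, Finset.mem_filter, Finset.mem_product, Finset.mem_Icc] at hq ⊢
          exact ⟨hq.1.1.1.1, hq.2⟩
        · intro t ht
          refine le_trans ?_ (fiber_count a ha b c f hf N (v * f t / u))
          apply Finset.card_le_card_of_injOn (fun q => q.2)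
          · intro q hq
            simp only [hS, Finset.coe_filter, Finset.mem_filter, Finset.mem_product, Finset.mem_Icc, Set.mem_ofPred_eq] at hq ⊢
            refine ⟨hq.1.1.1.2, ?_⟩
            rw [← hq.2, hq.1.1.2.1, Nat.mul_div_cancel_left _ hu]
          · intro q hq r hr hqr
            simp only [Finset.coe_filter, Set.mem_ofPred_eq] at hq hr
            exact Prod.ext (by rw [hq.2, hr.2]) hqr
      have f2 : (S.filter (fun q => q.2 ≤ β)).card ≤ (β + 1) * (Finset.Icc 1 β).card := by
        apply Finset.card_le_mul_card_image_of_maps_to (f := fun q => q.2)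
        · intro q hq
          simp only [hS, Finset.mem_filter, Finset.mem_product, Finset.mem_Icc] at hq ⊢
          exact ⟨hq.1.1.2.1, hq.2⟩
        · intro t ht
          refine le_trans ?_ (fiber_count a ha b c f hf N (u * f t / v))
          apply Finset.card_le_card_of_injOn (fun q => q.1)
          · intro q hq
            simp only [hS, Finset.coe_filter, Finset.mem_filter, Finset.mem_product, Finset.mem_Icc, Set.mem_ofPred_eq] at hq ⊢
            refine ⟨hq.1.1.1.1, ?_⟩
            rw [← hq.2, ← hq.1.1.2.1, Nat.mul_div_cancel_left _ (by omega)]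
          · intro q hq r hr hqr
            simp only [Finset.coe_filter, Set.mem_ofPred_eq] at hq hr
            exact Prod.ext hqr (by rw [hq.2, hr.2])
      simp only [Nat.card_Icc, Nat.add_sub_cancel] at f1 f2
      have f3 := dioph_count a ha b c f hf hD N u v hu huv
      have f4 := (Finset.card_le_card hsub).trans ((Finset.card_union_le _ _).trans
        (Nat.add_le_add_right (Finset.card_union_le _ _) _))
      have f4' : (S.card : ℝ) ≤ _ := Nat.cast_le.2 f4
      push_cast only [Nat.cast_add] at f4'
      have f1' : (((S.filter (fun q => q.1 ≤ β)).card : ℕ) : ℝ) ≤ β * (β + 1) := by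
        rw [mul_comm] at f1; exact_mod_cast f1
      have f2' : (((S.filter (fun q => q.2 ≤ β)).card : ℕ) : ℝ) ≤ β * (β + 1) := by
        rw [mul_comm] at f2; exact_mod_cast f2
      have hlog : Real.log (B' * N) ≤ (B' ^ ((1:ℝ)/100) / (1/100)) * (N:ℝ) ^ ((1:ℝ)/100) := by
        have := Real.log_le_rpow_div (by positivity : 0 ≤ B' * N) (by norm_num : (0:ℝ) < 1/100)
        rw [Real.mul_rpow (by positivity) (by positivity)] at this
        refine this.trans (le_of_eq (by ring))
      have hsqrt : √(v * (1 + |(D:ℝ)|)) ≤ (N:ℝ)^((1:ℝ)/3) * √(1 + |(D:ℝ)|) := by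
        rw [Real.sqrt_mul (by positivity)]
        gcongr
        rw [Real.sqrt_le_left (by positivity), ← Real.rpow_natCast, ← Real.rpow_mul (by positivity)]
        norm_num
        norm_num at hv
        exact hv
      have hlog0 : 0 ≤ (B' ^ ((1:ℝ)/100) / (1/100)) * (N:ℝ) ^ ((1:ℝ)/100) := by positivity
      have f5 : 4 * Real.log (B' * N) * (|(D:ℝ)| * √(v * (1 + |(D:ℝ)|))) + 1 ≤
         (4 * (B' ^ ((1:ℝ)/100) / (1/100)) * (|(D:ℝ)| * √(1 + |(D:ℝ)|)) + 1) * (N:ℝ)^((1:ℝ)/3 + 1/100) := by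
        calc _ ≤ 4 * ((B' ^ ((1:ℝ)/100) / (1/100)) * (N:ℝ) ^ ((1:ℝ)/100)) * (|(D:ℝ)| * ((N:ℝ)^((1:ℝ)/3) * √(1 + |(D:ℝ)|))) + 1 := by
              gcongr
          _ ≤ 4 * ((B' ^ ((1:ℝ)/100) / (1/100)) * (N:ℝ) ^ ((1:ℝ)/100)) * (|(D:ℝ)| * ((N:ℝ)^((1:ℝ)/3) * √(1 + |(D:ℝ)|))) + (N:ℝ)^((1:ℝ)/3 + 1/100) := by
              gcongr
          _ = _ := by rw [hsplit]; ring
      have f6 : 2 * ((β:ℝ) * (β + 1)) ≤ 2 * ((β:ℝ) * (β + 1)) * (N:ℝ)^((1:ℝ)/3 + 1/100) :=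
        le_mul_of_one_le_right (by positivity) hone
      rw [hC1, add_mul]
      have f3' := f3.trans f5
      linarith
    nlinarith
  · have h1 : (S.card : ℝ) ≤ C2 * (N:ℝ)^((1:ℝ)/3 + 1/100) := by
      have f1 : S.card ≤ (β + 1) * ((Finset.Icc 1 N).filter (fun n => v ∣ f n)).card := by
        apply Finset.card_le_mul_card_image_of_maps_to (f := fun q => q.2)
        · intro q hq
          simp only [hS, Finset.mem_filter, Finset.mem_product, Finset.mem_Icc] at hq ⊢
          exact ⟨hq.1.2, hq.2.2⟩
        · intro t ht
          refine le_trans ?_ (fiber_count a ha b c f hf N (u * f t / v))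
          apply Finset.card_le_card_of_injOn (fun q => q.1)
          · intro q hq
            simp only [hS, Finset.coe_filter, Finset.mem_filter, Finset.mem_product, Finset.mem_Icc, Set.mem_ofPred_eq] at hq ⊢
            refine ⟨hq.1.1.1, ?_⟩
            rw [← hq.2, ← hq.1.2.1, Nat.mul_div_cancel_left _ (by omega)]
          · intro q hq r hr hqr
            simp only [Finset.coe_filter, Set.mem_ofPred_eq] at hq hr
            exact Prod.ext hqr (by rw [hq.2, hr.2])
      have f2 := root_count a ha b c f hf v hsq N
      have f3 := f1.trans (Nat.mul_le_mul_left _ f2)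
      have f3' : (S.card : ℝ) ≤ (β + 1) * (v.divisors.card * ((a * N / v : ℕ) + 1)) := by exact_mod_cast f3
      have f4 := hT N v hN hsq hvB
      have f5 : ((a * N / v : ℕ) : ℝ) ≤ a * (N:ℝ)^((1:ℝ)/3) := by
        refine Nat.cast_div_le.trans ?_
        rw [div_le_iff₀ hv0]
        push_cast
        have : (N:ℝ) = (N:ℝ)^((1:ℝ)/3) * (N:ℝ)^((2:ℝ)/3) := by
          rw [← Real.rpow_add hN0]; norm_num
        calc (a:ℝ) * N = a * (N:ℝ)^((1:ℝ)/3) * (N:ℝ)^((2:ℝ)/3) := by rw [mul_assoc, ← this]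
          _ ≤ _ := by gcongr
      calc (S.card : ℝ) ≤ _ := f3'
        _ ≤ (β + 1) * ((T * (N:ℝ)^((1:ℝ)/100)) * (a * (N:ℝ)^((1:ℝ)/3) + (N:ℝ)^((1:ℝ)/3))) := by gcongr
        _ = _ := by rw [hC2, hsplit]; ring
    nlinarith


theorem comp_count (f : ℕ → ℕ) (hpos : ∀ n, 1 ≤ n → 1 ≤ f n)
    (N B : ℕ) (hB : ∀ n, 1 ≤ n → f n ≤ B * n^2) (t r : ℝ) (hr : 0 ≤ r)
    (hT : ∀ m : ℕ, Squarefree m → m ≤ (B * N^2)^2 → (m.divisors.card : ℝ) ≤ t)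
    (hC : ∀ u v : ℕ, 0 < u → u < v → Squarefree v → v ≤ (B * N^2)^2 →
    ((((Finset.Icc 1 N) ×ˢ (Finset.Icc 1 N)).filter (fun q : ℕ × ℕ => v * f q.1 = u * f q.2 ∧
      v ∣ f q.2)).card : ℝ) ≤ r) (n1 n2 : ℕ) (h11 : 1 ≤ n1) (h1N : n1 ≤ N) (h21 : 1 ≤ n2) (h2N : n2 ≤ N)
    (hs1 : Squarefree (f n1)) (hs2 : Squarefree (f n2)) (hne : f n1 ≠ f n2) :
    ((((Finset.Icc 1 N) ×ˢ (Finset.Icc 1 N)).filter (fun q : ℕ × ℕ => Squarefree (f q.1) ∧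
      Squarefree (f q.2) ∧ IsSquare (f n1 * f n2 * f q.1 * f q.2))).card : ℝ) ≤ t * r := by
  classical
  have decomp : ∀ x y : ℕ, Squarefree x → Squarefree y → ∃ g u v, x = g * u ∧ y = g * v ∧
      u.Coprime v ∧ Squarefree (u * v) ∧ g = Nat.gcd x y ∧ 0 < g ∧ u = x / Nat.gcd x y := by
    intro x y hx hy
    have hg : 0 < Nat.gcd x y := Nat.gcd_pos_of_pos_left _ (Nat.pos_of_ne_zero hx.ne_zero)
    have e1 := (Nat.mul_div_cancel' (Nat.gcd_dvd_left x y)).symm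
    have e2 := (Nat.mul_div_cancel' (Nat.gcd_dvd_right x y)).symm
    have hc := Nat.coprime_div_gcd_div_gcd hg
    refine ⟨Nat.gcd x y, x / Nat.gcd x y, y / Nat.gcd x y, e1, e2, hc, ?_, rfl, hg, rfl⟩
    rw [Nat.squarefree_mul hc]
    exact ⟨hx.squarefree_of_dvd (Nat.div_dvd_of_dvd (Nat.gcd_dvd_left x y)),
      hy.squarefree_of_dvd (Nat.div_dvd_of_dvd (Nat.gcd_dvd_right x y))⟩
  obtain ⟨g, u, v, e1, e2, hcop, hsqk, -, hg, -⟩ := decomp _ _ hs1 hs2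
  set k := u * v with hk
  have hk1 : k ≠ 1 := by
    intro h
    rw [hk] at h
    have h1 := Nat.eq_one_of_mul_eq_one_right h
    have h2 := Nat.eq_one_of_mul_eq_one_left h
    apply hne; rw [e1, e2, h1, h2]
  have hkB : k ≤ (B * N^2)^2 := by
    have k1 : u ≤ B * N^2 := by
      calc u ≤ g * u := Nat.le_mul_of_pos_left _ hg
        _ = f n1 := e1.symm
        _ ≤ B * n1^2 := hB _ h11
        _ ≤ _ := by gcongr
    have k2 : v ≤ B * N^2 := by
      calc v ≤ g * v := Nat.le_mul_of_pos_left _ hg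
        _ = f n2 := e2.symm
        _ ≤ B * n2^2 := hB _ h21
        _ ≤ _ := by gcongr
    rw [hk, sq]; gcongr
  set S := ((Finset.Icc 1 N) ×ˢ (Finset.Icc 1 N)).filter (fun q : ℕ × ℕ => Squarefree (f q.1) ∧
      Squarefree (f q.2) ∧ IsSquare (f n1 * f n2 * f q.1 * f q.2)) with hS
  have key : ∀ q ∈ S, ∃ h v', f q.1 = h * (f q.1 / Nat.gcd (f q.1) (f q.2)) ∧ f q.2 = h * v' ∧
      (f q.1 / Nat.gcd (f q.1) (f q.2)) * v' = k ∧ (f q.1 / Nat.gcd (f q.1) (f q.2)).Coprime v' := by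
    intro q hq
    simp only [hS, Finset.mem_filter, Finset.mem_product, Finset.mem_Icc] at hq
    obtain ⟨h, u', v', e3, e4, hcop', hsq', -, hh, hu'⟩ := decomp _ _ hq.2.1 hq.2.2.1
    rw [← hu']
    refine ⟨h, v', e3, e4, ?_, hcop'⟩
    have hsq := hq.2.2.2
    apply sqf_eq hsq' hsqk
    rw [e1, e2, e3, e4] at hsq
    have e5 : g * u * (g * v) * (h * u') * (h * v') = (g * h)^2 * (u' * v' * k) := by rw [hk]; ring
    rw [e5] at hsq
    obtain ⟨w, hw⟩ := hsq
    have hd : (g * h)^2 ∣ w^2 := ⟨_, by rw [sq w, ← hw]⟩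
    rw [Nat.pow_dvd_pow_iff (by norm_num)] at hd
    obtain ⟨z, rfl⟩ := hd
    refine ⟨z, ?_⟩
    apply Nat.eq_of_mul_eq_mul_left (by positivity : 0 < (g * h)^2)
    rw [hw]; ring
  have hcard := card_le_real S k.divisors (fun q => f q.1 / Nat.gcd (f q.1) (f q.2)) r ?_ ?_
  · refine hcard.trans ?_
    gcongr
    exact hT k hsqk hkB
  · intro q hq
    obtain ⟨h, v', -, -, h3, -⟩ := key q hq
    simp only [Nat.mem_divisors]
    exact ⟨⟨v', h3.symm⟩, hsqk.ne_zero⟩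
  · intro u' hu'
    obtain ⟨⟨v', hv'⟩, hk0⟩ := Nat.mem_divisors.1 hu'
    have hsq' : Squarefree (u' * v') := hv' ▸ hsqk
    have hu0 : 0 < u' := Nat.pos_of_mem_divisors hu'
    have hv0 : 0 < v' := by
      rcases Nat.eq_zero_or_pos v' with h | h
      · rw [h] at hv'; simp at hv'; omega
      · exact h
    have hprop : ∀ q ∈ S, f q.1 / Nat.gcd (f q.1) (f q.2) = u' →
       v' * f q.1 = u' * f q.2 ∧ v' ∣ f q.2 ∧ u' ∣ f q.1 := by
      intro q hq hqu
      obtain ⟨h, v'', h1, h2, h3, -⟩ := key q hq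
      rw [hqu] at h1 h3
      have : v'' = v' := Nat.eq_of_mul_eq_mul_left hu0 (by rw [h3, hv'])
      subst this
      refine ⟨by rw [h1, h2]; ring, ⟨h, by rw [h2]; ring⟩, ⟨h, by rw [h1]; ring⟩⟩
    rcases lt_trichotomy u' v' with hlt | heq | hlt
    · refine le_trans ?_ (hC u' v' hu0 hlt (hsq'.squarefree_of_dvd (Dvd.intro_left _ rfl)) ?_)
      · norm_cast
        apply Finset.card_le_card
        intro q hq
        rw [Finset.mem_filter] at hq
        have := hprop q hq.1 hq.2
        rw [Finset.mem_filter]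
        exact ⟨(Finset.mem_filter.1 hq.1).1, this.1, this.2.1⟩
      · refine le_trans ?_ hkB
        rw [hv']; exact Nat.le_mul_of_pos_left _ hu0
    · exfalso
      subst heq
      have : u' = 1 := by simpa using hsq' u' dvd_rfl
      apply hk1; rw [hv', this]
    · refine le_trans ?_ (hC v' u' hv0 hlt (hsq'.squarefree_of_dvd (Dvd.intro _ rfl)) ?_)
      · norm_cast
        apply Finset.card_le_card_of_injOn Prod.swap
        · intro q hq
          simp only [Finset.coe_filter, Set.mem_ofPred_eq] at hq
          have := hprop q hq.1 hq.2
          simp only [Finset.coe_filter, Set.mem_ofPred_eq, Prod.fst_swap, Prod.snd_swap]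
          have h3 := (Finset.mem_filter.1 hq.1).1
          rw [Finset.mem_product] at h3 ⊢
          exact ⟨⟨h3.2, h3.1⟩, this.1.symm, this.2.2⟩
        · exact Prod.swap_injective.injOn
      · refine le_trans ?_ hkB
        rw [hv']; exact Nat.le_mul_of_pos_right _ hv0

theorem pr_count (a : ℕ) (ha : 0 < a) (b c : ℤ) (f : ℕ → ℕ)
    (hf : ∀ n, 1 ≤ n → (f n : ℤ) = a * n^2 + b * n + c)
    (N B : ℕ) (hN : 1 ≤ N) (hB : ∀ n, 1 ≤ n → f n ≤ B * n^2) (K : ℝ) (hK : 1 ≤ K)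
    (hK2 : ∀ n : ℕ, 1 ≤ n → (n:ℝ)^2 ≤ K * f n) (t : ℝ) 
    (hT : ∀ m : ℕ, Squarefree m → m ≤ (B * N^2)^2 → (m.divisors.card : ℝ) ≤ t) :
    ((((Finset.Icc 1 N) ×ˢ (Finset.Icc 1 N)).filter (fun q : ℕ × ℕ => q.2 ≤ q.1 ∧ Squarefree (f q.1) ∧
      f q.1 ≤ (Nat.gcd (f q.1) (f q.2))^3)).card : ℝ) ≤ N * (t * (t * (a * K * (N:ℝ)^((1:ℝ)/3) + 1))) := by
  classical
  have hN0 : (0:ℝ) < N := by exact_mod_cast hN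
  have ht0 : 0 ≤ t := by
    rcases Nat.eq_zero_or_pos B with h | h
    · have := hK2 1 le_rfl
      have h2 := hB 1 le_rfl
      rw [h] at h2
      have : f 1 = 0 := by omega
      simp [this] at *
      linarith
    · refine le_trans ?_ (hT 1 squarefree_one ?_)
      · positivity
      · apply Nat.one_le_pow; positivity
  refine (card_le_real _ (Finset.Icc 1 N) (fun q => q.1) (t * (t * (a * K * (N:ℝ)^((1:ℝ)/3) + 1))) ?_ ?_).trans ?_
  · intro q hq
    simp only [Finset.mem_filter, Finset.mem_product] at hq
    exact hq.1.1
  · intro n hn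
    rw [Finset.mem_Icc] at hn
    by_cases hsq : Squarefree (f n)
    swap
    · rw [Finset.card_eq_zero.2]
      · have : 0 ≤ K := by linarith
        simp only [Nat.cast_zero]; positivity
      · ext q
        simp only [Finset.mem_filter, Finset.notMem_empty, iff_false]
        rintro ⟨⟨-, -, h, -⟩, rfl⟩
        exact hsq h
    have hfn : f n ≤ (B * N^2)^2 := by
      have h1 : f n ≤ B * N^2 := (hB n hn.1).trans (by gcongr; exact hn.2)
      exact h1.trans (Nat.le_self_pow (by norm_num) _)
    refine (card_le_real _ ((f n).divisors.filter (fun d => f n ≤ d^3)) (fun q => Nat.gcd (f q.1) (f q.2))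
      (t * (a * K * (N:ℝ)^((1:ℝ)/3) + 1)) ?_ ?_).trans ?_
    · intro q hq
      simp only [Finset.mem_filter, Finset.mem_product, Nat.mem_divisors] at hq ⊢
      obtain ⟨⟨-, -, h1, h2⟩, rfl⟩ := hq
      exact ⟨⟨Nat.gcd_dvd_left _ _, hsq.ne_zero⟩, h2⟩
    · intro d hd
      simp only [Finset.mem_filter, Nat.mem_divisors] at hd
      obtain ⟨⟨hd1, hd0⟩, hd3⟩ := hd
      have hdsq := hsq.squarefree_of_dvd hd1
      have hdpos : (0:ℝ) < d := by exact_mod_cast Nat.pos_of_ne_zero hdsq.ne_zero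
      have h1 : (((((Finset.Icc 1 N) ×ˢ (Finset.Icc 1 N)).filter (fun q : ℕ × ℕ => q.2 ≤ q.1 ∧ Squarefree (f q.1) ∧
      f q.1 ≤ (Nat.gcd (f q.1) (f q.2))^3)).filter (fun q => q.1 = n)).filter (fun q => Nat.gcd (f q.1) (f q.2) = d)).card ≤
        ((Finset.Icc 1 n).filter (fun m => d ∣ f m)).card := by
        apply Finset.card_le_card_of_injOn (fun q => q.2)
        · intro q hq
          simp only [Finset.coe_filter, Finset.mem_filter, Finset.mem_product, Finset.mem_Icc, Set.mem_ofPred_eq] at hq ⊢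
          obtain ⟨⟨⟨⟨h1, h2⟩, h3, h4, h5⟩, rfl⟩, rfl⟩ := hq
          exact ⟨⟨h2.1, h3⟩, Nat.gcd_dvd_right _ _⟩
        · intro q hq r hr hqr
          simp only [Finset.coe_filter, Finset.mem_filter, Set.mem_ofPred_eq] at hq hr
          exact Prod.ext (by rw [hq.1.2, hr.1.2]) hqr
      have h2 := h1.trans (root_count a ha b c f hf d hdsq n)
      have h2' := (Nat.cast_le (α := ℝ)).2 h2
      refine h2'.trans ?_
      push_cast
      have h3 : (d.divisors.card : ℝ) ≤ t :=
        hT d hdsq ((Nat.le_of_dvd (Nat.pos_of_ne_zero hd0) hd1).trans hfn)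
      gcongr
      refine Nat.cast_div_le.trans ?_
      push_cast
      rw [div_le_iff₀ hdpos, mul_assoc, mul_assoc]
      gcongr
      have hn0 : (0:ℝ) < n := by exact_mod_cast hn.1
      have h4 : (n:ℝ)^((2:ℝ)/3) ≤ K * d := by
        have h5 : (n:ℝ)^2 ≤ (K * d)^3 := by
          calc (n:ℝ)^2 ≤ K * f n := hK2 n hn.1
            _ ≤ K * (d:ℝ)^3 := by gcongr; exact_mod_cast hd3
            _ ≤ K^3 * (d:ℝ)^3 := by
              gcongr
              exact le_self_pow₀ hK (by norm_num)
            _ = _ := by ring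
        have hKd : 0 ≤ K * d := by positivity
        calc (n:ℝ)^((2:ℝ)/3) = ((n:ℝ)^2)^((1:ℝ)/3) := by
              rw [← Real.rpow_natCast, ← Real.rpow_mul hn0.le]; norm_num
          _ ≤ ((K * d)^3)^((1:ℝ)/3) := by gcongr
          _ = K * d := by
              rw [← Real.rpow_natCast, ← Real.rpow_mul hKd]; norm_num
      calc (n:ℝ) = (n:ℝ)^((1:ℝ)/3) * (n:ℝ)^((2:ℝ)/3) := by
            rw [← Real.rpow_add hn0]; norm_num
        _ ≤ (N:ℝ)^((1:ℝ)/3) * (K * d) := by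
            gcongr
            exact hn.2
        _ = _ := by ring
    · have : 0 ≤ K := by linarith
      gcongr
      refine le_trans ?_ (hT (f n) hsq hfn)
      exact_mod_cast Finset.card_filter_le _ _
  · simp

def offP (f : ℕ → ℕ) (N : ℕ) (q : ℕ × ℕ × ℕ × ℕ) : Prop :=
  (1 ≤ q.1 ∧ q.1 ≤ N) ∧ (1 ≤ q.2.1 ∧ q.2.1 ≤ N) ∧ (1 ≤ q.2.2.1 ∧ q.2.2.1 ≤ N) ∧ (1 ≤ q.2.2.2 ∧ q.2.2.2 ≤ N) ∧
  Squarefree (f q.1) ∧ Squarefree (f q.2.1) ∧ Squarefree (f q.2.2.1) ∧ Squarefree (f q.2.2.2) ∧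
  IsSquare (f q.1 * f q.2.1 * f q.2.2.1 * f q.2.2.2) ∧
  f q.1 ≠ f q.2.1 ∧ f q.1 ≠ f q.2.2.1 ∧ f q.1 ≠ f q.2.2.2 ∧ f q.2.1 ≠ f q.2.2.1 ∧ f q.2.1 ≠ f q.2.2.2 ∧
  f q.2.2.1 ≠ f q.2.2.2

open Classical in
theorem off_sym (f : ℕ → ℕ) (N : ℕ) (U : Finset (ℕ × ℕ × ℕ × ℕ)) (hU : ∀ q, offP f N q → q ∈ U) :
    (U.filter (offP f N)).card ≤ 12 * (U.filter (fun q => offP f N q ∧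
      (q.2.1 ≤ q.1 ∧ q.2.2.1 ≤ q.1 ∧ q.2.2.2 ≤ q.1) ∧ f q.1 ≤ (Nat.gcd (f q.1) (f q.2.1))^3)).card := by
  set M := U.filter (fun q => offP f N q ∧ (q.2.1 ≤ q.1 ∧ q.2.2.1 ≤ q.1 ∧ q.2.2.2 ≤ q.1)) with hM
  set R := U.filter (fun q => offP f N q ∧
      (q.2.1 ≤ q.1 ∧ q.2.2.1 ≤ q.1 ∧ q.2.2.2 ≤ q.1) ∧ f q.1 ≤ (Nat.gcd (f q.1) (f q.2.1))^3) with hR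
  have s12 : ∀ x y z w, offP f N (x,y,z,w) → offP f N (y,x,z,w) := by
    rintro x y z w ⟨h1,h2,h3,h4,h5,h6,h7,h8,h9,h10,h11,h12,h13,h14,h15⟩
    refine ⟨h2,h1,h3,h4,h6,h5,h7,h8,?_,h10.symm,h13,h14,h11,h12,h15⟩
    simp only at h9 ⊢; convert h9 using 1; ring
  have s23 : ∀ x y z w, offP f N (x,y,z,w) → offP f N (x,z,y,w) := by
    rintro x y z w ⟨h1,h2,h3,h4,h5,h6,h7,h8,h9,h10,h11,h12,h13,h14,h15⟩
    refine ⟨h1,h3,h2,h4,h5,h7,h6,h8,?_,h11,h10,h12,h13.symm,h15,h14⟩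
    simp only at h9 ⊢; convert h9 using 1; ring
  have s34 : ∀ x y z w, offP f N (x,y,z,w) → offP f N (x,y,w,z) := by
    rintro x y z w ⟨h1,h2,h3,h4,h5,h6,h7,h8,h9,h10,h11,h12,h13,h14,h15⟩
    refine ⟨h1,h2,h4,h3,h5,h6,h8,h7,?_,h10,h12,h11,h14,h13,h15.symm⟩
    simp only at h9 ⊢; convert h9 using 1; ring
  have s13 : ∀ x y z w, offP f N (x,y,z,w) → offP f N (z,y,x,w) := fun x y z w h =>
    s12 _ _ _ _ (s23 _ _ _ _ (s12 _ _ _ _ h))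
  have s24 : ∀ x y z w, offP f N (x,y,z,w) → offP f N (x,w,z,y) := fun x y z w h =>
    s23 _ _ _ _ (s34 _ _ _ _ (s23 _ _ _ _ h))
  have s14 : ∀ x y z w, offP f N (x,y,z,w) → offP f N (w,y,z,x) := fun x y z w h =>
    s12 _ _ _ _ (s24 _ _ _ _ (s12 _ _ _ _ h))
  have c1 : U.filter (offP f N) ⊆ ((M ∪ M.image (fun q => (q.2.1, q.1, q.2.2.1, q.2.2.2))) ∪
      M.image (fun q => (q.2.2.1, q.2.1, q.1, q.2.2.2))) ∪ M.image (fun q => (q.2.2.2, q.2.1, q.2.2.1, q.1)) := by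
    rintro ⟨x, y, z, w⟩ hq
    have hq := (Finset.mem_filter.1 hq).2
    simp only [Finset.mem_union, Finset.mem_image, hM, Finset.mem_filter]
    by_cases h1 : y ≤ x ∧ z ≤ x ∧ w ≤ x
    · exact Or.inl (Or.inl (Or.inl ⟨hU _ hq, hq, h1⟩))
    by_cases h2 : x ≤ y ∧ z ≤ y ∧ w ≤ y
    · exact Or.inl (Or.inl (Or.inr ⟨(y,x,z,w), ⟨hU _ (s12 _ _ _ _ hq), s12 _ _ _ _ hq, h2⟩, rfl⟩))
    by_cases h3 : y ≤ z ∧ x ≤ z ∧ w ≤ z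
    · exact Or.inl (Or.inr ⟨(z,y,x,w), ⟨hU _ (s13 _ _ _ _ hq), s13 _ _ _ _ hq, h3⟩, rfl⟩)
    have h4 : y ≤ w ∧ z ≤ w ∧ x ≤ w := by omega
    exact Or.inr ⟨(w,y,z,x), ⟨hU _ (s14 _ _ _ _ hq), s14 _ _ _ _ hq, h4⟩, rfl⟩
  have c2 : M ⊆ (R ∪ R.image (fun q => (q.1, q.2.2.1, q.2.1, q.2.2.2))) ∪
      R.image (fun q => (q.1, q.2.2.2, q.2.2.1, q.2.1)) := by
    rintro ⟨x, y, z, w⟩ hq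
    obtain ⟨-, hq, hmax⟩ := Finset.mem_filter.1 hq
    simp only at hmax
    simp only [Finset.mem_union, Finset.mem_image, hR, Finset.mem_filter]
    by_cases h1 : f x ≤ (Nat.gcd (f x) (f y))^3
    · exact Or.inl (Or.inl ⟨hU _ hq, hq, hmax, h1⟩)
    by_cases h2 : f x ≤ (Nat.gcd (f x) (f z))^3
    · exact Or.inl (Or.inr ⟨(x,z,y,w), ⟨hU _ (s23 _ _ _ _ hq), s23 _ _ _ _ hq, ⟨hmax.2.1, hmax.1, hmax.2.2⟩, h2⟩, rfl⟩)
    by_cases h3 : f x ≤ (Nat.gcd (f x) (f w))^3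
    · exact Or.inr ⟨(x,w,z,y), ⟨hU _ (s24 _ _ _ _ hq), s24 _ _ _ _ hq, ⟨hmax.2.2, hmax.2.1, hmax.1⟩, h3⟩, rfl⟩
    exfalso
    obtain ⟨g1,g2,g3,g4,g5,g6,g7,g8,g9,-⟩ := hq
    simp only at g5 g9
    have hx : 0 < f x := Nat.pos_of_ne_zero g5.ne_zero
    have d1 : f x ∣ f y * f z * f w := sqf_dvd g5 (by convert g9 using 1; ring)
    have d2 : f x ∣ Nat.gcd (f x) (f y) * Nat.gcd (f x) (f z) * Nat.gcd (f x) (f w) := by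
      calc f x ∣ Nat.gcd (f x) (f y * f z * f w) := Nat.dvd_gcd dvd_rfl d1
        _ ∣ Nat.gcd (f x) (f y * f z) * Nat.gcd (f x) (f w) := Nat.gcd_mul_right_dvd_mul_gcd _ _ _
        _ ∣ _ := Nat.mul_dvd_mul_right (Nat.gcd_mul_right_dvd_mul_gcd _ _ _) _
    have p1 : 0 < Nat.gcd (f x) (f y) := Nat.gcd_pos_of_pos_left _ hx
    have p2 : 0 < Nat.gcd (f x) (f z) := Nat.gcd_pos_of_pos_left _ hx
    have p3 : 0 < Nat.gcd (f x) (f w) := Nat.gcd_pos_of_pos_left _ hx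
    have d3 := Nat.le_of_dvd (by positivity) d2
    generalize Nat.gcd (f x) (f y) = A at *
    generalize Nat.gcd (f x) (f z) = B at *
    generalize Nat.gcd (f x) (f w) = C at *
    push Not at h1 h2 h3
    have m1 : A ≤ max A (max B C) := le_max_left _ _
    have m2 : B ≤ max A (max B C) := by omega
    have m3 : C ≤ max A (max B C) := by omega
    have m4 : (max A (max B C))^3 < f x := by
      rcases max_choice A (max B C) with h | h
      · rw [h]; exact h1
      · rw [h]
        rcases max_choice B C with h | h <;> rw [h] <;> assumption
    have : A * B * C ≤ (max A (max B C))^3 := by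
      calc A * B * C ≤ max A (max B C) * max A (max B C) * max A (max B C) := by gcongr
        _ = _ := by ring
    omega
  have b2 : M.card ≤ 3 * R.card := by
    have := (Finset.card_le_card c2).trans ((Finset.card_union_le _ _).trans
      (add_le_add ((Finset.card_union_le _ _).trans (add_le_add le_rfl Finset.card_image_le)) Finset.card_image_le))
    omega
  have b1 : (U.filter (offP f N)).card ≤ 4 * M.card := by
    have := (Finset.card_le_card c1).trans ((Finset.card_union_le _ _).trans
      (add_le_add ((Finset.card_union_le _ _).trans
      (add_le_add ((Finset.card_union_le _ _).trans (add_le_add le_rfl Finset.card_image_le)) Finset.card_image_le)) Finset.card_image_le))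
    omega
  omega


open Classical in
theorem off_count (a : ℕ) (ha : 0 < a) (b c : ℤ) (f : ℕ → ℕ)
    (hf : ∀ n, 1 ≤ n → (f n : ℤ) = a * n^2 + b * n + c) (hD : b^2 - 4 * a * c ≠ 0)
    (hpos : ∀ n, 1 ≤ n → 1 ≤ f n) :
    ∃ C : ℝ, 0 ≤ C ∧ ∀ N : ℕ, 1 ≤ N →
    (((Finset.Icc 1 N ×ˢ Finset.Icc 1 N ×ˢ Finset.Icc 1 N ×ˢ Finset.Icc 1 N).filter (offP f N)).card : ℝ) ≤
      C * (N:ℝ)^((7:ℝ)/4) := by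
  set B : ℕ := a + b.natAbs + c.natAbs with hBdef
  have hB1 : 1 ≤ B := by omega
  have hB : ∀ n, 1 ≤ n → f n ≤ B * n^2 := by
    intro n hn
    have h1 := hf n hn
    have hn' : (1:ℤ) ≤ n := by exact_mod_cast hn
    have : (f n : ℤ) ≤ B * n^2 := by
      rw [h1, hBdef]
      push_cast
      have e1 : b * n ≤ |b| * n^2 := by
        have := le_abs_self b
        have := abs_nonneg b
        have : b * n ≤ |b| * n := by gcongr
        have : |b| * n ≤ |b| * n^2 := by gcongr; nlinarith
        linarith
      have e2 : c ≤ |c| * n^2 := by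
        have := le_abs_self c
        have := abs_nonneg c
        have : |c| * 1 ≤ |c| * n^2 := by gcongr; nlinarith
        linarith
      nlinarith
    exact_mod_cast this
  set L : ℕ := 2 * (b.natAbs + c.natAbs) with hL
  set K : ℝ := 2 + (L:ℝ)^2 with hK
  have hK1 : 1 ≤ K := by rw [hK]; nlinarith [sq_nonneg (L:ℝ)]
  have hK2 : ∀ n : ℕ, 1 ≤ n → (n:ℝ)^2 ≤ K * f n := by
    intro n hn
    have hp : (1:ℝ) ≤ f n := by exact_mod_cast hpos n hn
    rcases le_or_gt n L with h | h
    · have : (n:ℝ)^2 ≤ (L:ℝ)^2 := by gcongr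
      rw [hK]; nlinarith [sq_nonneg (L:ℝ)]
    · have h1 := hf n hn
      have hn' : (1:ℤ) ≤ n := by exact_mod_cast hn
      have h' : (L:ℤ) < n := by exact_mod_cast h
      have ha' : (1:ℤ) ≤ a := by exact_mod_cast ha
      have : (n:ℤ)^2 ≤ 2 * f n := by
        rw [h1]
        rw [hL] at h'
        push_cast at h'
        have e1 : -(|b| * n) ≤ b * n := by
          have := neg_abs_le b
          nlinarith
        have e2 : -(|c| * n) ≤ c := by
          have := neg_abs_le c
          have := abs_nonneg c
          nlinarith
        have e3 : (n:ℤ)^2 ≤ a * n^2 := by nlinarith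
        nlinarith
      have : (n:ℝ)^2 ≤ 2 * f n := by exact_mod_cast this
      rw [hK]; nlinarith [sq_nonneg (L:ℝ)]
  obtain ⟨C0, hC0, hτ⟩ := tau_bound (1/400) (by norm_num)
  set T : ℝ := C0 * ((B:ℝ)^2)^((1:ℝ)/400) with hTdef
  have hB1' : (1:ℝ) ≤ B := by exact_mod_cast hB1
  have hT1 : 1 ≤ T := by
    have : 1 ≤ ((B:ℝ)^2)^((1:ℝ)/400) := Real.one_le_rpow (by nlinarith) (by norm_num)
    nlinarith
  have hT : ∀ N m : ℕ, 1 ≤ N → Squarefree m → m ≤ (B * N^2)^2 → (m.divisors.card : ℝ) ≤ T * (N:ℝ)^((1:ℝ)/100) := by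
    intro N m hN hm hmB
    have hmB' : (m:ℝ) ≤ (B:ℝ)^2 * (N:ℝ)^4 := by
      have : (m:ℝ) ≤ ((B * N^2)^2 : ℕ) := by exact_mod_cast hmB
      refine this.trans (le_of_eq ?_)
      push_cast; ring
    calc (m.divisors.card : ℝ) ≤ C0 * (m:ℝ)^((1:ℝ)/400) := hτ m hm
      _ ≤ C0 * ((B:ℝ)^2 * (N:ℝ)^4)^((1:ℝ)/400) := by gcongr
      _ = C0 * (((B:ℝ)^2)^((1:ℝ)/400) * ((N:ℝ)^4)^((1:ℝ)/400)) := by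
          rw [Real.mul_rpow (by positivity) (by positivity)]
      _ = _ := by
          rw [← Real.rpow_natCast (N:ℝ) 4, ← Real.rpow_mul (by positivity), hTdef]
          norm_num; ring
  obtain ⟨C, hC0', hC⟩ := pair_count a ha b c f hf hD B T hT1 hT
  refine ⟨12 * (T^3 * (a * K + 1) * C), by positivity, ?_⟩
  intro N hN
  have hN1 : (1:ℝ) ≤ N := by exact_mod_cast hN
  have hN0 : (0:ℝ) < N := by linarith
  have h1 := off_sym f N (Finset.Icc 1 N ×ˢ Finset.Icc 1 N ×ˢ Finset.Icc 1 N ×ˢ Finset.Icc 1 N) (by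
    intro q hq
    simp only [Finset.mem_product, Finset.mem_Icc]
    exact ⟨hq.1, hq.2.1, hq.2.2.1, hq.2.2.2.1⟩)
  set t : ℝ := T * (N:ℝ)^((1:ℝ)/100) with ht
  set r : ℝ := C * (N:ℝ)^((1:ℝ)/3 + 1/100) with hr
  have ht0 : 0 ≤ t := by positivity
  have hr0 : 0 ≤ r := by positivity
  have h2 := pr_count a ha b c f hf N B hN hB K hK1 hK2 t (fun m => hT N m hN)
  have h3 := comp_count f hpos N B hB t r hr0 (fun m => hT N m hN) (fun u v => hC N hN u v)
  set R := (Finset.Icc 1 N ×ˢ Finset.Icc 1 N ×ˢ Finset.Icc 1 N ×ˢ Finset.Icc 1 N).filter (fun q => offP f N q ∧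
      (q.2.1 ≤ q.1 ∧ q.2.2.1 ≤ q.1 ∧ q.2.2.2 ≤ q.1) ∧ f q.1 ≤ (Nat.gcd (f q.1) (f q.2.1))^3) with hR
  have h4 : (R.card : ℝ) ≤ (N * (t * (t * (a * K * (N:ℝ)^((1:ℝ)/3) + 1)))) * (t * r) := by
    refine (card_le_real R _ (fun q => (q.1, q.2.1)) (t * r) ?_ ?_).trans (mul_le_mul_of_nonneg_right h2 (by positivity))
    · intro q hq
      simp only [hR, Finset.mem_filter, Finset.mem_product, Finset.mem_Icc] at hq ⊢
      obtain ⟨-, ⟨g1,g2,g3,g4,g5,g6,g7,g8,g9,g10⟩, ⟨m1, m2, m3⟩, hg⟩ := hq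
      exact ⟨⟨g1, g2⟩, m1, g5, hg⟩
    · rintro ⟨n1, n2⟩ -
      rcases (R.filter (fun q => (q.1, q.2.1) = (n1, n2))).eq_empty_or_nonempty with he | ⟨q0, hq0⟩
      · rw [he]; simp only [Finset.card_empty, Nat.cast_zero]; positivity
      · have hq1 := hq0
        simp only [hR, Finset.mem_filter, Prod.mk.injEq] at hq1
        obtain ⟨⟨-, ⟨g1,g2,g3,g4,g5,g6,g7,g8,g9,g10,-⟩, -⟩, rfl, rfl⟩ := hq1
        refine le_trans ?_ (h3 q0.1 q0.2.1 g1.1 g1.2 g2.1 g2.2 g5 g6 g10)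
        norm_cast
        apply Finset.card_le_card_of_injOn (fun q => q.2.2)
        · intro q hq
          simp only [hR, Finset.coe_filter, Finset.mem_filter, Set.mem_ofPred_eq, Prod.mk.injEq] at hq
          obtain ⟨⟨-, ⟨g1,g2,g3,g4,g5,g6,g7,g8,g9,g10⟩, -⟩, e1, e2⟩ := hq
          simp only [Finset.coe_filter, Finset.mem_product, Finset.mem_Icc, Set.mem_ofPred_eq]
          rw [e1, e2] at g9
          exact ⟨⟨g3, g4⟩, g7, g8, g9⟩
        · intro q hq q' hq' hqq
          simp only [Finset.coe_filter, Set.mem_ofPred_eq, Prod.mk.injEq] at hq hq'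
          exact Prod.ext (by rw [hq.2.1, hq'.2.1]) (Prod.ext (by rw [hq.2.2, hq'.2.2]) hqq)
  have h1' := (Nat.cast_le (α := ℝ)).2 h1
  push_cast at h1'
  have h5 : (a:ℝ) * K * (N:ℝ)^((1:ℝ)/3) + 1 ≤ (a * K + 1) * (N:ℝ)^((1:ℝ)/3) := by
    have : (1:ℝ) ≤ (N:ℝ)^((1:ℝ)/3) := Real.one_le_rpow hN1 (by norm_num)
    linarith
  have h6 : (N:ℝ) * (N:ℝ)^((1:ℝ)/100) * (N:ℝ)^((1:ℝ)/100) * (N:ℝ)^((1:ℝ)/100) * (N:ℝ)^((1:ℝ)/3) * (N:ℝ)^((1:ℝ)/3 + 1/100) ≤ (N:ℝ)^((7:ℝ)/4) := by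
    have e : (N:ℝ) * (N:ℝ)^((1:ℝ)/100) * (N:ℝ)^((1:ℝ)/100) * (N:ℝ)^((1:ℝ)/100) * (N:ℝ)^((1:ℝ)/3) * (N:ℝ)^((1:ℝ)/3 + 1/100) =
        (N:ℝ)^((1:ℝ) + 1/100 + 1/100 + 1/100 + 1/3 + (1/3 + 1/100)) := by
      simp only [Real.rpow_add hN0, Real.rpow_one]
    rw [e]
    exact Real.rpow_le_rpow_of_exponent_le hN1 (by norm_num)
  have hK0 : 0 ≤ K := by linarith
  calc _ ≤ 12 * (R.card : ℝ) := h1'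
    _ ≤ 12 * ((N * (t * (t * ((a * K + 1) * (N:ℝ)^((1:ℝ)/3))))) * (t * r)) := by
        gcongr
        exact h4.trans (by gcongr)
    _ = 12 * (T^3 * (a * K + 1) * C) * ((N:ℝ) * (N:ℝ)^((1:ℝ)/100) * (N:ℝ)^((1:ℝ)/100) * (N:ℝ)^((1:ℝ)/100) * (N:ℝ)^((1:ℝ)/3) * (N:ℝ)^((1:ℝ)/3 + 1/100)) := by
        rw [ht, hr]; ring
    _ ≤ _ := by gcongr

theorem sq_cancel {x y w : ℕ} (hx : 0 < x) (hy : Squarefree y) (hw : Squarefree w)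
    (h : IsSquare (x * x * (y * w))) : y = w := by
  apply sqf_eq hy hw
  obtain ⟨z, hz⟩ := h
  have hd : x^2 ∣ z^2 := ⟨y * w, by rw [sq z, ← hz]; ring⟩
  rw [Nat.pow_dvd_pow_iff (by norm_num)] at hd
  obtain ⟨s, rfl⟩ := hd
  refine ⟨s, Nat.eq_of_mul_eq_mul_left (by positivity : 0 < x * x) ?_⟩
  rw [hz]; ring

def totP (f : ℕ → ℕ) (q : ℕ × ℕ × ℕ × ℕ) : Prop :=
  Squarefree (f q.1) ∧ Squarefree (f q.2.1) ∧ Squarefree (f q.2.2.1) ∧ Squarefree (f q.2.2.2) ∧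
  IsSquare (f q.1 * f q.2.1 * f q.2.2.1 * f q.2.2.2)

open Classical in
theorem diag_count (a : ℕ) (ha : 0 < a) (b c : ℤ) (f : ℕ → ℕ)
    (hf : ∀ n, 1 ≤ n → (f n : ℤ) = a * n^2 + b * n + c) (N s t o : ℕ)
    (hs : s = ((Finset.Icc 1 N).filter (fun n => Squarefree (f n))).card)
    (ht : t = ((Finset.Icc 1 N ×ˢ Finset.Icc 1 N ×ˢ Finset.Icc 1 N ×ˢ Finset.Icc 1 N).filter (totP f)).card)
    (ho : o = ((Finset.Icc 1 N ×ˢ Finset.Icc 1 N ×ˢ Finset.Icc 1 N ×ˢ Finset.Icc 1 N).filter (offP f N)).card) :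
    3 * s^2 ≤ t + 2 * s ∧ t ≤ o + 3 * (s + b.natAbs)^2 := by
  set U := Finset.Icc 1 N ×ˢ Finset.Icc 1 N ×ˢ Finset.Icc 1 N ×ˢ Finset.Icc 1 N with hU
  set S := (Finset.Icc 1 N).filter (fun n => Squarefree (f n)) with hS
  have hmS : ∀ n, n ∈ S ↔ (1 ≤ n ∧ n ≤ N) ∧ Squarefree (f n) := by intro n; simp [hS]
  have hmU : ∀ x y z w, (x,y,z,w) ∈ U ↔ (1 ≤ x ∧ x ≤ N) ∧ (1 ≤ y ∧ y ≤ N) ∧ (1 ≤ z ∧ z ≤ N) ∧ (1 ≤ w ∧ w ≤ N) := by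
    intro x y z w; simp [hU]
  constructor
  · set A1 := (S ×ˢ S).image (fun p : ℕ × ℕ => (p.1, p.1, p.2, p.2)) with hA1
    set A2 := S.offDiag.image (fun p : ℕ × ℕ => (p.1, p.2, p.1, p.2)) with hA2
    set A3 := S.offDiag.image (fun p : ℕ × ℕ => (p.1, p.2, p.2, p.1)) with hA3
    have c1 : A1.card = s * s := by
      rw [hA1, Finset.card_image_of_injective, Finset.card_product, hs]
      rintro ⟨x, y⟩ ⟨z, w⟩ h
      simp only [Prod.mk.injEq] at h ⊢; tauto
    have c2 : A2.card = s * s - s := by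
      rw [hA2, Finset.card_image_of_injective, Finset.offDiag_card, hs]
      rintro ⟨x, y⟩ ⟨z, w⟩ h
      simp only [Prod.mk.injEq] at h ⊢; tauto
    have c3 : A3.card = s * s - s := by
      rw [hA3, Finset.card_image_of_injective, Finset.offDiag_card, hs]
      rintro ⟨x, y⟩ ⟨z, w⟩ h
      simp only [Prod.mk.injEq] at h ⊢; tauto
    have d12 : Disjoint A1 A2 := by
      rw [Finset.disjoint_left]
      rintro ⟨x, y, z, w⟩ h1 h2
      simp only [hA1, hA2, Finset.mem_image, Finset.mem_offDiag, Finset.mem_product, Prod.mk.injEq] at h1 h2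
      obtain ⟨p, -, rfl, rfl, rfl, rfl⟩ := h1
      obtain ⟨q, ⟨-, -, h⟩, h1, h2, -, -⟩ := h2
      exact h (h1.trans h2.symm)
    have d13 : Disjoint (A1 ∪ A2) A3 := by
      rw [Finset.disjoint_left]
      rintro ⟨x, y, z, w⟩ h1 h2
      simp only [hA1, hA2, hA3, Finset.mem_union, Finset.mem_image, Finset.mem_offDiag, Finset.mem_product, Prod.mk.injEq] at h1 h2
      obtain ⟨q, ⟨-, -, h⟩, rfl, rfl, h3, h4⟩ := h2
      rcases h1 with ⟨p, -, h5, h6, -, -⟩ | ⟨p, -, h5, h6, h7, h8⟩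
      · exact h (h5.symm.trans h6)
      · exact h (by rw [h4, ← h8, h6])
    have hsub : (A1 ∪ A2) ∪ A3 ⊆ U.filter (totP f) := by
      rintro ⟨x, y, z, w⟩ h
      simp only [hA1, hA2, hA3, Finset.mem_union, Finset.mem_image, Finset.mem_offDiag, Finset.mem_product, Prod.mk.injEq, hmS] at h
      rw [Finset.mem_filter, hmU]
      rcases h with (⟨⟨p, q⟩, ⟨h1, h2⟩, rfl, rfl, rfl, rfl⟩ | ⟨⟨p, q⟩, ⟨h1, h2, -⟩, rfl, rfl, rfl, rfl⟩) | ⟨⟨p, q⟩, ⟨h1, h2, -⟩, rfl, rfl, rfl, rfl⟩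
      · exact ⟨⟨h1.1, h1.1, h2.1, h2.1⟩, h1.2, h1.2, h2.2, h2.2, ⟨f p * f q, by simp only; ring⟩⟩
      · exact ⟨⟨h1.1, h2.1, h1.1, h2.1⟩, h1.2, h2.2, h1.2, h2.2, ⟨f p * f q, by simp only; ring⟩⟩
      · exact ⟨⟨h1.1, h2.1, h2.1, h1.1⟩, h1.2, h2.2, h2.2, h1.2, ⟨f p * f q, by simp only; ring⟩⟩
    have := Finset.card_le_card hsub
    rw [Finset.card_union_of_disjoint d13, Finset.card_union_of_disjoint d12, c1, c2, c3, ← ht] at this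
    have e : s^2 = s * s := sq s
    omega
  · set E := (S ×ˢ S).filter (fun p => f p.1 = f p.2) with hE
    have hEc : E.card ≤ s + b.natAbs := by
      have hsub : E ⊆ S.image (fun n => (n, n)) ∪ E.filter (fun p => p.1 ≠ p.2) := by
        rintro ⟨x, y⟩ h
        have h' := h
        rw [hE, Finset.mem_filter, Finset.mem_product] at h'
        simp only [Finset.mem_union, Finset.mem_image, Finset.mem_filter, Prod.mk.injEq]
        by_cases hxy : x = y
        · left; exact ⟨x, h'.1.1, rfl, hxy⟩
        · right; exact ⟨h, hxy⟩
      refine (Finset.card_le_card hsub).trans ((Finset.card_union_le _ _).trans (add_le_add ?_ ?_))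
      · rw [hs]; exact Finset.card_image_le
      · calc _ ≤ (Finset.Icc 1 b.natAbs).card := by
              apply Finset.card_le_card_of_injOn (fun p => p.1)
              · rintro ⟨x, y⟩ h
                simp only [hE, Finset.coe_filter, Finset.mem_filter, Finset.mem_product, hmS, Set.mem_ofPred_eq] at h
                simp only [Finset.coe_Icc, Set.mem_Icc]
                refine ⟨h.1.1.1.1.1, ?_⟩
                by_contra hlt
                push Not at hlt
                exact h.2 (f_inj a ha b c f hf x y h.1.1.1.1.1 h.1.1.2.1.1 h.1.2 (Or.inl hlt))
              · have key : ∀ p ∈ E.filter (fun p => p.1 ≠ p.2), (a:ℤ) * (p.1 + p.2) + b = 0 := by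
                  rintro ⟨x, y⟩ h
                  simp only [hE, Finset.mem_filter, Finset.mem_product, hmS] at h
                  have h1 : (f x : ℤ) = f y := by rw [h.1.2]
                  rw [hf x h.1.1.1.1.1, hf y h.1.1.2.1.1] at h1
                  have h2 : ((x:ℤ) - y) * (a * (x + y) + b) = 0 := by linear_combination h1
                  rcases mul_eq_zero.1 h2 with h3 | h3
                  · exact absurd (by have : (x:ℤ) = y := by linarith
                                     exact_mod_cast this) h.2
                  · exact h3
                intro p hp q hq hpq
                have h1 := key p hp
                have h2 := key q hq
                simp only at hpq
                rw [hpq] at h1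
                have h3 : (a:ℤ) * p.2 = a * q.2 := by linear_combination h1 - h2
                have ha' : (a:ℤ) ≠ 0 := by exact_mod_cast ha.ne'
                have h4 := mul_left_cancel₀ ha' h3
                exact Prod.ext hpq (by exact_mod_cast h4)
          _ = _ := by simp
    set Q := U.filter (totP f) with hQ
    have hdc : ∀ (D : Finset (ℕ × ℕ × ℕ × ℕ)) (φ : ℕ × ℕ × ℕ × ℕ → (ℕ × ℕ) × (ℕ × ℕ)), Function.Injective φ →
       (∀ q ∈ D, φ q ∈ E ×ˢ E) → D.card ≤ (s + b.natAbs)^2 := by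
      intro D φ hφ hD
      calc D.card ≤ (E ×ˢ E).card := Finset.card_le_card_of_injOn φ hD hφ.injOn
        _ = E.card * E.card := Finset.card_product _ _
        _ ≤ _ := by rw [sq]; gcongr
    have hmE : ∀ x y, (x, y) ∈ E ↔ (x ∈ S ∧ y ∈ S) ∧ f x = f y := by
      intro x y; rw [hE, Finset.mem_filter, Finset.mem_product]
    have hmQ : ∀ q ∈ Q, q.1 ∈ S ∧ q.2.1 ∈ S ∧ q.2.2.1 ∈ S ∧ q.2.2.2 ∈ S := by
      rintro ⟨x, y, z, w⟩ h
      rw [hQ, Finset.mem_filter, hmU] at h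
      obtain ⟨⟨h1, h2, h3, h4⟩, h5, h6, h7, h8, -⟩ := h
      simp only [hmS]
      exact ⟨⟨h1, h5⟩, ⟨h2, h6⟩, ⟨h3, h7⟩, h4, h8⟩
    have b1 := hdc (Q.filter (fun q => f q.1 = f q.2.1 ∧ f q.2.2.1 = f q.2.2.2))
      (fun q => ((q.1, q.2.1), (q.2.2.1, q.2.2.2))) (by
        rintro ⟨x, y, z, w⟩ ⟨x', y', z', w'⟩ h
        simp only [Prod.mk.injEq] at h ⊢; tauto) (by
        intro q hq
        rw [Finset.mem_filter] at hq
        rw [Finset.mem_product, hmE, hmE]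
        have := hmQ q hq.1
        tauto)
    have b2 := hdc (Q.filter (fun q => f q.1 = f q.2.2.1 ∧ f q.2.1 = f q.2.2.2))
      (fun q => ((q.1, q.2.2.1), (q.2.1, q.2.2.2))) (by
        rintro ⟨x, y, z, w⟩ ⟨x', y', z', w'⟩ h
        simp only [Prod.mk.injEq] at h ⊢; tauto) (by
        intro q hq
        rw [Finset.mem_filter] at hq
        rw [Finset.mem_product, hmE, hmE]
        have := hmQ q hq.1
        tauto)
    have b3 := hdc (Q.filter (fun q => f q.1 = f q.2.2.2 ∧ f q.2.1 = f q.2.2.1))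
      (fun q => ((q.1, q.2.2.2), (q.2.1, q.2.2.1))) (by
        rintro ⟨x, y, z, w⟩ ⟨x', y', z', w'⟩ h
        simp only [Prod.mk.injEq] at h ⊢; tauto) (by
        intro q hq
        rw [Finset.mem_filter] at hq
        rw [Finset.mem_product, hmE, hmE]
        have := hmQ q hq.1
        tauto)
    have hsub : Q ⊆ ((U.filter (offP f N) ∪ Q.filter (fun q => f q.1 = f q.2.1 ∧ f q.2.2.1 = f q.2.2.2)) ∪
       Q.filter (fun q => f q.1 = f q.2.2.1 ∧ f q.2.1 = f q.2.2.2)) ∪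
       Q.filter (fun q => f q.1 = f q.2.2.2 ∧ f q.2.1 = f q.2.2.1) := by
      rintro ⟨x, y, z, w⟩ h
      have h' := h
      rw [hQ, Finset.mem_filter, hmU] at h'
      obtain ⟨⟨h1, h2, h3, h4⟩, h5, h6, h7, h8, h9⟩ := h'
      simp only at h5 h6 h7 h8 h9
      have p1 := Nat.pos_of_ne_zero h5.ne_zero
      have p2 := Nat.pos_of_ne_zero h6.ne_zero
      have p3 := Nat.pos_of_ne_zero h7.ne_zero
      have p4 := Nat.pos_of_ne_zero h8.ne_zero
      have k12 : f x = f y → f z = f w := fun e => sq_cancel p1 h7 h8 (by convert h9 using 1; rw [← e]; ring)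
      have k34 : f z = f w → f x = f y := fun e => sq_cancel p3 h5 h6 (by convert h9 using 1; rw [← e]; ring)
      have k13 : f x = f z → f y = f w := fun e => sq_cancel p1 h6 h8 (by convert h9 using 1; rw [← e]; ring)
      have k24 : f y = f w → f x = f z := fun e => sq_cancel p2 h5 h7 (by convert h9 using 1; rw [← e]; ring)
      have k14 : f x = f w → f y = f z := fun e => sq_cancel p1 h6 h7 (by convert h9 using 1; rw [← e]; ring)
      have k23 : f y = f z → f x = f w := fun e => sq_cancel p2 h5 h8 (by convert h9 using 1; rw [← e]; ring)
      simp only [Finset.mem_union, Finset.mem_filter]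
      by_cases e12 : f x = f y
      · exact Or.inl (Or.inl (Or.inr ⟨h, e12, k12 e12⟩))
      by_cases e13 : f x = f z
      · exact Or.inl (Or.inr ⟨h, e13, k13 e13⟩)
      by_cases e14 : f x = f w
      · exact Or.inr ⟨h, e14, k14 e14⟩
      refine Or.inl (Or.inl (Or.inl ⟨(hmU _ _ _ _).2 ⟨h1,h2,h3,h4⟩, h1, h2, h3, h4, h5, h6, h7, h8, h9, e12, e13, e14,
        fun e => e14 (k23 e), fun e => e13 (k24 e), fun e => e12 (k34 e)⟩))
    have := (Finset.card_le_card hsub).trans ((Finset.card_union_le _ _).trans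
      (add_le_add ((Finset.card_union_le _ _).trans
      (add_le_add (Finset.card_union_le _ _) le_rfl)) le_rfl))
    rw [← ho, ← ht] at this
    omega


theorem disc_ne (P : Polynomial ℤ) (hP : P.natDegree = 2 ∧ Irreducible P) :
    (P.coeff 1)^2 - 4 * P.coeff 2 * P.coeff 0 ≠ 0 := by
  intro h
  have h2 : P.coeff 2 ≠ 0 := by
    have : P.leadingCoeff ≠ 0 := by simpa using hP.2.ne_zero
    rwa [Polynomial.leadingCoeff, hP.1] at this
  have hprim : P.IsPrimitive := hP.2.isPrimitive (by rw [hP.1]; norm_num)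
  have hirr := (Polynomial.IsPrimitive.Int.irreducible_iff_irreducible_map_cast hprim).1 hP.2
  have hdeg : (P.map (Int.castRingHom ℚ)).natDegree = 2 := by
    rw [Polynomial.natDegree_map_eq_of_injective (RingHom.injective_int _), hP.1]
  have hroot : (P.map (Int.castRingHom ℚ)).IsRoot (-(P.coeff 1 : ℚ) / (2 * P.coeff 2)) := by
    rw [Polynomial.IsRoot, Polynomial.eval_eq_sum_range, hdeg]
    simp only [Finset.sum_range_succ, Finset.sum_range_zero, Polynomial.coeff_map, eq_intCast]
    have h2' : (P.coeff 2 : ℚ) ≠ 0 := by exact_mod_cast h2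
    have h' : (P.coeff 1 : ℚ)^2 - 4 * P.coeff 2 * P.coeff 0 = 0 := by exact_mod_cast h
    field_simp
    linear_combination (-1) * h'
  have := Polynomial.degree_eq_one_of_irreducible_of_root hirr hroot
  have h3 : (P.map (Int.castRingHom ℚ)).natDegree = 1 :=
    Polynomial.natDegree_eq_of_degree_eq_some (by simpa using this)
  rw [hdeg] at h3
  norm_num at h3

open Classical in
theorem fourth_moment_count_irreducible_quadratic
    (P : Polynomial ℤ)
    (hP : P.natDegree = 2 ∧ Irreducible P)
    (hadm : ¬ ∃ p : ℕ, p.Prime ∧ ∀ n : ℕ, 0 < n → (p : ℤ)^2 ∣ P.eval (n : ℤ))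
    (hpos : ∀ n : ℕ, 0 < n → 1 ≤ P.eval (n : ℤ))
    (κ : ℝ) (hκ : 0 < κ)
    (hdensity : ∃ C : ℝ, ∀ N : ℕ, 1 ≤ N →
      |({n : ℕ | 1 ≤ n ∧ n ≤ N ∧ Squarefree (P.eval (n : ℤ))}.ncard : ℝ) - κ * N| ≤
        C * (N : ℝ) ^ ((3:ℝ)/4)) :
    ∀ ε : ℝ, 0 < ε → ∃ C : ℝ, ∀ N : ℕ, 1 ≤ N →
      |({q : ℕ × ℕ × ℕ × ℕ |
          (1 ≤ q.1 ∧ q.1 ≤ N) ∧ (1 ≤ q.2.1 ∧ q.2.1 ≤ N) ∧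
          (1 ≤ q.2.2.1 ∧ q.2.2.1 ≤ N) ∧ (1 ≤ q.2.2.2 ∧ q.2.2.2 ≤ N) ∧
          Squarefree (P.eval (q.1 : ℤ)) ∧ Squarefree (P.eval (q.2.1 : ℤ)) ∧
          Squarefree (P.eval (q.2.2.1 : ℤ)) ∧ Squarefree (P.eval (q.2.2.2 : ℤ)) ∧
          IsSquare (P.eval (q.1 : ℤ) * P.eval (q.2.1 : ℤ) *
            P.eval (q.2.2.1 : ℤ) * P.eval (q.2.2.2 : ℤ))}.ncard : ℝ) -
        3 * κ^2 * (N : ℝ)^2| ≤ C * (N : ℝ) ^ ((7:ℝ)/4 + ε) := by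
  intro ε hε
  have hD := disc_ne P hP
  have h2 : P.coeff 2 ≠ 0 := by
    have : P.leadingCoeff ≠ 0 := by simpa using hP.2.ne_zero
    rwa [Polynomial.leadingCoeff, hP.1] at this
  have heval : ∀ n : ℤ, P.eval n = P.coeff 2 * n^2 + P.coeff 1 * n + P.coeff 0 := by
    intro n
    rw [Polynomial.eval_eq_sum_range, hP.1]
    simp only [Finset.sum_range_succ, Finset.sum_range_zero]
    ring
  generalize P.coeff 2 = a' at *
  generalize P.coeff 1 = b at *
  generalize P.coeff 0 = c at *
  have ha' : 0 < a' := by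
    by_contra hneg
    have hneg' : a' ≤ -1 := by omega
    have h1 := hpos (b.natAbs + c.natAbs + 1) (by omega)
    rw [heval] at h1
    push_cast at h1
    have k1 := le_abs_self b
    have k2 := le_abs_self c
    have k3 := abs_nonneg b
    have k4 := abs_nonneg c
    set n : ℤ := |b| + |c| + 1 with hn
    have hn1 : 1 ≤ n := by omega
    have e1 : a' * n^2 ≤ -n^2 := by nlinarith [sq_nonneg n]
    have e2 : b * n ≤ |b| * n := by gcongr
    have e3 : c ≤ |c| * n := by nlinarith
    have e4 : n^2 = |b| * n + |c| * n + n := by rw [sq]; nth_rewrite 1 [hn]; ring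
    linarith
  obtain ⟨a, rfl⟩ := Int.eq_ofNat_of_zero_le ha'.le
  have ha : 0 < a := by exact_mod_cast ha'
  set f : ℕ → ℕ := fun n => (P.eval (n:ℤ)).toNat with hfdef
  have hfe : ∀ n : ℕ, 1 ≤ n → P.eval (n:ℤ) = (f n : ℤ) := by
    intro n hn
    have := hpos n hn
    simp only [hfdef]
    omega
  have hf : ∀ n, 1 ≤ n → (f n : ℤ) = a * n^2 + b * n + c := by
    intro n hn; rw [← hfe n hn, heval]
  have hfpos : ∀ n, 1 ≤ n → 1 ≤ f n := by
    intro n hn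
    have h1 := hpos n hn
    rw [hfe n hn] at h1
    exact_mod_cast h1
  obtain ⟨C1, hC1, hoff⟩ := off_count a ha b c f hf hD hfpos
  obtain ⟨C2, hdens⟩ := hdensity
  set β := b.natAbs
  refine ⟨C1 + (6 * β + 3 * β^2 + 2) + 3 * (|C2| * (1 + κ)), fun N hN => ?_⟩
  have hN1 : (1:ℝ) ≤ N := by exact_mod_cast hN
  have hN0 : (0:ℝ) < N := by linarith
  have hdN := hdens N hN
  set S := (Finset.Icc 1 N).filter (fun n => Squarefree (f n)) with hS
  set U := Finset.Icc 1 N ×ˢ Finset.Icc 1 N ×ˢ Finset.Icc 1 N ×ˢ Finset.Icc 1 N with hU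
  have hs1 : {n : ℕ | 1 ≤ n ∧ n ≤ N ∧ Squarefree (P.eval (n : ℤ))} = (S : Set ℕ) := by
    ext n
    simp only [Set.mem_ofPred_eq, hS, Finset.coe_filter, Finset.mem_Icc]
    constructor
    · rintro ⟨h1, h2, h3⟩
      rw [hfe n h1, Int.squarefree_natCast] at h3
      exact ⟨⟨h1, h2⟩, h3⟩
    · rintro ⟨⟨h1, h2⟩, h3⟩
      rw [hfe n h1, Int.squarefree_natCast]
      exact ⟨h1, h2, h3⟩
  have hs2 : {q : ℕ × ℕ × ℕ × ℕ |
          (1 ≤ q.1 ∧ q.1 ≤ N) ∧ (1 ≤ q.2.1 ∧ q.2.1 ≤ N) ∧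
          (1 ≤ q.2.2.1 ∧ q.2.2.1 ≤ N) ∧ (1 ≤ q.2.2.2 ∧ q.2.2.2 ≤ N) ∧
          Squarefree (P.eval (q.1 : ℤ)) ∧ Squarefree (P.eval (q.2.1 : ℤ)) ∧
          Squarefree (P.eval (q.2.2.1 : ℤ)) ∧ Squarefree (P.eval (q.2.2.2 : ℤ)) ∧
          IsSquare (P.eval (q.1 : ℤ) * P.eval (q.2.1 : ℤ) *
            P.eval (q.2.2.1 : ℤ) * P.eval (q.2.2.2 : ℤ))} = ((U.filter (totP f) : Finset _) : Set (ℕ × ℕ × ℕ × ℕ)) := by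
    ext ⟨x, y, z, w⟩
    simp only [Set.mem_ofPred_eq, hU, Finset.coe_filter, Finset.mem_product, Finset.mem_Icc, totP]
    have key : ∀ x y z w : ℕ, IsSquare ((x:ℤ) * y * z * w) ↔ IsSquare (x * y * z * w) := by
      intro x y z w
      rw [← Int.isSquare_natCast_iff]; push_cast; rfl
    constructor
    · rintro ⟨h1, h2, h3, h4, h5⟩
      rw [hfe x h1.1, hfe y h2.1, hfe z h3.1, hfe w h4.1, key] at h5
      simp only [Int.squarefree_natCast] at h5
      exact ⟨⟨h1, h2, h3, h4⟩, h5⟩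
    · rintro ⟨⟨h1, h2, h3, h4⟩, h5⟩
      rw [hfe x h1.1, hfe y h2.1, hfe z h3.1, hfe w h4.1, key]
      simp only [Int.squarefree_natCast]
      exact ⟨h1, h2, h3, h4, h5⟩
  rw [hs1, Set.ncard_coe_finset] at hdN
  rw [hs2, Set.ncard_coe_finset]
  obtain ⟨d1, d2⟩ := diag_count a ha b c f hf N _ _ _ rfl rfl rfl
  have hoN := hoff N hN
  have hsN : S.card ≤ N := by
    calc S.card ≤ (Finset.Icc 1 N).card := Finset.card_filter_le _ _
      _ = N := by simp
  have d1' := (Nat.cast_le (α := ℝ)).2 d1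
  have d2' := (Nat.cast_le (α := ℝ)).2 d2
  rw [← hS] at d1' d2'
  have hsN' : (S.card : ℝ) ≤ N := by exact_mod_cast hsN
  have hs0 : (0:ℝ) ≤ S.card := by positivity
  have hβ0 : (0:ℝ) ≤ β := by positivity
  push_cast only [Nat.cast_add, Nat.cast_mul, Nat.cast_pow, Nat.cast_ofNat] at d1' d2'
  generalize ((U.filter (totP f)).card : ℝ) = t at *
  generalize ((U.filter (offP f N)).card : ℝ) = o at *
  generalize (S.card : ℝ) = s at *
  change t ≤ o + 3 * (s + (β:ℝ))^2 at d2'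
  generalize (β : ℝ) = B at *
  have hp74 : (N:ℝ)^((7:ℝ)/4) ≤ (N:ℝ)^((7:ℝ)/4 + ε) :=
    Real.rpow_le_rpow_of_exponent_le hN1 (by linarith)
  have hp1 : (N:ℝ) ≤ (N:ℝ)^((7:ℝ)/4) := by
    conv_lhs => rw [← Real.rpow_one (N:ℝ)]
    exact Real.rpow_le_rpow_of_exponent_le hN1 (by norm_num)
  have hp2 : (N:ℝ)^((3:ℝ)/4) * N = (N:ℝ)^((7:ℝ)/4) := by
    conv_lhs => rw [← Real.rpow_one (N:ℝ), ← Real.rpow_mul hN0.le, ← Real.rpow_add hN0]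
    norm_num
  have q1 : |t - 3 * s^2| ≤ (C1 + (6 * B + 3 * B^2 + 2)) * (N:ℝ)^((7:ℝ)/4) := by
    have e1 : (6 * B + 3 * B^2 + 2) * N ≤ (6 * B + 3 * B^2 + 2) * (N:ℝ)^((7:ℝ)/4) := by gcongr
    have e2 : B * s ≤ B * N := by gcongr
    have e3 : B^2 ≤ B^2 * N := le_mul_of_one_le_right (by positivity) hN1
    have e4 : 0 ≤ C1 * (N:ℝ)^((7:ℝ)/4) := by positivity
    have e5 : 0 ≤ B * N := by positivity
    rw [abs_le]
    constructor
    · nlinarith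
    · nlinarith
  have q2 : |3 * s^2 - 3 * κ^2 * (N:ℝ)^2| ≤ 3 * (|C2| * (1 + κ)) * (N:ℝ)^((7:ℝ)/4) := by
    have e : 3 * s^2 - 3 * κ^2 * (N:ℝ)^2 = 3 * ((s - κ * N) * (s + κ * N)) := by ring
    have e0 : 0 ≤ s + κ * N := by positivity
    rw [e, abs_mul, abs_mul, abs_of_nonneg e0, ← hp2]
    have e1 : |s - κ * N| ≤ |C2| * (N:ℝ)^((3:ℝ)/4) := by
      refine hdN.trans ?_
      gcongr
      exact le_abs_self _
    have e2 : s + κ * N ≤ (1 + κ) * N := by linarith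
    calc |(3:ℝ)| * (|s - κ * N| * (s + κ * N)) ≤ 3 * ((|C2| * (N:ℝ)^((3:ℝ)/4)) * ((1 + κ) * N)) := by
          rw [abs_of_pos (by norm_num : (0:ℝ) < 3)]
          gcongr
      _ = _ := by ring
  have q3 : |t - 3 * κ^2 * (N:ℝ)^2| ≤ |t - 3 * s^2| + |3 * s^2 - 3 * κ^2 * (N:ℝ)^2| := abs_sub_le _ _ _
  calc _ ≤ _ := q3
    _ ≤ (C1 + (6 * B + 3 * B^2 + 2)) * (N:ℝ)^((7:ℝ)/4) + 3 * (|C2| * (1 + κ)) * (N:ℝ)^((7:ℝ)/4) := add_le_add q1 q2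
    _ = (C1 + (6 * B + 3 * B^2 + 2) + 3 * (|C2| * (1 + κ))) * (N:ℝ)^((7:ℝ)/4) := by ring
    _ ≤ _ := by gcongr
end

section
/- Let P ∈ ℤ[x] be either an irreducible quadratic polynomial or a polynomial of arbitrary degree that factors as a product of pairwise non-proportional linear factors a_i x + b_i over ℤ (i.e. a_i b_j − a_j b_i ≠ 0 for i ≠ j), with positive leading coefficient. If there is no prime p such that p² ∣ P(n) for all positive integers n, then there exists a constant κ_P > 0 such that #{n ≤ N : P(n) is a squarefree integer} = κ_P·N + O_P(N^{3/4}), as N → ∞. -/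
lemma pow_omega_bound (c : ℕ) (hc : 1 ≤ c) (ε : ℝ) (hε : 0 < ε) :
    ∃ K : ℝ, 0 < K ∧ ∀ m : ℕ, 1 ≤ m → (c : ℝ) ^ (m.primeFactors.card) ≤ K * (m : ℝ) ^ ε := by
  classical
  set B : ℕ := ⌈(c : ℝ) ^ (1 / ε)⌉₊ with hB
  have hc1 : (1 : ℝ) ≤ c := by exact_mod_cast hc
  refine ⟨(c : ℝ) ^ B, by positivity, fun m hm => ?_⟩
  have h1 : (c : ℝ) ^ (m.primeFactors.card) = ∏ p ∈ m.primeFactors, (c : ℝ) := by simp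
  rw [h1, ← Finset.prod_filter_mul_prod_filter_not m.primeFactors (fun p => p < B)]
  apply mul_le_mul
  · rw [Finset.prod_const]
    apply pow_le_pow_right₀ hc1
    calc _ ≤ (Finset.range B).card := by
          apply Finset.card_le_card
          intro p hp
          simp at hp ⊢
          exact hp.2
      _ = B := by simp
  · calc ∏ p ∈ m.primeFactors with ¬ p < B, (c : ℝ)
        ≤ ∏ p ∈ m.primeFactors with ¬ p < B, (p : ℝ) ^ ε := by
          apply Finset.prod_le_prod
          · intros; positivity
          · intro p hp
            simp only [Finset.mem_filter, not_lt] at hp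
            have : (c : ℝ) ^ (1 / ε) ≤ p := (Nat.le_ceil _).trans (by exact_mod_cast hp.2)
            calc (c : ℝ) = ((c : ℝ) ^ (1 / ε)) ^ ε := by
                  rw [← Real.rpow_mul (by positivity)]; field_simp; simp
              _ ≤ _ := by gcongr
      _ = (∏ p ∈ m.primeFactors with ¬ p < B, (p : ℝ)) ^ ε := by
          rw [Real.finsetProd_rpow]
          intros; positivity
      _ ≤ (m : ℝ) ^ ε := by
          gcongr
          have : (∏ p ∈ m.primeFactors with ¬ p < B, p) ∣ m :=
            (Finset.prod_dvd_prod_of_subset _ _ _ (Finset.filter_subset _ _)).trans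
              (Nat.prod_primeFactors_dvd m)
          rw [← Nat.cast_prod]
          exact Nat.cast_le.2 (Nat.le_of_dvd hm this)
  · exact Finset.prod_nonneg (by intros; positivity)
  · positivity

lemma moebius_sq_sum (n : ℕ) (hn : n ≠ 0) (M : ℕ)
    (hM : ∀ d : ℕ, Squarefree d → d ^ 2 ∣ n → d ≤ M) :
    ∑ d ∈ Finset.Icc 1 M, (if d ^ 2 ∣ n then ArithmeticFunction.moebius d else 0)
      = if Squarefree n then 1 else 0 := by
  obtain ⟨a, b, hab, hsq⟩ := Nat.sq_mul_squarefree n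
  have hb : b ≠ 0 := by rintro rfl; simp at hab; omega
  have key : ∀ d : ℕ, d ^ 2 ∣ n ↔ d ∣ b := by
    intro d
    constructor
    · intro h
      rw [← hab] at h
      by_contra hnd
      have hd0 : d ≠ 0 := by
        rintro rfl
        simp at h
        rcases h with h | h
        · exact hb h
        · subst h; exact not_squarefree_zero hsq
      have ha0 : a ≠ 0 := by rintro rfl; exact not_squarefree_zero hsq
      apply hnd
      rw [← Nat.factorization_le_iff_dvd hd0 hb]
      intro p
      rw [← Nat.factorization_le_iff_dvd (by positivity) (by positivity)] at h
      have h2 := h p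
      have h3 := hsq.natFactorization_le_one p
      rw [Nat.factorization_mul (by positivity) ha0] at h2
      simp at h2
      omega
    · intro h
      rw [← hab]
      exact (pow_dvd_pow_of_dvd h 2).trans (Dvd.intro _ rfl)
  have h1 : ∑ d ∈ Finset.Icc 1 M, (if d ^ 2 ∣ n then ArithmeticFunction.moebius d else 0)
      = ∑ d ∈ b.divisors, ArithmeticFunction.moebius d := by
    rw [← Finset.sum_filter]
    apply Finset.sum_subset_zero_on_sdiff
    · intro d hd
      simp at hd
      simp [hb, (key d).1 hd.2]
    · intro d hd
      simp [hb] at hd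
      apply ArithmeticFunction.moebius_eq_zero_of_not_squarefree
      intro hs
      have hdb := hd.1
      have := hM d hs ((key d).2 hdb)
      exact hd.2 (Nat.one_le_iff_ne_zero.2 (by rintro rfl; simp at hdb; exact hb hdb)) this ((key d).2 hdb)
    · intros; rfl
  rw [h1]
  have h2 := congrArg (fun f => f b) ArithmeticFunction.moebius_mul_coe_zeta
  simp only [ArithmeticFunction.coe_mul_zeta_apply, ArithmeticFunction.one_apply] at h2
  rw [h2]
  congr 1
  apply propext
  constructor
  · rintro rfl; rw [← hab]; simpa using hsq
  · intro h
    have := h b (by rw [← hab, sq]; exact Dvd.intro _ rfl)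
    exact Nat.isUnit_iff.1 this

lemma card_sq_div (n : ℕ) (hn : n ≠ 0) (M : ℕ) :
    ((Finset.Icc 1 M).filter (fun d => Squarefree d ∧ d ^ 2 ∣ n)).card ≤ 2 ^ n.primeFactors.card := by
  rw [← Finset.card_powerset]
  apply Finset.card_le_card_of_injOn (fun d => d.primeFactors)
  · intro d hd
    simp only [Finset.coe_filter, Set.mem_ofPred_eq] at hd
    simp only [Finset.coe_powerset, Set.mem_preimage, Set.mem_powerset_iff, Finset.coe_subset]
    exact Nat.primeFactors_mono ((dvd_pow_self d two_ne_zero).trans hd.2.2) hn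
  · intro d hd e he h
    simp only [Finset.coe_filter, Set.mem_ofPred_eq] at hd he
    simp only at h
    rw [← Nat.prod_primeFactors_of_squarefree hd.2.1, h, Nat.prod_primeFactors_of_squarefree he.2.1]

/-- roots of `P` modulo `d ^ 2` -/
noncomputable def rho (P : Polynomial ℤ) (d : ℕ) : ℕ :=
  Nat.card {x : ZMod (d ^ 2) // Polynomial.aeval x P = 0}

lemma aeval_zmod_iff (P : Polynomial ℤ) (m : ℕ) (n : ℤ) :
    Polynomial.aeval (n : ZMod m) P = 0 ↔ (m : ℤ) ∣ P.eval n := by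
  rw [← ZMod.intCast_zmod_eq_zero_iff_dvd]
  have : Polynomial.aeval (n : ZMod m) P = ((P.eval n : ℤ) : ZMod m) := by
    have := Polynomial.aeval_algebraMap_apply (ZMod m) n P
    simpa using this
  rw [this]

lemma periodic_dvd (P : Polynomial ℤ) (m : ℕ) :
    Function.Periodic (fun n : ℕ => (m : ℤ) ∣ P.eval (n : ℤ)) m := by
  intro n
  simp only [← aeval_zmod_iff]
  simp

lemma card_roots_eq_count (P : Polynomial ℤ) (m : ℕ) (hm : 0 < m) :
    Nat.card {x : ZMod m // Polynomial.aeval x P = 0}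
      = Nat.count (fun n : ℕ => (m : ℤ) ∣ P.eval (n : ℤ)) m := by
  classical
  have : NeZero m := ⟨hm.ne'⟩
  rw [Nat.count_eq_card_filter_range, Nat.card_eq_fintype_card, Fintype.card_subtype]
  symm
  apply Finset.card_bij (fun (n : ℕ) _ => (n : ZMod m))
  · intro n hn
    simp only [Finset.mem_filter] at hn
    have := (aeval_zmod_iff P m n).2 hn.2
    simpa using this
  · intro a ha b hb h
    simp only [Finset.mem_filter, Finset.mem_range] at ha hb
    rw [ZMod.natCast_eq_natCast_iff] at h
    exact Nat.ModEq.eq_of_lt_of_lt h ha.1 hb.1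
  · intro x hx
    refine ⟨x.val, ?_, by simp⟩
    simp only [Finset.mem_filter, Finset.mem_range, Finset.mem_univ, true_and] at hx ⊢
    refine ⟨ZMod.val_lt x, ?_⟩
    rw [← aeval_zmod_iff]
    simpa using hx

lemma count_periodic (p : ℕ → Prop) [DecidablePred p] (m : ℕ) (hp : Function.Periodic p m) (q n : ℕ) :
    ((Finset.Ico n (n + m * q)).filter p).card = q * Nat.count p m := by
  induction q with
  | zero => simp
  | succ q ih =>
    have h : Finset.Ico n (n + m * (q+1)) = Finset.Ico n (n + m * q) ∪ Finset.Ico (n + m * q) (n + m * q + m) := by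
      rw [Finset.Ico_union_Ico_eq_Ico (by omega) (by omega)]; congr 1; ring
    rw [h, Finset.filter_union, Finset.card_union_of_disjoint, ih, Nat.filter_Ico_card_eq_of_periodic _ _ _ hp]
    · ring
    · apply Finset.disjoint_filter_filter
      exact Finset.Ico_disjoint_Ico_consecutive _ _ _

lemma count_approx (p : ℕ → Prop) [DecidablePred p] (m : ℕ) (hm : 0 < m) (hp : Function.Periodic p m) (N : ℕ) :
    |(((Finset.Icc 1 N).filter p).card : ℝ) - Nat.count p m * N / m| ≤ Nat.count p m := by
  have e : Finset.Icc 1 N = Finset.Ico 1 (1 + N) := by ext; simp; omega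
  have hl : (N / m) * Nat.count p m ≤ ((Finset.Icc 1 N).filter p).card := by
    rw [← count_periodic p m hp (N/m) 1, e]
    apply Finset.card_le_card
    apply Finset.filter_subset_filter
    apply Finset.Ico_subset_Ico_right
    have := Nat.mul_div_le N m
    omega
  have hu : ((Finset.Icc 1 N).filter p).card ≤ (N / m + 1) * Nat.count p m := by
    rw [← count_periodic p m hp (N/m+1) 1, e]
    apply Finset.card_le_card
    apply Finset.filter_subset_filter
    apply Finset.Ico_subset_Ico_right
    have := Nat.lt_mul_div_succ N hm
    omega
  have h1 : ((N / m : ℕ) : ℝ) ≤ N / m := Nat.cast_div_le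
  have h2 : (N : ℝ) / m ≤ ((N / m : ℕ) : ℝ) + 1 := by
    rw [div_le_iff₀ (by positivity)]
    have := (Nat.lt_mul_div_succ N hm).le
    rw [mul_comm]
    exact_mod_cast this
  have hl' : ((N / m : ℕ) : ℝ) * Nat.count p m ≤ ((Finset.Icc 1 N).filter p).card := by exact_mod_cast hl
  have hu' : (((Finset.Icc 1 N).filter p).card : ℝ) ≤ (((N / m : ℕ) : ℝ) + 1) * Nat.count p m := by exact_mod_cast hu
  have hc : (0:ℝ) ≤ Nat.count p m := by positivity
  rw [mul_div_assoc, abs_le]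
  constructor <;> nlinarith

lemma rho_count (P : Polynomial ℤ) (d : ℕ) (hd : 0 < d) (N : ℕ) :
    |(((Finset.Icc 1 N).filter (fun n : ℕ => d ^ 2 ∣ (P.eval (n : ℤ)).natAbs)).card : ℝ)
       - rho P d * N / (d : ℝ) ^ 2| ≤ rho P d := by
  have h := count_approx (fun n : ℕ => ((d ^ 2 : ℕ) : ℤ) ∣ P.eval (n : ℤ)) (d ^ 2) (by positivity)
    (periodic_dvd P _) N
  rw [← card_roots_eq_count P _ (by positivity)] at h
  simp only [Int.natCast_dvd] at h
  unfold rho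
  push_cast at h
  exact h

lemma rho_mul (P : Polynomial ℤ) (m n : ℕ) (h : m.Coprime n) : rho P (m * n) = rho P m * rho P n := by
  unfold rho
  rw [← Nat.card_prod, mul_pow]
  let e := ZMod.chineseRemainder (m := m ^ 2) (n := n ^ 2) (Nat.Coprime.pow _ _ h)
  have key : ∀ x, Polynomial.aeval x P = 0 ↔ Polynomial.aeval (e x).1 P = 0 ∧ Polynomial.aeval (e x).2 P = 0 := by
    intro x
    have h1 : Polynomial.aeval (e x).1 P = (e (Polynomial.aeval x P)).1 := by
      have := Polynomial.aeval_algHom_apply (((RingHom.fst _ _).comp e.toRingHom).toIntAlgHom) x P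
      simpa using this
    have h2 : Polynomial.aeval (e x).2 P = (e (Polynomial.aeval x P)).2 := by
      have := Polynomial.aeval_algHom_apply (((RingHom.snd _ _).comp e.toRingHom).toIntAlgHom) x P
      simpa using this
    rw [h1, h2, ← EmbeddingLike.map_eq_zero_iff (f := e)]
    exact Prod.ext_iff
  apply Nat.card_congr
  exact (e.toEquiv.subtypeEquiv (q := fun y => Polynomial.aeval y.1 P = 0 ∧ Polynomial.aeval y.2 P = 0) key).trans
    (Equiv.subtypeProdEquivProd (p := fun x : ZMod (m ^ 2) => Polynomial.aeval x P = 0)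
      (q := fun x : ZMod (n ^ 2) => Polynomial.aeval x P = 0))

lemma rho_one (P : Polynomial ℤ) : rho P 1 = 1 := by
  unfold rho
  rw [Nat.card_eq_one_iff_unique]
  have : Subsingleton (ZMod (1^2)) := by simp; infer_instance
  exact ⟨⟨fun a b => Subtype.ext (Subsingleton.elim _ _)⟩, ⟨⟨0, Subsingleton.elim _ _⟩⟩⟩

lemma rho_le_pow (P : Polynomial ℤ) (c : ℕ) (hc : ∀ p, p.Prime → rho P p ≤ c) (d : ℕ) :
    Squarefree d → rho P d ≤ c ^ d.primeFactors.card := by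
  induction d using Nat.recOnPosPrimePosCoprime with
  | prime_pow p n hp hn =>
    intro h
    have : n = 1 := by
      have := (Nat.squarefree_pow_iff hp.ne_one hn.ne').1 h
      exact this.2
    subst this
    simpa [hp.primeFactors] using hc p hp
  | zero => intro h; exact absurd h not_squarefree_zero
  | one => intro _; simp [rho_one]
  | coprime a b ha hb hab iha ihb =>
    intro h
    rw [rho_mul P a b hab, hab.primeFactors_mul, Finset.card_union_of_disjoint hab.disjoint_primeFactors, pow_add]
    rw [Nat.squarefree_mul hab] at h
    exact Nat.mul_le_mul (iha h.1) (ihb h.2)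

lemma rho_lt (P : Polynomial ℤ) (p : ℕ) (hp : 0 < p)
    (h : ¬ ∀ n : ℕ, 0 < n → (p : ℤ)^2 ∣ P.eval (n : ℤ)) : rho P p < p ^ 2 := by
  unfold rho
  have : NeZero (p^2) := ⟨by positivity⟩
  push Not at h
  obtain ⟨n, _, hn⟩ := h
  refine lt_of_lt_of_eq ?_ (Nat.card_zmod (p^2))
  apply Finite.card_subtype_lt (x := (n : ZMod (p^2)))
  have := (aeval_zmod_iff P (p^2) n).not
  push_cast at this
  exact this.2 hn

lemma kappa_pos (P : Polynomial ℤ) (hadm : ¬ ∃ p : ℕ, p.Prime ∧ ∀ n : ℕ, 0 < n → (p : ℤ)^2 ∣ P.eval (n : ℤ))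
    (hs : Summable (fun d : ℕ => ‖(ArithmeticFunction.moebius d : ℝ) * (rho P d : ℝ) / (d : ℝ) ^ 2‖)) :
    0 < ∑' d : ℕ, (ArithmeticFunction.moebius d : ℝ) * (rho P d : ℝ) / (d : ℝ) ^ 2 := by
  set f : ℕ → ℝ := fun d => (ArithmeticFunction.moebius d : ℝ) * (rho P d : ℝ) / (d : ℝ) ^ 2 with hf
  have hmul : ∀ {m n : ℕ}, m.Coprime n → f (m * n) = f m * f n := by
    intro m n h
    simp only [hf]
    rw [ArithmeticFunction.isMultiplicative_moebius.map_mul_of_coprime h, rho_mul P m n h]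
    push_cast
    rw [div_mul_div_comm]
    congr 1 <;> ring
  have hprod := EulerProduct.eulerProduct_hasProd (f := f) (by simp [hf, rho_one]) hmul hs (by simp [hf])
  have hterm : ∀ p : Nat.Primes, ∑' e : ℕ, f ((p : ℕ) ^ e) = 1 + f p := by
    intro p
    rw [tsum_eq_sum (s := Finset.range 2)]
    · simp [Finset.sum_range_succ, hf, rho_one]
    · intro e he
      simp only [Finset.mem_range, not_lt] at he
      simp only [hf]
      rw [ArithmeticFunction.moebius_apply_prime_pow p.2 (by omega), if_neg (by omega)]
      simp
  simp only [hterm] at hprod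
  have hpos : ∀ p : Nat.Primes, 0 < 1 + f p := by
    intro p
    have h1 := rho_lt P p p.2.pos (fun h => hadm ⟨p, p.2, h⟩)
    have hp : (0:ℝ) < (p : ℕ) := by exact_mod_cast p.2.pos
    have h2 : (rho P p : ℝ) < ((p : ℕ) : ℝ) ^ 2 := by exact_mod_cast h1
    have h3 : (rho P p : ℝ) / ((p : ℕ) : ℝ) ^ 2 < 1 := by
      rw [div_lt_one (by positivity)]; exact h2
    simp only [hf]
    rw [ArithmeticFunction.moebius_apply_prime p.2]
    push_cast
    rw [neg_one_mul, neg_div]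
    linarith
  have hsum : Summable (fun p : Nat.Primes => f p) :=
    (Summable.of_norm hs).comp_injective Nat.Primes.coe_nat_injective
  have hlog := Real.summable_log_one_add_of_summable hsum
  have := Real.hasProd_of_hasSum_log hpos hlog.hasSum
  rw [hprod.unique this]
  exact Real.exp_pos _

lemma exists_mid (z : ℝ) (hz : 1 ≤ z) (m d : ℕ) (hd : Squarefree d) (hzd : z < d) (hm : d ^ 2 ∣ m) :
    (∃ p : ℕ, p.Prime ∧ z ^ 2 < p ∧ p ^ 2 ∣ m) ∨
    (∃ e : ℕ, Squarefree e ∧ z < e ∧ (e : ℝ) ≤ z ^ 2 ∧ e ^ 2 ∣ m) := by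
  classical
  have hex : ∃ e : ℕ, e ∣ d ∧ z < e := ⟨d, dvd_rfl, hzd⟩
  obtain ⟨he1, he2⟩ := Nat.find_spec hex
  have hmin : ∀ e' : ℕ, e' ∣ d → z < e' → Nat.find hex ≤ e' := fun e' h1 h2 => Nat.find_min' hex ⟨h1, h2⟩
  generalize Nat.find hex = e at *
  have hem : e ^ 2 ∣ m := (pow_dvd_pow_of_dvd he1 2).trans hm
  have hes : Squarefree e := hd.squarefree_of_dvd he1
  by_cases hle : (e : ℝ) ≤ z ^ 2
  · right; exact ⟨e, hes, he2, hle, hem⟩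
  left
  push Not at hle
  have he1' : e ≠ 1 := by rintro rfl; norm_num at he2; linarith
  obtain ⟨q, hq, hqe⟩ := Nat.exists_prime_and_dvd he1'
  obtain ⟨r, hr⟩ := hqe
  have hrz : (r : ℝ) ≤ z := by
    by_contra h
    push Not at h
    have := hmin r ((Dvd.intro_left _ hr.symm).trans he1) h
    have hr0 : 0 < r := by
      rcases Nat.eq_zero_or_pos r with h0 | h0
      · subst h0; norm_num at h; linarith
      · exact h0
    have := hq.two_le
    nlinarith
  have hqz : z < q := by
    by_contra h
    push Not at h
    have : (e : ℝ) ≤ z ^ 2 := by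
      rw [hr]; push_cast
      rw [sq]
      exact mul_le_mul h hrz (by positivity) (by linarith)
    linarith
  have h2 := hmin q ((Dvd.intro _ hr.symm).trans he1) hqz
  have h3 : e = q := le_antisymm h2 (Nat.le_of_dvd (Nat.pos_of_ne_zero (by rintro rfl; exact not_squarefree_zero hes)) (Dvd.intro _ hr.symm))
  exact ⟨e, h3 ▸ hq, hle, hem⟩

lemma rho_bound (P : Polynomial ℤ) (c : ℕ) (hc : ∀ p, p.Prime → rho P p ≤ c) :
    ∃ K : ℝ, 0 < K ∧ ∀ d : ℕ, Squarefree d → (rho P d : ℝ) ≤ K * (d : ℝ) ^ ((1:ℝ)/40) := by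
  obtain ⟨K, hK, h⟩ := pow_omega_bound (c + 1) (by omega) (1/40) (by norm_num)
  refine ⟨K, hK, fun d hd => ?_⟩
  refine le_trans ?_ (h d (Nat.pos_of_ne_zero hd.ne_zero))
  exact_mod_cast rho_le_pow P (c + 1) (fun p hp => (hc p hp).trans (by omega)) d hd

lemma tail_pt (K r z d : ℝ) (hK : 0 < K) (hz : 1 ≤ z) (hzd : z ≤ d) (hr : r ≤ K * d ^ ((1:ℝ)/40)) :
    r / d ^ 2 ≤ K * z ^ (-(19:ℝ)/20) * (1 / d ^ ((41:ℝ)/40)) := by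
  have hd : 0 < d := by linarith
  have h1 : d ^ (-(19:ℝ)/20) ≤ z ^ (-(19:ℝ)/20) :=
    Real.rpow_le_rpow_of_nonpos (by linarith) hzd (by norm_num)
  calc r / d ^ 2 ≤ K * d ^ ((1:ℝ)/40) / d ^ 2 := by gcongr
    _ = K * d ^ (-(19:ℝ)/20) * (1 / d ^ ((41:ℝ)/40)) := by
      rw [← Real.rpow_natCast d 2, mul_div_assoc, ← Real.rpow_sub hd, mul_assoc, mul_one_div, ← Real.rpow_sub hd]
      norm_num
    _ ≤ _ := by gcongr

lemma poly_bound (P : Polynomial ℤ) : ∃ C : ℝ, 0 < C ∧ ∀ n N : ℕ, 1 ≤ n → n ≤ N →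
    ((P.eval (n : ℤ)).natAbs : ℝ) ≤ C * (N : ℝ) ^ P.natDegree := by
  refine ⟨∑ i ∈ Finset.range (P.natDegree + 1), |(P.coeff i : ℝ)| + 1, by positivity, fun n N hn hN => ?_⟩
  rw [Nat.cast_natAbs, Polynomial.eval_eq_sum_range]
  push_cast
  have hN1 : (1:ℝ) ≤ N := by exact_mod_cast hn.trans hN
  have hnN : (n:ℝ) ≤ N := by exact_mod_cast hN
  calc _ ≤ ∑ i ∈ Finset.range (P.natDegree + 1), |(P.coeff i : ℝ) * (n : ℝ) ^ i| :=
        Finset.abs_sum_le_sum_abs _ _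
    _ ≤ ∑ i ∈ Finset.range (P.natDegree + 1), |(P.coeff i : ℝ)| * (N : ℝ) ^ P.natDegree := by
        apply Finset.sum_le_sum
        intro i hi
        rw [abs_mul, abs_pow, Nat.abs_cast]
        have : i ≤ P.natDegree := by simp at hi; omega
        gcongr
        calc (n:ℝ) ^ i ≤ (N:ℝ) ^ i := by gcongr
          _ ≤ _ := pow_le_pow_right₀ hN1 this
    _ ≤ _ := by
        rw [← Finset.sum_mul]
        gcongr
        linarith

lemma zeros_card (P : Polynomial ℤ) (hP : P ≠ 0) (N : ℕ) :
    ((Finset.Icc 1 N).filter (fun n : ℕ => P.eval (n : ℤ) = 0)).card ≤ P.natDegree := by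
  classical
  refine le_trans ?_ (P.card_roots')
  refine le_trans ?_ (Multiset.toFinset_card_le _)
  apply Finset.card_le_card_of_injOn (fun n : ℕ => (n : ℤ))
  · intro n hn
    simp at hn
    simp [hP, hn]
  · intro a _ b _ h
    simpa using h

lemma omega_bound (P : Polynomial ℤ) : ∃ K : ℝ, 0 < K ∧ ∀ n N : ℕ, 1 ≤ n → n ≤ N → P.eval (n : ℤ) ≠ 0 →
    (2 : ℝ) ^ ((P.eval (n : ℤ)).natAbs.primeFactors.card) ≤ K * (N : ℝ) ^ ((1:ℝ)/20) := by
  obtain ⟨C, hC, hb⟩ := poly_bound P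
  have hk : (0:ℝ) < P.natDegree + 1 := by positivity
  obtain ⟨K, hK, h⟩ := pow_omega_bound 2 (by norm_num) (1/(20 * (P.natDegree + 1))) (by positivity)
  refine ⟨K * C ^ ((1:ℝ)/(20 * (P.natDegree + 1))), by positivity, fun n N hn hN h0 => ?_⟩
  have hN1 : (1:ℝ) ≤ N := by exact_mod_cast hn.trans hN
  have h1 := h _ (Nat.pos_of_ne_zero (Int.natAbs_ne_zero.2 h0))
  rw [Nat.cast_ofNat] at h1
  refine h1.trans ?_
  rw [mul_assoc]
  gcongr
  calc ((P.eval (n : ℤ)).natAbs : ℝ) ^ ((1:ℝ)/(20 * (P.natDegree + 1)))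
      ≤ (C * (N : ℝ) ^ P.natDegree) ^ ((1:ℝ)/(20 * (P.natDegree + 1))) := by
        gcongr; exact hb n N hn hN
    _ = C ^ ((1:ℝ)/(20 * (P.natDegree + 1))) * (N : ℝ) ^ (P.natDegree * ((1:ℝ)/(20 * (P.natDegree + 1)))) := by
        rw [Real.mul_rpow (by positivity) (by positivity), ← Real.rpow_natCast, ← Real.rpow_mul (by positivity)]
    _ ≤ _ := by
        gcongr
        rw [mul_one_div, div_le_div_iff₀ (by positivity) (by positivity)]
        linarith

open Classical in
lemma bad_card (P : Polynomial ℤ) (c : ℕ) (hc : ∀ p, p.Prime → rho P p ≤ c)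
    (C1 : ℝ) (hC1 : ∀ N : ℕ, 1 ≤ N → 
      (((Finset.Icc 1 N).filter (fun n : ℕ => ∃ p : ℕ, p.Prime ∧ ((N:ℝ) ^ ((1:ℝ)/3)) ^ 2 < p ∧
        p ^ 2 ∣ (P.eval (n : ℤ)).natAbs)).card : ℝ) ≤ C1 * (N : ℝ) ^ ((7:ℝ)/10)) :
    ∃ C : ℝ, 0 ≤ C ∧ ∀ N : ℕ, 1 ≤ N →
      (((Finset.Icc 1 N).filter (fun n : ℕ => ∃ d : ℕ, Squarefree d ∧ (N:ℝ) ^ ((1:ℝ)/3) < d ∧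
        d ^ 2 ∣ (P.eval (n : ℤ)).natAbs)).card : ℝ) ≤ C * (N : ℝ) ^ ((7:ℝ)/10) := by
  classical
  obtain ⟨K, hK, hKb⟩ := rho_bound P c hc
  have hsum : Summable (fun d : ℕ => 1 / (d : ℝ) ^ ((41:ℝ)/40)) :=
    Real.summable_one_div_nat_rpow.2 (by norm_num)
  set Z : ℝ := ∑' d : ℕ, 1 / (d : ℝ) ^ ((41:ℝ)/40) with hZ
  have hZ0 : 0 ≤ Z := tsum_nonneg (fun d => by positivity)
  refine ⟨|C1| + K * Z + K, by positivity, fun N hN => ?_⟩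
  have hN1 : (1:ℝ) ≤ N := by exact_mod_cast hN
  set z : ℝ := (N:ℝ) ^ ((1:ℝ)/3) with hz
  have hz1 : 1 ≤ z := Real.one_le_rpow hN1 (by norm_num)
  set M := (Finset.Icc 1 ⌊z ^ 2⌋₊).filter (fun d : ℕ => Squarefree d ∧ z < d) with hM
  have hsub : ((Finset.Icc 1 N).filter (fun n : ℕ => ∃ d : ℕ, Squarefree d ∧ z < d ∧
        d ^ 2 ∣ (P.eval (n : ℤ)).natAbs)) ⊆
      ((Finset.Icc 1 N).filter (fun n : ℕ => ∃ p : ℕ, p.Prime ∧ z ^ 2 < p ∧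
        p ^ 2 ∣ (P.eval (n : ℤ)).natAbs)) ∪ 
      M.biUnion (fun d => (Finset.Icc 1 N).filter (fun n : ℕ => d ^ 2 ∣ (P.eval (n : ℤ)).natAbs)) := by
    intro n hn
    simp only [Finset.mem_filter] at hn
    obtain ⟨hnN, d, hd, hzd, hdv⟩ := hn
    simp only [Finset.mem_union, Finset.mem_filter, Finset.mem_biUnion]
    rcases exists_mid z hz1 _ d hd hzd hdv with h | ⟨e, h1, h2, h3, h4⟩
    · left; exact ⟨hnN, h⟩
    · right
      refine ⟨e, ?_, hnN, h4⟩
      simp only [hM, Finset.mem_filter, Finset.mem_Icc]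
      exact ⟨⟨Nat.pos_of_ne_zero h1.ne_zero, Nat.le_floor h3⟩, h1, h2⟩
  have hmem : ∀ d ∈ M, 1 ≤ d ∧ (d : ℝ) ≤ z ^ 2 ∧ Squarefree d ∧ z < d := by
    intro d hd
    simp only [hM, Finset.mem_filter, Finset.mem_Icc] at hd
    exact ⟨hd.1.1, (Nat.le_floor_iff (by positivity)).1 hd.1.2, hd.2⟩
  have hcard : (M.card : ℝ) ≤ z ^ 2 := by
    calc (M.card : ℝ) ≤ (⌊z ^ 2⌋₊ : ℝ) := by
          have := Finset.card_filter_le (Finset.Icc 1 ⌊z ^ 2⌋₊) (fun d : ℕ => Squarefree d ∧ z < d)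
          rw [Nat.card_Icc] at this
          exact_mod_cast this
      _ ≤ z ^ 2 := Nat.floor_le (by positivity)
  have e1 : (N:ℝ) * z ^ (-(19:ℝ)/20) ≤ (N:ℝ) ^ ((7:ℝ)/10) := by
    rw [hz, ← Real.rpow_mul (by positivity), ← Real.rpow_one_add' (by positivity) (by norm_num)]
    exact Real.rpow_le_rpow_of_exponent_le hN1 (by norm_num)
  have e2 : (z ^ 2) ^ ((1:ℝ)/40) * z ^ 2 ≤ (N:ℝ) ^ ((7:ℝ)/10) := by
    rw [hz, ← Real.rpow_natCast, ← Real.rpow_mul (by positivity), ← Real.rpow_mul (by positivity),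
      ← Real.rpow_mul (by positivity), ← Real.rpow_add (by positivity)]
    exact Real.rpow_le_rpow_of_exponent_le hN1 (by norm_num)
  have hmid : ∑ d ∈ M, (((Finset.Icc 1 N).filter (fun n : ℕ => d ^ 2 ∣ (P.eval (n : ℤ)).natAbs)).card : ℝ)
      ≤ (K * Z + K) * (N:ℝ) ^ ((7:ℝ)/10) := by
    calc _ ≤ ∑ d ∈ M, (N * (K * z ^ (-(19:ℝ)/20) * (1 / (d : ℝ) ^ ((41:ℝ)/40))) + K * (z ^ 2) ^ ((1:ℝ)/40)) := by
          apply Finset.sum_le_sum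
          intro d hd
          obtain ⟨h1, h2, h3, h4⟩ := hmem d hd
          have h5 := (abs_le.1 (rho_count P d h1 N)).2
          have h6 := tail_pt K (rho P d) z d hK hz1 h4.le (hKb d h3)
          have h7 : (rho P d : ℝ) ≤ K * (z ^ 2) ^ ((1:ℝ)/40) := (hKb d h3).trans (by gcongr)
          have h8 : (rho P d : ℝ) * N / (d : ℝ) ^ 2 = N * (rho P d / (d : ℝ) ^ 2) := by ring
          have h9 : (N:ℝ) * (rho P d / (d : ℝ) ^ 2) ≤ N * (K * z ^ (-(19:ℝ)/20) * (1 / (d : ℝ) ^ ((41:ℝ)/40))) := by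
            gcongr
          linarith
      _ = K * (N * z ^ (-(19:ℝ)/20)) * (∑ d ∈ M, (1 / (d : ℝ) ^ ((41:ℝ)/40))) + M.card * (K * (z ^ 2) ^ ((1:ℝ)/40)) := by
          rw [Finset.sum_add_distrib, Finset.sum_const, nsmul_eq_mul, Finset.mul_sum]
          congr 1
          apply Finset.sum_congr rfl
          intros; ring
      _ ≤ K * (N:ℝ) ^ ((7:ℝ)/10) * Z + z ^ 2 * (K * (z ^ 2) ^ ((1:ℝ)/40)) := by
          gcongr
          exact hsum.sum_le_tsum M (fun d _ => by positivity)
      _ ≤ _ := by nlinarith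
  have h1 : ((M.biUnion (fun d => (Finset.Icc 1 N).filter (fun n : ℕ => d ^ 2 ∣ (P.eval (n : ℤ)).natAbs))).card : ℝ)
      ≤ ∑ d ∈ M, (((Finset.Icc 1 N).filter (fun n : ℕ => d ^ 2 ∣ (P.eval (n : ℤ)).natAbs)).card : ℝ) := by
    exact_mod_cast Finset.card_biUnion_le
  have h2 := hC1 N hN
  have h3 : C1 * (N : ℝ) ^ ((7:ℝ)/10) ≤ |C1| * (N : ℝ) ^ ((7:ℝ)/10) := by
    gcongr; exact le_abs_self _
  have h4 := (Finset.card_le_card hsub).trans (Finset.card_union_le _ _)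
  have h5 : (((Finset.Icc 1 N).filter (fun n : ℕ => ∃ d : ℕ, Squarefree d ∧ z < d ∧
        d ^ 2 ∣ (P.eval (n : ℤ)).natAbs)).card : ℝ) ≤ 
      ((Finset.Icc 1 N).filter (fun n : ℕ => ∃ p : ℕ, p.Prime ∧ z ^ 2 < p ∧
        p ^ 2 ∣ (P.eval (n : ℤ)).natAbs)).card + 
      (M.biUnion (fun d => (Finset.Icc 1 N).filter (fun n : ℕ => d ^ 2 ∣ (P.eval (n : ℤ)).natAbs))).card := by
    exact_mod_cast h4
  linarith

open Classical in
lemma main_abs (P : Polynomial ℤ) (hP : P ≠ 0)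
    (hadm : ¬ ∃ p : ℕ, p.Prime ∧ ∀ n : ℕ, 0 < n → (p : ℤ)^2 ∣ P.eval (n : ℤ))
    (c : ℕ) (hc : ∀ p, p.Prime → rho P p ≤ c)
    (C1 : ℝ) (hC1 : ∀ N : ℕ, 1 ≤ N → 
      (((Finset.Icc 1 N).filter (fun n : ℕ => ∃ p : ℕ, p.Prime ∧ ((N:ℝ) ^ ((1:ℝ)/3)) ^ 2 < p ∧
        p ^ 2 ∣ (P.eval (n : ℤ)).natAbs)).card : ℝ) ≤ C1 * (N : ℝ) ^ ((7:ℝ)/10)) :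
    ∃ κ : ℝ, 0 < κ ∧ ∃ C : ℝ, ∀ N : ℕ, 1 ≤ N →
      |({n : ℕ | 1 ≤ n ∧ n ≤ N ∧ Squarefree (P.eval (n : ℤ))}.ncard : ℝ) - κ * N| ≤
        C * (N : ℝ) ^ ((3:ℝ)/4) := by
  classical
  obtain ⟨K, hK, hKb⟩ := rho_bound P c hc
  obtain ⟨CB, hCB0, hCB⟩ := bad_card P c hc C1 hC1
  obtain ⟨K2, hK2, hK2b⟩ := omega_bound P
  have hsum : Summable (fun d : ℕ => 1 / (d : ℝ) ^ ((41:ℝ)/40)) :=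
    Real.summable_one_div_nat_rpow.2 (by norm_num)
  set Z : ℝ := ∑' d : ℕ, 1 / (d : ℝ) ^ ((41:ℝ)/40) with hZ
  have hZ0 : 0 ≤ Z := tsum_nonneg (fun d => by positivity)
  set f : ℕ → ℝ := fun d => (ArithmeticFunction.moebius d : ℝ) * (rho P d : ℝ) / (d : ℝ) ^ 2 with hf
  have hmu : ∀ d : ℕ, |(ArithmeticFunction.moebius d : ℝ)| ≤ 1 := by
    intro d
    exact_mod_cast (ArithmeticFunction.abs_moebius_le_one (n := d))
  have hfb : ∀ (z : ℝ) (d : ℕ), 1 ≤ z → z ≤ d → ‖f d‖ ≤ K * z ^ (-(19:ℝ)/20) * (1 / (d : ℝ) ^ ((41:ℝ)/40)) := by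
    intro z d hz hzd
    by_cases hd : Squarefree d
    · refine le_trans ?_ (tail_pt K (rho P d) z d hK hz hzd (hKb d hd))
      simp only [hf, Real.norm_eq_abs, abs_div, abs_mul, Nat.abs_cast, abs_pow]
      gcongr
      exact mul_le_of_le_one_left (by positivity) (hmu d)
    · simp only [hf]
      rw [ArithmeticFunction.moebius_eq_zero_of_not_squarefree hd]
      simp
      positivity
  have hfs : Summable (fun d => ‖f d‖) := by
    apply Summable.of_nonneg_of_le (fun _ => norm_nonneg _) _ (hsum.mul_left (K * (1:ℝ) ^ (-(19:ℝ)/20)))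
    intro d
    rcases Nat.eq_zero_or_pos d with h | h
    · subst h; simp [hf]
    · exact hfb 1 d le_rfl (by exact_mod_cast h)
  refine ⟨∑' d, f d, kappa_pos P hadm hfs, 2 * K2 * CB + 2 * P.natDegree + K + K * Z, fun N hN => ?_⟩
  have hN1 : (1:ℝ) ≤ N := by exact_mod_cast hN
  set z : ℝ := (N:ℝ) ^ ((1:ℝ)/3) with hz
  have hz1 : 1 ≤ z := Real.one_le_rpow hN1 (by norm_num)
  have hzf : (⌊z⌋₊ : ℝ) ≤ z := Nat.floor_le (by positivity)
  set Bad := ((Finset.Icc 1 N).filter (fun n : ℕ => ∃ d : ℕ, Squarefree d ∧ (N:ℝ) ^ ((1:ℝ)/3) < d ∧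
        d ^ 2 ∣ (P.eval (n : ℤ)).natAbs)) with hBad
  have hBc := hCB N hN
  -- the count as a sum
  have hcount : ({n : ℕ | 1 ≤ n ∧ n ≤ N ∧ Squarefree (P.eval (n : ℤ))}.ncard : ℝ) =
      ∑ n ∈ Finset.Icc 1 N, (if Squarefree (P.eval (n : ℤ)).natAbs then (1:ℝ) else 0) := by
    rw [Finset.sum_boole]
    congr 1
    rw [← Set.ncard_coe_finset]
    congr 1
    ext n
    simp [and_assoc, Int.squarefree_natAbs]
  set W : ℕ → ℝ := fun n => ∑ d ∈ Finset.Icc 1 ⌊z⌋₊,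
    (if d ^ 2 ∣ (P.eval (n : ℤ)).natAbs then (ArithmeticFunction.moebius d : ℝ) else 0) with hW
  have hWabs : ∀ n, |W n| ≤ (((Finset.Icc 1 ⌊z⌋₊).filter
      (fun d => Squarefree d ∧ d ^ 2 ∣ (P.eval (n : ℤ)).natAbs)).card : ℝ) := by
    intro n
    rw [← Finset.sum_boole]
    refine (Finset.abs_sum_le_sum_abs _ _).trans (Finset.sum_le_sum fun d _ => ?_)
    by_cases h1 : d ^ 2 ∣ (P.eval (n : ℤ)).natAbs
    · by_cases h2 : Squarefree d
      · simp only [h1, h2, and_self, if_true]; exact hmu d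
      · simp [h1, h2]
    · simp [h1]
  have hE : ∀ n ∈ Finset.Icc 1 N, |(if Squarefree (P.eval (n : ℤ)).natAbs then (1:ℝ) else 0) - W n| ≤
      (if n ∈ Bad then 2 * K2 * (N:ℝ) ^ ((1:ℝ)/20) else 0) + (if P.eval (n : ℤ) = 0 then 2 * z else 0) := by
    intro n hn
    have hn' := Finset.mem_Icc.1 hn
    have hi : |(if Squarefree (P.eval (n : ℤ)).natAbs then (1:ℝ) else 0)| ≤ 1 := by split_ifs <;> simp
    have htri := abs_sub (if Squarefree (P.eval (n : ℤ)).natAbs then (1:ℝ) else 0) (W n)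
    by_cases h0 : P.eval (n : ℤ) = 0
    · have hw := hWabs n
      have : (((Finset.Icc 1 ⌊z⌋₊).filter
        (fun d => Squarefree d ∧ d ^ 2 ∣ (P.eval (n : ℤ)).natAbs)).card : ℝ) ≤ ⌊z⌋₊ := by
        have := Finset.card_filter_le (Finset.Icc 1 ⌊z⌋₊) (fun d => Squarefree d ∧ d ^ 2 ∣ (P.eval (n : ℤ)).natAbs)
        rw [Nat.card_Icc] at this
        exact_mod_cast this
      rw [if_pos h0]
      have : (0:ℝ) ≤ (if n ∈ Bad then 2 * K2 * (N:ℝ) ^ ((1:ℝ)/20) else 0) := by split_ifs <;> positivity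
      linarith
    · rw [if_neg h0, add_zero]
      by_cases hb : n ∈ Bad
      · rw [if_pos hb]
        have hw := hWabs n
        have h1 := card_sq_div _ (Int.natAbs_ne_zero.2 h0) ⌊z⌋₊
        have h2 : (((Finset.Icc 1 ⌊z⌋₊).filter
          (fun d => Squarefree d ∧ d ^ 2 ∣ (P.eval (n : ℤ)).natAbs)).card : ℝ) ≤ 
            (2 : ℝ) ^ ((P.eval (n : ℤ)).natAbs.primeFactors.card) := by exact_mod_cast h1
        have h3 := hK2b n N hn'.1 hn'.2 h0
        have h4 : (1:ℝ) ≤ (2 : ℝ) ^ ((P.eval (n : ℤ)).natAbs.primeFactors.card) := one_le_pow₀ (by norm_num)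
        linarith
      · rw [if_neg hb]
        have h1 := moebius_sq_sum _ (Int.natAbs_ne_zero.2 h0) ⌊z⌋₊ (fun d hd hdv => by
          by_contra hlt
          apply hb
          rw [hBad, Finset.mem_filter]
          exact ⟨hn, d, hd, (Nat.floor_lt (by positivity)).1 (not_le.1 hlt), hdv⟩)
        have h2 : W n = (if Squarefree (P.eval (n : ℤ)).natAbs then (1:ℝ) else 0) := by
          have := congrArg (fun x : ℤ => (x : ℝ)) h1
          push_cast at this
          exact this
        rw [h2]; simp
  have hST : |∑ n ∈ Finset.Icc 1 N, (if Squarefree (P.eval (n : ℤ)).natAbs then (1:ℝ) else 0)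
      - ∑ n ∈ Finset.Icc 1 N, W n| ≤ Bad.card * (2 * K2 * (N:ℝ) ^ ((1:ℝ)/20)) + P.natDegree * (2 * z) := by
    rw [← Finset.sum_sub_distrib]
    refine (Finset.abs_sum_le_sum_abs _ _).trans ((Finset.sum_le_sum hE).trans ?_)
    rw [Finset.sum_add_distrib, ← Finset.sum_filter, ← Finset.sum_filter, Finset.sum_const, Finset.sum_const,
      nsmul_eq_mul, nsmul_eq_mul]
    have := zeros_card P hP N
    gcongr
    intro x hx
    exact (Finset.mem_filter.1 hx).2
  have hT : ∑ n ∈ Finset.Icc 1 N, W n = ∑ d ∈ Finset.Icc 1 ⌊z⌋₊, (ArithmeticFunction.moebius d : ℝ) *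
      ((Finset.Icc 1 N).filter (fun n : ℕ => d ^ 2 ∣ (P.eval (n : ℤ)).natAbs)).card := by
    simp only [hW]
    rw [Finset.sum_comm]
    apply Finset.sum_congr rfl
    intro d _
    rw [← Finset.sum_filter, Finset.sum_const, nsmul_eq_mul, mul_comm]
  have hT2 : |∑ n ∈ Finset.Icc 1 N, W n - N * ∑ d ∈ Finset.Icc 1 ⌊z⌋₊, f d| ≤ z * (K * z ^ ((1:ℝ)/40)) := by
    rw [hT, Finset.mul_sum, ← Finset.sum_sub_distrib]
    refine (Finset.abs_sum_le_sum_abs _ _).trans ?_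
    calc _ ≤ ∑ d ∈ Finset.Icc 1 ⌊z⌋₊, K * z ^ ((1:ℝ)/40) := by
          apply Finset.sum_le_sum
          intro d hd
          have hd' := Finset.mem_Icc.1 hd
          have hdz : (d:ℝ) ≤ z := (Nat.le_floor_iff (by positivity)).1 hd'.2
          have h1 := rho_count P d hd'.1 N
          have h2 : ∀ x : ℝ, (ArithmeticFunction.moebius d : ℝ) * x - N * f d = 
            (ArithmeticFunction.moebius d : ℝ) * (x - rho P d * N / (d:ℝ) ^ 2) := by
            intro x; simp only [hf]; ring
          rw [h2, abs_mul]
          by_cases hs : Squarefree d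
          · calc _ ≤ 1 * (rho P d : ℝ) := mul_le_mul (hmu d) h1 (abs_nonneg _) (by norm_num)
              _ ≤ K * (d:ℝ) ^ ((1:ℝ)/40) := by rw [one_mul]; exact hKb d hs
              _ ≤ _ := by gcongr
          · rw [ArithmeticFunction.moebius_eq_zero_of_not_squarefree hs]
            simp
            positivity
      _ = ⌊z⌋₊ * (K * z ^ ((1:ℝ)/40)) := by simp
      _ ≤ _ := by gcongr
  have hT3 : |∑ d ∈ Finset.Icc 1 ⌊z⌋₊, f d - ∑' d, f d| ≤ K * z ^ (-(19:ℝ)/20) * Z := by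
    have h1 := (Summable.of_norm hfs).sum_add_tsum_compl (s := Finset.Icc 1 ⌊z⌋₊)
    rw [← h1, sub_add_cancel_left, abs_neg, tsum_subtype, ← Real.norm_eq_abs]
    apply tsum_of_norm_bounded (hsum.hasSum.mul_left _)
    intro d
    by_cases hd : d ∈ (↑(Finset.Icc 1 ⌊z⌋₊) : Set ℕ)ᶜ
    · rw [Set.indicator_of_mem hd]
      rcases Nat.eq_zero_or_pos d with h | h
      · subst h; simp [hf]
      · apply hfb z d hz1
        simp only [Finset.coe_Icc, Set.mem_compl_iff, Set.mem_Icc, not_and, not_le] at hd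
        exact ((Nat.floor_lt (by positivity)).1 (hd h)).le
    · rw [Set.indicator_of_notMem hd, norm_zero]
      positivity
  have e1 : (N:ℝ) * z ^ (-(19:ℝ)/20) ≤ (N:ℝ) ^ ((3:ℝ)/4) := by
    rw [hz, ← Real.rpow_mul (by positivity), ← Real.rpow_one_add' (by positivity) (by norm_num)]
    exact Real.rpow_le_rpow_of_exponent_le hN1 (by norm_num)
  have e2 : z * z ^ ((1:ℝ)/40) ≤ (N:ℝ) ^ ((3:ℝ)/4) := by
    rw [hz, ← Real.rpow_mul (by positivity), ← Real.rpow_add (by positivity)]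
    exact Real.rpow_le_rpow_of_exponent_le hN1 (by norm_num)
  have e3 : z ≤ (N:ℝ) ^ ((3:ℝ)/4) := Real.rpow_le_rpow_of_exponent_le hN1 (by norm_num)
  have e4 : (N:ℝ) ^ ((7:ℝ)/10) * (N:ℝ) ^ ((1:ℝ)/20) = (N:ℝ) ^ ((3:ℝ)/4) := by
    rw [← Real.rpow_add (by positivity)]; norm_num
  have f1 : (Bad.card : ℝ) * (2 * K2 * (N:ℝ) ^ ((1:ℝ)/20)) ≤ 2 * K2 * CB * (N:ℝ) ^ ((3:ℝ)/4) := by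
    calc _ ≤ (CB * (N : ℝ) ^ ((7:ℝ)/10)) * (2 * K2 * (N:ℝ) ^ ((1:ℝ)/20)) := by gcongr
      _ = _ := by rw [← e4]; ring
  have f2 : (P.natDegree : ℝ) * (2 * z) ≤ 2 * P.natDegree * (N:ℝ) ^ ((3:ℝ)/4) := by
    rw [mul_comm 2 (P.natDegree : ℝ), mul_assoc]
    gcongr
  have f3 : z * (K * z ^ ((1:ℝ)/40)) ≤ K * (N:ℝ) ^ ((3:ℝ)/4) := by
    calc _ = K * (z * z ^ ((1:ℝ)/40)) := by ring
      _ ≤ _ := by gcongr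
  have f4 : |(N:ℝ) * ∑ d ∈ Finset.Icc 1 ⌊z⌋₊, f d - (∑' d, f d) * N| ≤ K * Z * (N:ℝ) ^ ((3:ℝ)/4) := by
    calc _ = N * |∑ d ∈ Finset.Icc 1 ⌊z⌋₊, f d - ∑' d, f d| := by
          rw [mul_comm (∑' d, f d), ← mul_sub, abs_mul, Nat.abs_cast]
      _ ≤ N * (K * z ^ (-(19:ℝ)/20) * Z) := by gcongr
      _ = K * Z * (N * z ^ (-(19:ℝ)/20)) := by ring
      _ ≤ _ := by gcongr
  rw [hcount]
  have g1 := abs_le.1 (hST.trans (add_le_add f1 f2))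
  have g2 := abs_le.1 (hT2.trans f3)
  have g3 := abs_le.1 f4
  rw [abs_le]
  constructor <;> linarith [g1.1, g1.2, g2.1, g2.2, g3.1, g3.2]

lemma pell_pair (D k x1 y1 x2 y2 : ℤ) (hD : 4 ≤ D) (hk : k ≠ 0) (hx1 : 0 < x1) (hy1 : 0 < y1) (hx2 : 0 < x2)
    (hy2 : 0 < y2) (h1 : x1 ^ 2 - D * y1 ^ 2 = k) (h2 : x2 ^ 2 - D * y2 ^ 2 = k)
    (hx : k ∣ x2 - x1) (hy : k ∣ y2 - y1) : x1 = x2 ∨ 2 * x1 ≤ x2 ∨ 2 * x2 ≤ x1 := by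
  obtain ⟨u, hu⟩ := hx
  obtain ⟨v, hv⟩ := hy
  obtain ⟨s, hs⟩ : ∃ s, s = 1 + x1 * u - D * y1 * v := ⟨_, rfl⟩
  obtain ⟨t, ht⟩ : ∃ t, t = x1 * v - y1 * u := ⟨_, rfl⟩
  have es : k * s = x1 * x2 - D * y1 * y2 := by
    rw [hs]; linear_combination -h1 - x1 * hu + D * y1 * hv
  have et : k * t = x1 * y2 - x2 * y1 := by
    rw [ht]; linear_combination -x1 * hv + y1 * hu
  have e1 : x2 = x1 * s + D * y1 * t := by
    apply mul_left_cancel₀ hk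
    linear_combination -x1 * es - D * y1 * et - x2 * h1
  have e2 : x1 = x2 * s - D * y2 * t := by
    apply mul_left_cancel₀ hk
    linear_combination -x2 * es + D * y2 * et - x1 * h2
  have e3 : s ^ 2 - D * t ^ 2 = 1 := by
    apply mul_left_cancel₀ (pow_ne_zero 2 hk)
    have : (k * s) ^ 2 - D * (k * t) ^ 2 = k * k := by
      rw [es, et]
      nth_rewrite 1 [← h1]
      rw [← h2]
      ring
    linear_combination this
  rcases eq_or_ne t 0 with h0 | h0
  · left
    subst h0
    have : s = 1 ∨ s = -1 := by
      have h5 : (s - 1) * (s + 1) = 0 := by linear_combination e3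
      rcases mul_eq_zero.1 h5 with h | h
      · left; linarith
      · right; linarith
    rcases this with h | h
    · rw [h] at e1; linarith
    · rw [h] at e1; linarith
  · right
    have ht2 : 1 ≤ t ^ 2 := by have := sq_pos_of_ne_zero h0; omega
    have hs2 : 5 ≤ s ^ 2 := by nlinarith
    have hsa : 2 ≤ s ∨ s ≤ -2 := by
      by_contra h
      push Not at h
      have : -1 ≤ s ∧ s ≤ 1 := by omega
      nlinarith
    have hDy1 : 0 < D * y1 := by positivity
    have hDy2 : 0 < D * y2 := by positivity
    rcases hsa with h | h
    · rcases lt_or_gt_of_ne h0 with h' | h'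
      · right
        nlinarith
      · left
        nlinarith
    · exfalso
      rcases lt_or_gt_of_ne h0 with h' | h'
      · nlinarith
      · nlinarith

lemma pell_card (D k : ℤ) (hD : 4 ≤ D) (hk : k ≠ 0) (X : ℕ) (S : Finset ℕ) (x y : ℕ → ℤ)
    (hinj : Set.InjOn x S) (hx : ∀ n ∈ S, 0 < x n) (hy : ∀ n ∈ S, 0 < y n) (hX : ∀ n ∈ S, x n ≤ X)
    (he : ∀ n ∈ S, x n ^ 2 - D * y n ^ 2 = k) : S.card ≤ k.natAbs ^ 2 * (Nat.log 2 X + 1) := by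
  classical
  have : NeZero k.natAbs := ⟨Int.natAbs_ne_zero.2 hk⟩
  have hc : (Finset.univ ×ˢ (Finset.univ ×ˢ Finset.range (Nat.log 2 X + 1)) :
      Finset (ZMod k.natAbs × ZMod k.natAbs × ℕ)).card = k.natAbs ^ 2 * (Nat.log 2 X + 1) := by
    simp [Finset.card_product, ZMod.card]; ring
  rw [← hc]
  apply Finset.card_le_card_of_injOn (fun n => ((x n : ZMod k.natAbs), (y n : ZMod k.natAbs), Nat.log 2 (x n).toNat))
  · intro n hn
    have := hX n hn
    simp only [Finset.coe_product, Set.mem_prod, Finset.coe_univ, Set.mem_univ, true_and, Finset.coe_range, Set.mem_Iio]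
    have : (x n).toNat ≤ X := by omega
    have := Nat.log_mono_right (b := 2) this
    omega
  · intro m hm n hn h
    simp only [Prod.mk.injEq] at h
    obtain ⟨h1, h2, h3⟩ := h
    rw [ZMod.intCast_eq_intCast_iff_dvd_sub, Int.natCast_natAbs, abs_dvd] at h1 h2
    apply hinj hm hn
    have key : ∀ i j : ℤ, 0 < i → 0 < j → 2 * i ≤ j → Nat.log 2 i.toNat ≠ Nat.log 2 j.toNat := by
      intro i j hi hj hij
      have h5 : i.toNat * 2 ≤ j.toNat := by omega
      have := Nat.log_mono_right (b := 2) h5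
      rw [Nat.log_mul_base (by norm_num) (by omega)] at this
      omega
    rcases pell_pair D k _ _ _ _ hD hk (hx m hm) (hy m hm) (hx n hn) (hy n hn) (he m hm) (he n hn) h1 h2 with h | h | h
    · exact h
    · exact absurd h3 (key _ _ (hx m hm) (hx n hn) h)
    · exact absurd h3.symm (key _ _ (hx n hn) (hx m hm) h)

lemma rho_le_of_col (P : Polynomial ℤ) (p k : ℕ) (hp : 0 < p) (col : ℕ → Fin k)
    (h : ∀ n n' : ℕ, (p : ℤ) ^ 2 ∣ P.eval (n : ℤ) → (p : ℤ) ^ 2 ∣ P.eval (n' : ℤ) → col n = col n' →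
      (p : ℤ) ^ 2 ∣ (n : ℤ) - n') : rho P p ≤ k := by
  classical
  unfold rho
  rw [card_roots_eq_count P _ (by positivity), Nat.count_eq_card_filter_range]
  have : k = (Finset.univ : Finset (Fin k)).card := by simp
  rw [this]
  apply Finset.card_le_card_of_injOn col (by intro _ _; simp)
  intro m hm n hn hmn
  simp only [Finset.coe_filter, Finset.mem_range, Set.mem_ofPred_eq] at hm hn
  push_cast at hm hn
  have h1 := h m n hm.2 hn.2 hmn
  have h2 : (n : ℤ) ≡ m [ZMOD ((p ^ 2 : ℕ) : ℤ)] := by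
    rw [Int.modEq_iff_dvd]; exact_mod_cast h1
  rw [Int.natCast_modEq_iff] at h2
  exact (Nat.ModEq.eq_of_lt_of_lt h2 hn.1 hm.1).symm

lemma rho_le_sq (P : Polynomial ℤ) (p : ℕ) (hp : 0 < p) : rho P p ≤ p ^ 2 := by
  unfold rho
  rw [card_roots_eq_count P _ (by positivity)]
  exact Nat.count_le _

lemma rho_le_of_large (P : Polynomial ℤ) (B k : ℕ) (h : ∀ p, p.Prime → B < p → rho P p ≤ k) :
    ∀ p, p.Prime → rho P p ≤ B ^ 2 + k := by
  intro p hp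
  by_cases hB : B < p
  · exact (h p hp hB).trans (by omega)
  · have h1 := rho_le_sq P p hp.pos
    have h2 : p ^ 2 ≤ B ^ 2 := Nat.pow_le_pow_left (by omega) 2
    omega

lemma lin_prime {k : ℕ} (a b : Fin k → ℤ) (P : Polynomial ℤ)
    (hP : P = ∏ i, (Polynomial.C (a i) * Polynomial.X + Polynomial.C (b i)))
    (p : ℕ) (hp : p.Prime) (hR : ∀ i j, i ≠ j → ¬ (p : ℤ) ∣ a i * b j - a j * b i) (n : ℤ)
    (h : (p : ℤ) ^ 2 ∣ P.eval n) : ∃ i, (p : ℤ) ^ 2 ∣ a i * n + b i := by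
  classical
  have hpz : Prime (p : ℤ) := Nat.prime_iff_prime_int.1 hp
  have he : P.eval n = ∏ i, (a i * n + b i) := by
    rw [hP, Polynomial.eval_prod]; simp
  rw [he] at h
  obtain ⟨i, _, hi⟩ := hpz.exists_mem_finset_dvd ((dvd_pow_self _ two_ne_zero).trans h)
  refine ⟨i, ?_⟩
  rw [← Finset.mul_prod_erase _ _ (Finset.mem_univ i)] at h
  apply IsCoprime.dvd_of_dvd_mul_right _ h
  apply IsCoprime.pow_left
  apply IsCoprime.prod_right
  intro j hj
  rw [Prime.coprime_iff_not_dvd hpz]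
  intro hj2
  apply hR i j (Finset.ne_of_mem_erase hj).symm
  have : a i * b j - a j * b i = a i * (a j * n + b j) - a j * (a i * n + b i) := by ring
  rw [this]
  exact dvd_sub (hj2.mul_left _) (hi.mul_left _)

lemma lin_case {k : ℕ} (hk : 1 ≤ k) (a b : Fin k → ℤ) (P : Polynomial ℤ) (hP0 : P ≠ 0) (ha : ∀ i, a i ≠ 0)
    (hP : P = ∏ i, (Polynomial.C (a i) * Polynomial.X + Polynomial.C (b i)))
    (hR : ∀ i j, i ≠ j → a i * b j - a j * b i ≠ 0)
    (hadm : ¬ ∃ p : ℕ, p.Prime ∧ ∀ n : ℕ, 0 < n → (p : ℤ)^2 ∣ P.eval (n : ℤ)) :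
    ∃ κ : ℝ, 0 < κ ∧ ∃ C : ℝ, ∀ N : ℕ, 1 ≤ N →
      |({n : ℕ | 1 ≤ n ∧ n ≤ N ∧ Squarefree (P.eval (n : ℤ))}.ncard : ℝ) - κ * N| ≤
        C * (N : ℝ) ^ ((3:ℝ)/4) := by
  classical
  obtain ⟨B, hBa, hBR⟩ : ∃ B : ℕ, (∀ i, (a i).natAbs ≤ B) ∧ (∀ i j, (a i * b j - a j * b i).natAbs ≤ B) := by
    refine ⟨∑ i, (a i).natAbs + ∑ i, ∑ j, (a i * b j - a j * b i).natAbs, ?_, ?_⟩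
    · intro i
      exact (Finset.single_le_sum (f := fun i => (a i).natAbs) (fun _ _ => Nat.zero_le _) (Finset.mem_univ i)).trans (by omega)
    · intro i j
      have h1 := Finset.single_le_sum (f := fun j => (a i * b j - a j * b i).natAbs) (fun _ _ => Nat.zero_le _) (Finset.mem_univ j)
      have h2 := Finset.single_le_sum (f := fun i => ∑ j, (a i * b j - a j * b i).natAbs) (fun _ _ => Nat.zero_le _) (Finset.mem_univ i)
      omega
  have hnd : ∀ (p : ℕ) (t : ℤ), B < p → t ≠ 0 → t.natAbs ≤ B → ¬ (p : ℤ) ∣ t := by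
    intro p t hp ht htB hd
    have := Nat.le_of_dvd (Int.natAbs_pos.2 ht) (Int.natCast_dvd.1 hd)
    omega
  have hsplit : ∀ p : ℕ, p.Prime → B < p → ∀ n : ℤ, (p : ℤ) ^ 2 ∣ P.eval n → ∃ i, (p : ℤ) ^ 2 ∣ a i * n + b i :=
    fun p hp hB n h => lin_prime a b P hP p hp (fun i j hij => hnd p _ hB (hR i j hij) (hBR i j)) n h
  have hrho := rho_le_of_large P B k (by
    intro p hp hB
    have : ∀ n : ℕ, ∃ i : Fin k, (p : ℤ) ^ 2 ∣ P.eval (n : ℤ) → (p : ℤ) ^ 2 ∣ a i * n + b i := by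
      intro n
      by_cases h : (p : ℤ) ^ 2 ∣ P.eval (n : ℤ)
      · obtain ⟨i, hi⟩ := hsplit p hp hB n h
        exact ⟨i, fun _ => hi⟩
      · exact ⟨⟨0, hk⟩, fun h' => absurd h' h⟩
    choose col hcol using this
    apply rho_le_of_col P p k hp.pos col
    intro n n' h h' heq
    have h1 := hcol n h
    have h2 := hcol n' h'
    rw [← heq] at h2
    have h3 : (p : ℤ) ^ 2 ∣ a (col n) * ((n : ℤ) - n') := by
      have e : a (col n) * ((n : ℤ) - n') = (a (col n) * n + b (col n)) - (a (col n) * n' + b (col n)) := by ring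
      rw [e]
      exact dvd_sub h1 h2
    have hc : IsCoprime ((p : ℤ) ^ 2) (a (col n)) := by
      apply IsCoprime.pow_left
      rw [Prime.coprime_iff_not_dvd (Nat.prime_iff_prime_int.1 hp)]
      exact hnd p _ hB (ha _) (hBa _)
    exact hc.dvd_of_dvd_mul_left h3)
  obtain ⟨A, hA1, hA⟩ : ∃ A : ℕ, 1 ≤ A ∧ ∀ i, (a i).natAbs + (b i).natAbs ≤ A := by
    refine ⟨∑ i, ((a i).natAbs + (b i).natAbs) + 1, by omega, fun i => ?_⟩
    exact (Finset.single_le_sum (f := fun i => (a i).natAbs + (b i).natAbs) (fun _ _ => Nat.zero_le _) (Finset.mem_univ i)).trans (by omega)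
  refine main_abs P hP0 hadm _ hrho (P.natDegree + (A + B : ℝ) ^ 3) ?_
  intro N hN
  have hN1 : (1:ℝ) ≤ N := by exact_mod_cast hN
  set w : ℝ := (N:ℝ) ^ ((1:ℝ)/3) with hw
  have hw1 : 1 ≤ w := Real.one_le_rpow hN1 (by norm_num)
  have hw3 : w ^ 3 = N := by
    rw [hw, ← Real.rpow_natCast, ← Real.rpow_mul (by positivity)]; norm_num
  have hone : (1:ℝ) ≤ (N : ℝ) ^ ((7:ℝ)/10) := Real.one_le_rpow hN1 (by norm_num)
  refine le_trans ?_ (le_mul_of_one_le_right (by positivity) hone)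
  by_cases hlt : w < A + B
  · calc _ ≤ (N : ℝ) := by
          have := Finset.card_filter_le (Finset.Icc 1 N) (fun n : ℕ => ∃ p : ℕ, p.Prime ∧ w ^ 2 < p ∧
            p ^ 2 ∣ (P.eval (n : ℤ)).natAbs)
          rw [Nat.card_Icc] at this
          exact_mod_cast this
      _ = w ^ 3 := hw3.symm
      _ ≤ (A + B : ℝ) ^ 3 := by gcongr
      _ ≤ _ := by simp
  · push Not at hlt
    have hB0 : (0:ℝ) ≤ B := by positivity
    have hA0 : (1:ℝ) ≤ A := by exact_mod_cast hA1
    have : ((Finset.Icc 1 N).filter (fun n : ℕ => ∃ p : ℕ, p.Prime ∧ w ^ 2 < p ∧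
        p ^ 2 ∣ (P.eval (n : ℤ)).natAbs)).card ≤ P.natDegree := by
      refine le_trans (Finset.card_le_card ?_) (zeros_card P hP0 N)
      intro n hn
      simp only [Finset.mem_filter, Finset.mem_Icc] at hn ⊢
      obtain ⟨hn1, p, hp, hwp, hdv⟩ := hn
      refine ⟨hn1, ?_⟩
      have hBp : B < p := by
        have : (B:ℝ) < p := by nlinarith
        exact_mod_cast this
      have hdv' : (p : ℤ) ^ 2 ∣ P.eval (n : ℤ) := by
        rw [← Int.natCast_dvd] at hdv
        exact_mod_cast hdv
      obtain ⟨i, hi⟩ := hsplit p hp hBp n hdv'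
      by_cases h0 : a i * n + b i = 0
      · have he : P.eval (n : ℤ) = ∏ i, (a i * n + b i) := by
          rw [hP, Polynomial.eval_prod]; simp
        rw [he]
        exact Finset.prod_eq_zero (Finset.mem_univ i) h0
      · exfalso
        have h1 : p ^ 2 ≤ (a i * n + b i).natAbs := by
          apply Nat.le_of_dvd (Int.natAbs_pos.2 h0)
          rw [← Int.natCast_dvd]
          exact_mod_cast hi
        have h2 : (a i * n + b i).natAbs ≤ A * N := by
          have h3 := Int.natAbs_add_le (a i * n) (b i)
          rw [Int.natAbs_mul, Int.natAbs_natCast] at h3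
          have h4 := hA i
          calc _ ≤ (a i).natAbs * n + (b i).natAbs := h3
            _ ≤ (a i).natAbs * N + (b i).natAbs * N := by
              apply Nat.add_le_add
              · exact Nat.mul_le_mul_left _ hn1.2
              · exact Nat.le_mul_of_pos_right _ (by omega)
            _ = ((a i).natAbs + (b i).natAbs) * N := by ring
            _ ≤ _ := Nat.mul_le_mul_right _ h4
        have h5 : (p:ℝ) ^ 2 ≤ A * w ^ 3 := by
          rw [hw3]; exact_mod_cast h1.trans h2
        have h6 : (w ^ 2) ^ 2 < (p:ℝ) ^ 2 := by gcongr
        have h7 : (A:ℝ) * w ^ 3 ≤ w * w ^ 3 := by gcongr; linarith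
        nlinarith
    have h' : (((Finset.Icc 1 N).filter (fun n : ℕ => ∃ p : ℕ, p.Prime ∧ w ^ 2 < p ∧
        p ^ 2 ∣ (P.eval (n : ℤ)).natAbs)).card : ℝ) ≤ P.natDegree := by exact_mod_cast this
    refine h'.trans ?_
    have : (0:ℝ) ≤ (A + B : ℝ) ^ 3 := by positivity
    linarith

lemma quad_disc (P : Polynomial ℤ) (hdeg : P.natDegree = 2) (hirr : Irreducible P) (a b c : ℤ)
    (hP : P = Polynomial.C a * Polynomial.X ^ 2 + Polynomial.C b * Polynomial.X + Polynomial.C c) :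
    b ^ 2 - 4 * a * c ≠ 0 := by
  intro h
  have ha : a ≠ 0 := by
    rintro rfl
    have : P.natDegree ≤ 1 := by
      rw [hP]
      simp only [Polynomial.C_0, zero_mul, zero_add]
      exact Polynomial.natDegree_linear_le
    omega
  have h1 : Polynomial.C (4 * a) * P = (Polynomial.C (2 * a) * Polynomial.X + Polynomial.C b) ^ 2 := by
    have hc : Polynomial.C (b ^ 2 - 4 * a * c) = 0 := by rw [h]; simp
    rw [hP]
    simp only [map_mul, map_sub, map_pow, map_ofNat] at hc ⊢
    linear_combination -hc
  have h2 : P ∣ Polynomial.C (2 * a) * Polynomial.X + Polynomial.C b :=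
    hirr.prime.dvd_of_dvd_pow (n := 2) (h1 ▸ Dvd.intro_left _ rfl)
  have hd : (Polynomial.C (2 * a) * Polynomial.X + Polynomial.C b).natDegree = 1 :=
    Polynomial.natDegree_linear (by simpa using ha)
  have := Polynomial.natDegree_le_of_dvd h2 (by rintro h0; rw [h0] at hd; simp at hd)
  omega

set_option maxHeartbeats 1000000 in
lemma quad_case (P : Polynomial ℤ) (hdeg : P.natDegree = 2) (hirr : Irreducible P) (hlead : 0 < P.leadingCoeff)
    (hadm : ¬ ∃ p : ℕ, p.Prime ∧ ∀ n : ℕ, 0 < n → (p : ℤ)^2 ∣ P.eval (n : ℤ)) :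
    ∃ κ : ℝ, 0 < κ ∧ ∃ C : ℝ, ∀ N : ℕ, 1 ≤ N →
      |({n : ℕ | 1 ≤ n ∧ n ≤ N ∧ Squarefree (P.eval (n : ℤ))}.ncard : ℝ) - κ * N| ≤
        C * (N : ℝ) ^ ((3:ℝ)/4) := by
  classical
  obtain ⟨a, ha⟩ : ∃ a, a = P.coeff 2 := ⟨_, rfl⟩
  obtain ⟨b, hb⟩ : ∃ b, b = P.coeff 1 := ⟨_, rfl⟩
  obtain ⟨c, hc⟩ : ∃ c, c = P.coeff 0 := ⟨_, rfl⟩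
  have hP : P = Polynomial.C a * Polynomial.X ^ 2 + Polynomial.C b * Polynomial.X + Polynomial.C c := by
    rw [ha, hb, hc]
    exact Polynomial.eq_quadratic_of_degree_le_two 
      (Polynomial.natDegree_le_iff_degree_le.1 hdeg.le)
  have ha0 : 0 < a := by
    rw [Polynomial.leadingCoeff, hdeg] at hlead
    omega
  have hev : ∀ n : ℤ, P.eval n = a * n ^ 2 + b * n + c := by
    intro n; rw [hP]; simp
  obtain ⟨Δ, hΔ⟩ : ∃ Δ, Δ = b ^ 2 - 4 * a * c := ⟨_, rfl⟩
  have hΔ0 : Δ ≠ 0 := hΔ ▸ quad_disc P hdeg hirr a b c hP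
  have hsq : ∀ n : ℤ, (2 * a * n + b) ^ 2 - Δ = 4 * a * P.eval n := by
    intro n; rw [hev, hΔ]; ring
  have hrho := rho_le_of_large P (2 + a.natAbs + Δ.natAbs) 2 (by
    intro p hp hB
    have hpz := Nat.prime_iff_prime_int.1 hp
    have hnd : ∀ (t : ℤ), t ≠ 0 → t.natAbs < p → ¬ (p : ℤ) ∣ t := by
      intro t ht htB hd
      have := Nat.le_of_dvd (Int.natAbs_pos.2 ht) (Int.natCast_dvd.1 hd)
      omega
    have hp2 : ¬ (p : ℤ) ∣ 2 := hnd 2 (by norm_num) (by simp; omega)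
    have hpa : ¬ (p : ℤ) ∣ a := hnd a ha0.ne' (by omega)
    have hpΔ : ¬ (p : ℤ) ∣ Δ := hnd Δ hΔ0 (by omega)
    have hc2 : IsCoprime ((p : ℤ) ^ 2) (2 * a) := by
      apply IsCoprime.pow_left
      rw [Prime.coprime_iff_not_dvd hpz]
      intro h
      rcases hpz.dvd_or_dvd h with h | h
      · exact hp2 h
      · exact hpa h
    have key : ∀ n n' : ℤ, (p : ℤ) ^ 2 ∣ P.eval n → (p : ℤ) ^ 2 ∣ P.eval n' →
        (p : ℤ) ^ 2 ∣ n - n' ∨ (p : ℤ) ^ 2 ∣ (2 * a * n + b) + (2 * a * n' + b) := by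
      intro n n' h h'
      have h1 : (p : ℤ) ^ 2 ∣ ((2 * a * n + b) + (2 * a * n' + b)) * (2 * a * (n - n')) := by
        have e : ((2 * a * n + b) + (2 * a * n' + b)) * (2 * a * (n - n')) = 4 * a * P.eval n - 4 * a * P.eval n' := by
          rw [← hsq, ← hsq]; ring
        rw [e]
        exact dvd_sub (h.mul_left _) (h'.mul_left _)
      by_cases hs : (p : ℤ) ∣ (2 * a * n + b) + (2 * a * n' + b)
      · right
        have : IsCoprime ((p : ℤ) ^ 2) (2 * a * (n - n')) := by
          apply IsCoprime.pow_left
          rw [Prime.coprime_iff_not_dvd hpz]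
          intro hd
          have h2 : (p : ℤ) ∣ 2 * (2 * a * n + b) := by
            have := dvd_add hs hd
            have e : 2 * (2 * a * n + b) = (2 * a * n + b) + (2 * a * n' + b) + 2 * a * (n - n') := by ring
            rw [e]; exact this
          rcases hpz.dvd_or_dvd h2 with h3 | h3
          · exact hp2 h3
          · apply hpΔ
            have e : Δ = (2 * a * n + b) * (2 * a * n + b) - 4 * a * P.eval n := by rw [← hsq]; ring
            rw [e]
            exact dvd_sub (h3.mul_left _) (((dvd_pow_self _ two_ne_zero).trans h).mul_left _)
        exact this.dvd_of_dvd_mul_right h1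
      · left
        have : IsCoprime ((p : ℤ) ^ 2) ((2 * a * n + b) + (2 * a * n' + b)) := by
          apply IsCoprime.pow_left
          rwa [Prime.coprime_iff_not_dvd hpz]
        exact hc2.dvd_of_dvd_mul_left (this.dvd_of_dvd_mul_left h1)
    by_cases hex : ∃ n0 : ℕ, (p : ℤ) ^ 2 ∣ P.eval (n0 : ℤ)
    · obtain ⟨n0, hn0⟩ := hex
      apply rho_le_of_col P p 2 hp.pos (fun n => if (p : ℤ) ^ 2 ∣ (n : ℤ) - n0 then 0 else 1)
      intro n n' h h' heq
      by_cases h1 : (p : ℤ) ^ 2 ∣ (n : ℤ) - n0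
      · by_cases h2 : (p : ℤ) ^ 2 ∣ (n' : ℤ) - n0
        · have := dvd_sub h1 h2
          simpa using this
        · simp [h1, h2] at heq
      · by_cases h2 : (p : ℤ) ^ 2 ∣ (n' : ℤ) - n0
        · simp [h1, h2] at heq
        · have h3 := (key n n0 h hn0).resolve_left h1
          have h4 := (key n' n0 h' hn0).resolve_left h2
          have h5 := dvd_sub h3 h4
          have e : (2 * a * n + b) + (2 * a * n0 + b) - ((2 * a * n' + b) + (2 * a * n0 + b)) = 2 * a * ((n:ℤ) - n') := by ring
          rw [e] at h5
          exact hc2.dvd_of_dvd_mul_left h5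
    · push Not at hex
      apply rho_le_of_col P p 2 hp.pos (fun _ => 0)
      intro n n' h
      exact absurd h (hex n))
  obtain ⟨A, hA⟩ : ∃ A : ℕ, A = a.natAbs + b.natAbs + c.natAbs := ⟨_, rfl⟩
  obtain ⟨n0, hn0⟩ : ∃ n0 : ℕ, n0 = b.natAbs + c.natAbs + 1 := ⟨_, rfl⟩
  have hAz : (A : ℤ) = a + |b| + |c| := by rw [hA]; push_cast; rw [abs_of_pos ha0]
  have hn0z : (n0 : ℤ) = |b| + |c| + 1 := by rw [hn0]; push_cast; rfl
  have hA1 : 1 ≤ A := by omega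
  have hbb := abs_le.1 (le_refl |b|)
  have hcc := abs_le.1 (le_refl |c|)
  have hb0 := abs_nonneg b
  have hc0 := abs_nonneg c
  have hpos : ∀ n : ℕ, n0 ≤ n → 0 < P.eval (n : ℤ) ∧ 0 < 2 * a * n + b := by
    intro n hn
    have hn' : |b| + |c| + 1 ≤ (n : ℤ) := by rw [← hn0z]; exact_mod_cast hn
    have h1 : (n : ℤ) ≤ a * n := le_mul_of_one_le_left (by omega) ha0
    constructor
    · rw [hev]
      have h2 : (n : ℤ) * n ≤ a * n * n := mul_le_mul_of_nonneg_right h1 (by omega)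
      nlinarith [mul_nonneg hc0 (by omega : (0:ℤ) ≤ n - 1)]
    · nlinarith
  have hub : ∀ n N : ℕ, 1 ≤ n → n ≤ N → P.eval (n : ℤ) ≤ A * (N:ℤ) ^ 2 ∧ 2 * a * n + b ≤ 2 * A * N := by
    intro n N hn hN
    have hn' : (1:ℤ) ≤ n := by exact_mod_cast hn
    have hN' : (n:ℤ) ≤ N := by exact_mod_cast hN
    constructor
    · have h1 : (n:ℤ) ^ 2 ≤ (N:ℤ) ^ 2 := by gcongr
      have h2 : (n:ℤ) ≤ (n:ℤ) ^ 2 := by nlinarith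
      have h3 : b * n ≤ |b| * (n:ℤ) ^ 2 := by nlinarith
      have h4 : c ≤ |c| * (n:ℤ) ^ 2 := by nlinarith
      rw [hev]
      calc a * (n:ℤ) ^ 2 + b * n + c ≤ A * (n:ℤ) ^ 2 := by rw [hAz]; linarith
        _ ≤ _ := by gcongr
    · have h1 : (2 * A : ℤ) * n ≤ 2 * A * N := by gcongr
      rw [hAz] at h1 ⊢
      nlinarith
  -- solutions for fixed cofactor
  have hS : ∀ (m N : ℕ), 1 ≤ m → 1 ≤ N →
      ((Finset.Icc 1 N).filter (fun n : ℕ => n0 ≤ n ∧ ∃ y : ℤ, 0 < y ∧ P.eval (n : ℤ) = y ^ 2 * m)).card ≤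
        Δ.natAbs ^ 2 * (Nat.log 2 (2 * A * N) + 1) := by
    intro m N hm hN
    have hch : ∀ n : ℕ, ∃ y : ℤ, (n0 ≤ n ∧ ∃ y : ℤ, 0 < y ∧ P.eval (n : ℤ) = y ^ 2 * m) →
        0 < y ∧ P.eval (n : ℤ) = y ^ 2 * m := by
      intro n
      by_cases h : n0 ≤ n ∧ ∃ y : ℤ, 0 < y ∧ P.eval (n : ℤ) = y ^ 2 * m
      · obtain ⟨y, hy⟩ := h.2
        exact ⟨y, fun _ => hy⟩
      · exact ⟨0, fun h' => absurd h' h⟩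
    choose y hy using hch
    apply pell_card (4 * a * m) Δ _ hΔ0 (2 * A * N) _ (fun n => 2 * a * n + b) y
    · intro i _ j _ hij
      simp only at hij
      have : (2 * a) * ((i : ℤ) - j) = 0 := by linarith
      rcases mul_eq_zero.1 this with h | h
      · omega
      · omega
    · intro n hn
      exact (hpos n (Finset.mem_filter.1 hn).2.1).2
    · intro n hn
      exact (hy n (Finset.mem_filter.1 hn).2).1
    · intro n hn
      have := Finset.mem_Icc.1 (Finset.mem_filter.1 hn).1
      push_cast
      exact (hub n N this.1 this.2).2
    · intro n hn
      have h1 := (hy n (Finset.mem_filter.1 hn).2).2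
      have h2 := hsq n
      rw [h1] at h2
      linear_combination h2
    · have : (1:ℤ) ≤ m := by exact_mod_cast hm
      nlinarith
  refine main_abs P hirr.ne_zero hadm _ hrho
    (n0 + A * ((Δ.natAbs : ℝ) ^ 2 * (60 * (2 * A : ℝ) ^ ((1:ℝ)/30) + 1))) ?_
  intro N hN
  have hN1 : (1:ℝ) ≤ N := by exact_mod_cast hN
  have hA1' : (1:ℝ) ≤ A := by exact_mod_cast hA1
  set w : ℝ := (N:ℝ) ^ ((1:ℝ)/3) with hw
  have hw1 : 1 ≤ w := Real.one_le_rpow hN1 (by norm_num)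
  have hw3 : w ^ 3 = N := by
    rw [hw, ← Real.rpow_natCast, ← Real.rpow_mul (by positivity)]; norm_num
  have hone : (1:ℝ) ≤ (N : ℝ) ^ ((7:ℝ)/10) := Real.one_le_rpow hN1 (by norm_num)
  have hsub : ((Finset.Icc 1 N).filter (fun n : ℕ => ∃ p : ℕ, p.Prime ∧ w ^ 2 < p ∧
        p ^ 2 ∣ (P.eval (n : ℤ)).natAbs)) ⊆ Finset.range n0 ∪ 
      (Finset.Icc 1 ⌊A * w ^ 2⌋₊).biUnion (fun m => (Finset.Icc 1 N).filter
        (fun n : ℕ => n0 ≤ n ∧ ∃ y : ℤ, 0 < y ∧ P.eval (n : ℤ) = y ^ 2 * m)) := by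
    intro n hn
    simp only [Finset.mem_union, Finset.mem_range, Finset.mem_biUnion]
    by_cases hlt : n < n0
    · left; exact hlt
    right
    push Not at hlt
    obtain ⟨hnN, p, hp, hwp, hdv⟩ := Finset.mem_filter.1 hn
    have hnN' := Finset.mem_Icc.1 hnN
    obtain ⟨m, hm⟩ := hdv
    have hp0 := (hpos n hlt).1
    have hPe : P.eval (n : ℤ) = (p : ℤ) ^ 2 * m := by
      have : ((P.eval (n : ℤ)).natAbs : ℤ) = P.eval (n : ℤ) := Int.natAbs_of_nonneg hp0.le
      rw [← this, hm]; push_cast; ring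
    refine ⟨m, ?_, ?_⟩
    · rw [Finset.mem_Icc]
      constructor
      · rcases Nat.eq_zero_or_pos m with h | h
        · subst h; simp at hPe; omega
        · exact h
      · apply Nat.le_floor
        have h1 := (hub n N hnN'.1 hnN'.2).1
        rw [hPe] at h1
        have h2 : (p:ℝ) ^ 2 * m ≤ A * (N:ℝ) ^ 2 := by exact_mod_cast h1
        rw [← hw3] at h2
        have h3 : (w ^ 2) ^ 2 * m ≤ (p:ℝ) ^ 2 * m := by gcongr
        have h4 : w ^ 4 * m ≤ w ^ 4 * (A * w ^ 2) := by nlinarith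
        exact le_of_mul_le_mul_left h4 (by positivity)
    · exact Finset.mem_filter.2 ⟨hnN, hlt, p, by exact_mod_cast hp.pos, hPe⟩
  have hcard := (Finset.card_le_card hsub).trans (Finset.card_union_le _ _)
  have hbi : ((Finset.Icc 1 ⌊A * w ^ 2⌋₊).biUnion (fun m => (Finset.Icc 1 N).filter
        (fun n : ℕ => n0 ≤ n ∧ ∃ y : ℤ, 0 < y ∧ P.eval (n : ℤ) = y ^ 2 * m))).card ≤
      ⌊A * w ^ 2⌋₊ * (Δ.natAbs ^ 2 * (Nat.log 2 (2 * A * N) + 1)) := by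
    refine (Finset.card_biUnion_le_card_mul _ _ _ ?_).trans (le_of_eq (by rw [Nat.card_Icc]; rfl))
    intro m hm
    exact hS m N (Finset.mem_Icc.1 hm).1 hN
  rw [Finset.card_range] at hcard
  have hcard2 : (((Finset.Icc 1 N).filter (fun n : ℕ => ∃ p : ℕ, p.Prime ∧ w ^ 2 < p ∧
        p ^ 2 ∣ (P.eval (n : ℤ)).natAbs)).card : ℝ) ≤
      n0 + (⌊A * w ^ 2⌋₊ : ℝ) * ((Δ.natAbs : ℝ) ^ 2 * ((Nat.log 2 (2 * A * N) : ℝ) + 1)) := by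
    have := hcard.trans (Nat.add_le_add_left hbi _)
    exact_mod_cast this
  have hlog : (Nat.log 2 (2 * A * N) : ℝ) ≤ 60 * (2 * A : ℝ) ^ ((1:ℝ)/30) * (N:ℝ) ^ ((1:ℝ)/30) := by
    have hx : (0:ℝ) ≤ 2 * A * N := by positivity
    have h1 : (Nat.log 2 (2 * A * N) : ℝ) ≤ Real.logb 2 (2 * A * N) := by
      have := Real.natLog_le_logb (2 * A * N) 2
      push_cast at this
      exact this
    have h2 := Real.log_le_rpow_div hx (by norm_num : (0:ℝ) < 1/30)
    rw [Real.mul_rpow (by positivity) (by positivity)] at h2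
    have h3 : (1/2 : ℝ) ≤ Real.log 2 := by have := Real.log_two_gt_d9; linarith
    refine h1.trans ?_
    rw [Real.logb, div_le_iff₀ (by linarith)]
    refine h2.trans ?_
    have : 0 ≤ (2 * A : ℝ) ^ ((1:ℝ)/30) * (N:ℝ) ^ ((1:ℝ)/30) := by positivity
    nlinarith
  have hfl : (⌊A * w ^ 2⌋₊ : ℝ) ≤ A * w ^ 2 := Nat.floor_le (by positivity)
  have hN30 : (1:ℝ) ≤ (N:ℝ) ^ ((1:ℝ)/30) := Real.one_le_rpow hN1 (by norm_num)
  have e1 : w ^ 2 * (N:ℝ) ^ ((1:ℝ)/30) = (N:ℝ) ^ ((7:ℝ)/10) := by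
    rw [hw, ← Real.rpow_natCast, ← Real.rpow_mul (by positivity), ← Real.rpow_add (by positivity)]
    norm_num
  refine hcard2.trans ?_
  rw [add_mul]
  apply add_le_add
  · exact le_mul_of_one_le_right (by positivity) hone
  · calc _ ≤ (A * w ^ 2) * ((Δ.natAbs : ℝ) ^ 2 * ((60 * (2 * A : ℝ) ^ ((1:ℝ)/30) + 1) * (N:ℝ) ^ ((1:ℝ)/30))) := by
          gcongr
          linarith
      _ = _ := by rw [← e1]; ring

theorem density_of_squarefree_polynomial_values
    (P : Polynomial ℤ)
    (hP : (∃ k : ℕ, 1 ≤ k ∧ ∃ a b : Fin k → ℤ, (∀ i, a i ≠ 0) ∧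
            P = ∏ i, (Polynomial.C (a i) * Polynomial.X + Polynomial.C (b i)) ∧
            ∀ i j, i ≠ j → a i * b j - a j * b i ≠ 0) ∨
          (P.natDegree = 2 ∧ Irreducible P))
    (hlead : 0 < P.leadingCoeff)
    (hadm : ¬ ∃ p : ℕ, p.Prime ∧ ∀ n : ℕ, 0 < n → (p : ℤ)^2 ∣ P.eval (n : ℤ)) :
    ∃ κ : ℝ, 0 < κ ∧ ∃ C : ℝ, ∀ N : ℕ, 1 ≤ N →
      |({n : ℕ | 1 ≤ n ∧ n ≤ N ∧ Squarefree (P.eval (n : ℤ))}.ncard : ℝ) - κ * N| ≤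
        C * (N : ℝ) ^ ((3:ℝ)/4) := by
  rcases hP with ⟨k, hk, a, b, ha, hPe, hR⟩ | ⟨hdeg, hirr⟩
  · exact lin_case hk a b P (by rintro h0; rw [h0] at hlead; simp at hlead) ha hPe hR hadm
  · exact quad_case P hdeg hirr hlead hadm
end

section
/- Let Q ∈ ℤ[x] be a nonzero polynomial, let y be a squarefree positive integer such that for every prime p ∣ y, the reduction of Q modulo p is not the zero polynomial, and let N be a positive integer. Then #{1 ≤ x ≤ N : Q(x) ≡ 0 (mod y)} ≤ (deg Q)^{ω(y)} · (N/y + 1), where ω(y) denotes the number of distinct prime divisors of y. -/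
lemma aux_card (Q : Polynomial ℤ) (p : ℕ) (hp : p.Prime)
    (h : Q.map (Int.castRingHom (ZMod p)) ≠ 0) :
    ((Finset.range p).filter (fun r : ℕ => (p : ℤ) ∣ Q.eval (r : ℤ))).card ≤ Q.natDegree := by
  classical
  haveI : Fact p.Prime := ⟨hp⟩
  calc _ ≤ (Q.map (Int.castRingHom (ZMod p))).roots.toFinset.card := by
        apply Finset.card_le_card_of_injOn (fun r : ℕ => (r : ZMod p))
        · intro r hr
          have hr2 := (Finset.mem_filter.1 hr).2
          simp only [Finset.mem_coe, Multiset.mem_toFinset]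
          rw [Polynomial.mem_roots h, Polynomial.IsRoot.def]
          have := Polynomial.eval_map_apply (p := Q) (Int.castRingHom (ZMod p)) (r : ℤ)
          simp only [eq_intCast, Int.cast_natCast] at this
          rw [this]
          exact (ZMod.intCast_zmod_eq_zero_iff_dvd _ _).2 hr2
        · intro a ha b hb hab
          have ha := Finset.mem_range.1 (Finset.mem_filter.1 ha).1
          have hb := Finset.mem_range.1 (Finset.mem_filter.1 hb).1
          have := (ZMod.natCast_eq_natCast_iff' a b p).1 hab
          rwa [Nat.mod_eq_of_lt ha, Nat.mod_eq_of_lt hb] at this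
    _ ≤ _ := Multiset.toFinset_card_le _
    _ ≤ _ := Polynomial.card_roots' _
    _ ≤ _ := Polynomial.natDegree_map_le

lemma aux_mod (y : ℕ) (hysf : Squarefree y) (a b : ℕ)
    (h : ∀ p ∈ y.primeFactors, a % p = b % p) : a % y = b % y := by
  have : (y : ℤ) ∣ (b : ℤ) - a := by
    rw [Int.natCast_dvd]
    rw [← Nat.prod_primeFactors_of_squarefree hysf]
    apply Finset.prod_primes_dvd
    · intro p hp
      exact (Nat.prime_of_mem_primeFactors hp).prime
    · intro p hp
      rw [← Int.natCast_dvd]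
      exact Nat.modEq_iff_dvd.1 (h p hp)
  exact Nat.modEq_iff_dvd.2 this

/-- **Lagrange's theorem, interval version.** If `Q ∈ ℤ[x]` is nonzero, `y` is a squarefree
positive integer such that `Q` does not reduce to the zero polynomial modulo any prime
`p ∣ y`, and `N ≥ 1`, then `#{1 ≤ x ≤ N : Q(x) ≡ 0 (mod y)} ≤ (deg Q)^{ω(y)} (N/y + 1)`. -/
theorem lagrange_squarefree_modulus_interval
    (Q : Polynomial ℤ) (hQ : Q ≠ 0)
    (y : ℕ) (hy : 0 < y) (hysf : Squarefree y)
    (hred : ∀ p : ℕ, p.Prime → p ∣ y →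
      Q.map (Int.castRingHom (ZMod p)) ≠ 0)
    (N : ℕ) (hN : 0 < N) :
    (({x : ℕ | 1 ≤ x ∧ x ≤ N ∧ (y : ℤ) ∣ Q.eval (x : ℤ)}.ncard : ℝ)) ≤
      (Q.natDegree ^ y.primeFactors.card : ℝ) * ((N : ℝ) / (y : ℝ) + 1) := by
  classical
  set S := (Finset.Icc 1 N).filter (fun x : ℕ => (y : ℤ) ∣ Q.eval (x : ℤ)) with hS
  have hset : {x : ℕ | 1 ≤ x ∧ x ≤ N ∧ (y : ℤ) ∣ Q.eval (x : ℤ)} = (S : Set ℕ) := by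
    ext x; simp [hS, and_assoc]
  rw [hset, Set.ncard_coe_finset]
  let T := y.primeFactors.pi
    (fun p => (Finset.range p).filter (fun r : ℕ => (p : ℤ) ∣ Q.eval (r : ℤ)))
  have hT : T.card ≤ Q.natDegree ^ y.primeFactors.card := by
    rw [Finset.card_pi]
    apply Finset.prod_le_pow_card
    intro p hp
    have hpp := Nat.prime_of_mem_primeFactors hp
    exact aux_card Q p hpp (hred p hpp (Nat.dvd_of_mem_primeFactors hp))
  have hmain : S.card ≤ (N / y + 1) * T.card := by
    apply Finset.card_le_mul_card_image_of_maps_to (f := fun x p _ => x % p)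
    · intro x hx
      have hx2 := (Finset.mem_filter.1 hx).2
      simp only [T, Finset.mem_pi, Finset.mem_filter, Finset.mem_range]
      intro p hp
      have hpp := Nat.prime_of_mem_primeFactors hp
      refine ⟨Nat.mod_lt _ hpp.pos, ?_⟩
      have h1 : (p : ℤ) ∣ Q.eval (x : ℤ) :=
        (Int.natCast_dvd_natCast.2 (Nat.dvd_of_mem_primeFactors hp)).trans hx2
      have h2 : (p : ℤ) ∣ (x : ℤ) - ((x % p : ℕ) : ℤ) :=
        Nat.modEq_iff_dvd.1 (Nat.mod_modEq x p)
      exact (dvd_iff_dvd_of_dvd_sub (h2.trans (Polynomial.sub_dvd_eval_sub _ _ Q))).1 h1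
    · intro t _
      rw [← Finset.card_range (N / y + 1)]
      apply Finset.card_le_card_of_injOn (fun x => x / y)
      · intro x hx
        have hx := (Finset.mem_Icc.1 (Finset.mem_filter.1 (Finset.mem_filter.1 hx).1).1).2
        have := Nat.div_le_div_right (c := y) hx
        simp only [Finset.coe_range, Set.mem_Iio]
        omega
      · intro a ha b hb hab
        have ha := (Finset.mem_filter.1 ha).2
        have hb := (Finset.mem_filter.1 hb).2
        have hm := aux_mod y hysf a b (fun p hp => congrFun (congrFun (ha.trans hb.symm) p) hp)
        have hab : a / y = b / y := hab
        rw [← Nat.div_add_mod a y, ← Nat.div_add_mod b y, hab, hm]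
  have h3 : (S.card : ℝ) ≤ (((N / y : ℕ) : ℝ) + 1) * (Q.natDegree ^ y.primeFactors.card : ℝ) := by
    exact_mod_cast hmain.trans (Nat.mul_le_mul_left _ hT)
  have h4 : ((N / y : ℕ) : ℝ) ≤ (N : ℝ) / y := Nat.cast_div_le
  rw [mul_comm]
  refine h3.trans ?_
  gcongr
end
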